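/- arXiv:1710.03635 — 2 statements merged into one kernel-verified Lean document; each statement's English description precedes it below -/
import Mathlib

section
/- Let T be a complete discrete valuation ring whose residue field has characteristic 0, and let K be its fraction field. Then for every finite field extension E_P of Frac(T⟦x⟧), there exists a finite field extension E of the rational function field K(x) such that E ⊗_{K(x)} Frac(T⟦x⟧) is isomorphic to E_P as a Frac(T⟦x⟧)-algebra. -/
open scoped TensorProduct

attribute [local instance] Algebra.TensorProduct.rightAlgebra

open Polynomial

/-!
Let `t` be a uniformizer and `k` the residue field of `T`, and let `π : T⟦x⟧ → k⟦x⟧` be reduction.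
A power series outside `ker π = (t)` admits Weierstrass division, so modulo any such series every
power series is congruent to a polynomial. It therefore suffices to generate `E_P` by a root of a
monic polynomial over `T⟦x⟧` that still has a generating root after small perturbations of its
coefficients.

Let `A` be the localization of `T⟦x⟧` at `(t)`, a discrete valuation ring with residue field
`k((x))`, and `B` its integral closure in `E_P`. The residue fields of `B` are separable over
`k((x))`, so a primitive element is a simple root, and such roots survive small `x`-adic
perturbations; hence each residue field is generated by a root of some monic `p v` over `T[x]`.
Translating by integers makes the `p v` coprime at these roots, and lifting the roots to a common
`α : B` with `p v (α)` a uniformizer at `v` yields `B = A[α]`, where `α` is a root of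
`∏ v, p v ^ e v - t g` for some `g` over `A`. In residue characteristic zero the ramification is
tame, so this root becomes simple after substituting `α + (∏ v, p v (α)) z` and dividing by `t`.
Hence the coefficients of `g`, too, may be perturbed into `T[x]` without changing the algebra
generated by the root.
-/

/-! ### Completeness and fixed points -/

section AdicComplete

theorem isPrecomplete_of_moduleFinite {R M : Type*} [CommRing R] (I : Ideal R) [IsPrecomplete I R]
    [AddCommGroup M] [Module R M] [Module.Finite R M] : IsPrecomplete I M := by
  rw [← AdicCompletion.of_surjective_iff]
  intro y
  obtain ⟨z, rfl⟩ := AdicCompletion.ofTensorProduct_surjective_of_finite I M y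
  induction z using TensorProduct.induction_on with
  | zero => exact ⟨0, by simp⟩
  | tmul a m =>
    obtain ⟨r, rfl⟩ := AdicCompletion.of_surjective I R a
    refine ⟨r • m, ?_⟩
    rw [AdicCompletion.ofTensorProduct_tmul, map_smul]
    rfl
  | add a b ha hb =>
    obtain ⟨u, hu⟩ := ha
    obtain ⟨v, hv⟩ := hb
    exact ⟨u + v, by rw [map_add, map_add, hu, hv]⟩

theorem isAdicComplete_map_algebraMap_of_moduleFinite {R S : Type*} [CommRing R]
    [IsNoetherianRing R] (I : Ideal R) [IsAdicComplete I R] [CommRing S] [Algebra R S]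
    [Module.Finite R S] : IsAdicComplete (I.map (algebraMap R S)) S where
  toIsHausdorff := IsHausdorff.map_algebraMap_iff.mpr
    (IsHausdorff.of_le_jacobson _ _ (IsAdicComplete.le_jacobson_bot I))
  toIsPrecomplete := IsPrecomplete.map_algebraMap_iff.mpr (isPrecomplete_of_moduleFinite I)

theorem exists_eq_self_of_contracting {R M : Type*} [CommRing R] (I : Ideal R) [AddCommGroup M]
    [Module R M] [IsAdicComplete I M] (Θ : M → M)
    (hΘ : ∀ n u v, u ≡ v [SMOD (I ^ n • ⊤ : Submodule R M)] →
      Θ u ≡ Θ v [SMOD (I ^ (n + 1) • ⊤ : Submodule R M)]) :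
    ∃ w, Θ w = w := by
  have hcauchy : ∀ n, Θ^[n] 0 ≡ Θ^[n + 1] 0 [SMOD (I ^ n • ⊤ : Submodule R M)] := by
    intro n
    induction n with
    | zero => simp [SModEq.top]
    | succ n ih => simpa only [Function.iterate_succ_apply'] using hΘ n _ _ ih
  let a := AdicCompletion.AdicCauchySequence.mk I M _ hcauchy
  obtain ⟨w, hw⟩ : ∃ w, ∀ n, Θ^[n] 0 ≡ w [SMOD (I ^ n • ⊤ : Submodule R M)] :=
    IsPrecomplete.prec' a a.property
  refine ⟨w, (IsHausdorff.eq_iff_smodEq (I := I)).mpr fun n => ?_⟩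
  have hlimit : Θ (Θ^[n] 0) ≡ Θ w [SMOD (I ^ n • ⊤ : Submodule R M)] :=
    (hΘ n _ _ (hw n)).mono (Submodule.smul_mono_left (Ideal.pow_le_pow_right n.le_succ))
  rw [← Function.iterate_succ_apply' Θ] at hlimit
  exact (hlimit.symm.trans (hcauchy n).symm).trans (hw n)

theorem exists_eq_mul_eval {S : Type*} [CommRing S] (x : S) [IsAdicComplete (Ideal.span {x}) S]
    (Θ : S[X]) : ∃ w : S, w = x * Θ.eval w := by
  obtain ⟨w, hw⟩ := exists_eq_self_of_contracting (Ideal.span {x}) (fun w => x * Θ.eval w) <| by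
    intro n u v huv
    simp only [SModEq.sub_mem, smul_eq_mul, Ideal.mul_top, Ideal.span_singleton_pow,
      Ideal.mem_span_singleton] at huv ⊢
    rw [pow_succ', ← mul_sub]
    exact mul_dvd_mul_left x (huv.trans (sub_dvd_eval_sub u v Θ))
  exact ⟨w, hw.symm⟩

end AdicComplete

theorem adjoin_singleton_add_smul_eq {R B : Type*} [CommRing R] [CommRing B] [Algebra R B]
    {α s : B} {x : R} (hα : IsIntegral R α) (hx : x ∈ Ideal.jacobson (⊥ : Ideal R))
    (hs : s ∈ Algebra.adjoin R {α}) :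
    Algebra.adjoin R {α + x • s} = Algebra.adjoin R {α} := by
  have hα_mem := Algebra.self_mem_adjoin_singleton R α
  refine le_antisymm (Algebra.adjoin_singleton_le (add_mem hα_mem (Subalgebra.smul_mem _ hs x))) ?_
  refine Submodule.le_of_le_smul_of_le_jacobson_bot (I := Ideal.span {x})
    (N := Subalgebra.toSubmodule (Algebra.adjoin R {α + x • s}))
    (N' := Subalgebra.toSubmodule (Algebra.adjoin R {α})) hα.fg_adjoin_singleton
    ((Ideal.span_singleton_le_iff_mem _).mpr hx) ?_
  intro y hy
  obtain ⟨g, rfl⟩ := Algebra.adjoin_singleton_eq_range_aeval R α ▸ hy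
  let a : Algebra.adjoin R {α} := ⟨α, hα_mem⟩
  lift s to Algebra.adjoin R {α} using hs
  obtain ⟨c, hc⟩ := sub_dvd_eval_sub a (a + x • s) (g.map (algebraMap R _))
  have hc' : aeval α g = aeval (α + x • s) g + x • (-(s * c) : B) := by
    rw [eval_map_algebraMap, eval_map_algebraMap] at hc
    have := congrArg (Algebra.adjoin R {α}).val hc
    simp only [map_sub, map_mul, map_add, map_smul, ← aeval_algHom_apply, Subalgebra.coe_val, a]
      at this
    simp only [Algebra.smul_def] at this ⊢
    linear_combination this
  change aeval α g ∈ _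
  rw [hc']
  exact Submodule.add_mem_sup (aeval_mem_adjoin_singleton R _)
    (Submodule.smul_mem_smul (Ideal.mem_span_singleton_self x) (neg_mem (s * c).2))

/-! ### Division with remainder and tame roots -/

/-- Division with remainder in the style of Weierstrass: every element of `M` divides every
element of `R` up to a remainder coming from `A₀`. -/
def HasRemaindersIn (A₀ : Type*) {R : Type*} [CommRing A₀] [CommRing R] [Algebra A₀ R]
    (M : Submonoid R) : Prop :=
  ∀ G ∈ M, ∀ r : R, ∃ a b, r = algebraMap A₀ R a + G * b

namespace HasRemaindersIn

variable {A₀ R : Type*} [CommRing A₀] [CommRing R] [Algebra A₀ R] {M : Submonoid R}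

theorem exists_eq_map_add (hM : HasRemaindersIn A₀ M) {G : R} (hG : G ∈ M) {n : ℕ} {g : R[X]}
    (hg : g.degree < n) :
    ∃ (a : A₀[X]) (b : R[X]), a.degree < n ∧ g = a.map (algebraMap A₀ R) + C G * b := by
  choose a b hab using fun i => hM G hG (g.coeff i)
  refine ⟨∑ i ∈ Finset.range n, monomial i (a i), ∑ i ∈ Finset.range n, monomial i (b i), ?_, ?_⟩
  · rw [← mem_degreeLT]
    refine sum_mem fun i hi => mem_degreeLT.mpr ?_
    exact (degree_monomial_le i _).trans_lt (Nat.cast_lt.mpr (Finset.mem_range.mp hi))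
  · rw [Polynomial.map_sum, Finset.mul_sum]
    ext i
    by_cases hi : i < n
    · simp [finsetSum_coeff, coeff_monomial, hi, hab i]
    · rw [coeff_eq_zero_of_degree_lt (hg.trans_le (Nat.cast_le.mpr (not_lt.mp hi)))]
      simp [finsetSum_coeff, coeff_monomial, hi]

/-- Dividing `r` by `r * x` leaves a remainder associated to `r`. -/
theorem exists_algebraMap_eq_mul_unit (hM : HasRemaindersIn A₀ M) {x r : R} (hx : x ∈ M)
    (hx' : x ∈ Ideal.jacobson (⊥ : Ideal R)) (hr : r ∈ M) :
    ∃ (s : A₀) (u : Rˣ), algebraMap A₀ R s = r * u := by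
  obtain ⟨s, b, h⟩ := hM (r * x) (mul_mem hr hx) r
  obtain ⟨u, hu⟩ := Ideal.mem_jacobson_bot.mp hx' (-b)
  exact ⟨s, u, by rw [hu]; linear_combination -h⟩

end HasRemaindersIn

/-- `α` is a root of `f` that becomes simple after an affine change of variable centred at `α` and
division by `t`. For `t = 1` this holds as soon as `f'(α)` is a unit; for general `t` it allows
tame ramification along `t`. -/
def IsTameRoot {A B : Type*} [CommRing A] [CommRing B] [Algebra A B] (t : A) (f : A[X]) (α : B) :
    Prop :=
  ∃ (ρ : B) (φ : B[X]), φ.coeff 0 = 0 ∧ IsUnit (φ.coeff 1) ∧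
    ∀ z, aeval (α + ρ * z) f = algebraMap A B t * φ.eval z

namespace IsTameRoot

variable {A B : Type*} [CommRing A] [CommRing B] [Algebra A B] {t : A} {f : A[X]} {α : B}

theorem aeval_eq_zero (h : IsTameRoot t f α) : aeval α f = 0 := by
  obtain ⟨ρ, φ, hφ, -, h⟩ := h
  simpa [← coeff_zero_eq_eval_zero, hφ] using h 0

theorem exists_normalized (h : IsTameRoot t f α) :
    ∃ (ρ : B) (γ : B[X]), ∀ z, aeval (α + ρ * z) f = algebraMap A B t * (z + z ^ 2 * γ.eval z) := by
  obtain ⟨ρ, φ, hφ₀, ⟨u, hu⟩, h⟩ := h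
  refine ⟨ρ * (↑u⁻¹ : B), C ((↑u⁻¹ : B) ^ 2) * φ.divX.divX.comp (C (↑u⁻¹ : B) * X), fun z => ?_⟩
  have hφ : X * (X * φ.divX.divX + C (u : B)) = φ := by
    have h₁ := divX_mul_X_add φ
    have h₂ := divX_mul_X_add φ.divX
    rw [coeff_divX, zero_add, ← hu] at h₂
    rw [hφ₀, C_0, add_zero] at h₁
    linear_combination X * h₂ + h₁
  have hφz := congrArg (eval ((↑u⁻¹ : B) * z)) hφ
  simp only [eval_mul, eval_add, eval_X, eval_C] at hφz
  rw [mul_assoc, h, ← hφz]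
  simp only [eval_mul, eval_comp, eval_C, eval_X]
  linear_combination (algebraMap A B t * z) * u.inv_mul

theorem of_isUnit_aeval_derivative (hα : aeval α f = 0)
    (hα' : IsUnit (aeval α (derivative f))) : IsTameRoot (1 : A) f α := by
  refine ⟨1, taylor α (f.map (algebraMap A B)), ?_, ?_, fun z => ?_⟩
  · rwa [taylor_coeff_zero, eval_map_algebraMap]
  · rwa [taylor_coeff_one, derivative_map, eval_map_algebraMap]
  · rw [taylor_eval, eval_map_algebraMap, map_one, one_mul, one_mul, add_comm]

theorem scaleRoots (h : IsTameRoot t f α) {s : A} (hs : IsUnit (algebraMap A B s)) :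
    IsTameRoot t (f.scaleRoots s) (algebraMap A B s * α) := by
  obtain ⟨ρ, φ, hφ₀, hφ₁, h⟩ := h
  refine ⟨algebraMap A B s * ρ, C (algebraMap A B s ^ f.natDegree) * φ, ?_, ?_, fun z => ?_⟩
  · rw [coeff_C_mul, hφ₀, mul_zero]
  · rw [coeff_C_mul]
    exact (hs.pow _).mul hφ₁
  · rw [mul_assoc, ← mul_add, aeval_def, scaleRoots_eval₂_mul, ← aeval_def, h, eval_mul, eval_C]
    ring

theorem of_map {R : Type*} [CommRing R] [Algebra R A] [Algebra R B] [IsScalarTower R A B] {t : R}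
    {f : R[X]} (h : IsTameRoot (algebraMap R A t) (f.map (algebraMap R A)) α) :
    IsTameRoot t f α := by
  simpa only [IsTameRoot, aeval_map_algebraMap, ← IsScalarTower.algebraMap_apply] using h

end IsTameRoot

theorem exists_forall_mem_smul_mem {R N : Type*} [CommRing R] [AddCommGroup N] [Module R N]
    {M : Submonoid R} {S : Submodule R N} (hS : ∀ y, ∃ q ∈ M, q • y ∈ S) (s : Finset N) :
    ∃ q ∈ M, ∀ y ∈ s, q • y ∈ S := by
  classical
  choose q hqM hqS using hS
  refine ⟨∏ y ∈ s, q y, prod_mem fun y _ => hqM y, fun y hy => ?_⟩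
  rw [← Finset.prod_erase_mul s q hy, mul_smul]
  exact S.smul_mem _ (hqS y)

theorem exists_smul_eq_coe_and_smul_eq_map {R B : Type*} [CommRing R] [CommRing B] [Algebra R B]
    {M : Submonoid R} {S : Subalgebra R B} (hS : ∀ y : B, ∃ q ∈ M, q • y ∈ S) (ρ : B) (γ : B[X]) :
    ∃ q ∈ M, ∃ (ρ' : S) (γ' : S[X]), q • ρ = ρ' ∧ q • γ = γ'.map (algebraMap S B) := by
  classical
  obtain ⟨q, hqM, hq⟩ :=
    exists_forall_mem_smul_mem (S := Subalgebra.toSubmodule S) hS (insert ρ γ.coeffs)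
  have hγ : q • γ ∈ lifts (algebraMap S B) := by
    refine (lifts_iff_coeff_lifts _).mpr fun n => ?_
    rw [coeff_smul]
    by_cases hn : γ.coeff n = 0
    · exact ⟨0, by rw [hn, map_zero, smul_zero]⟩
    · exact ⟨⟨_, hq _ (Finset.mem_insert_of_mem (coeff_mem_coeffs hn))⟩, rfl⟩
  obtain ⟨γ', hγ'⟩ := (mem_lifts _).mp hγ
  exact ⟨q, hqM, ⟨_, hq ρ (Finset.mem_insert_self _ _)⟩, γ', rfl, hγ'.symm⟩

theorem exists_eq_mul_normalized_add {S : Type*} [CommRing S] (x q a ρ : S)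
    [IsAdicComplete (Ideal.span {x}) S] (γ h : S[X]) :
    ∃ w, w + x * (γ.eval (x * q * w) * w ^ 2 + q * h.eval (a + ρ * (x * w))) = 0 := by
  obtain ⟨w, hw⟩ := exists_eq_mul_eval x
    (-(γ.comp (C (x * q) * X) * X ^ 2 + C q * h.comp (C a + C ρ * (C x * X))))
  refine ⟨w, ?_⟩
  conv_lhs => enter [1]; rw [hw]
  simp only [eval_neg, eval_add, eval_mul, eval_comp, eval_C, eval_X, eval_pow]
  ring

/-- Substituting `z = x q w` turns the perturbed equation into a fixed point equation `w = x Θ(w)`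
over the complete ring `S`. -/
theorem exists_perturbed_root_of_normalized {R S B : Type*} [CommRing R] [CommRing S] [CommRing B]
    [Algebra R S] [Algebra S B] [Algebra R B] [IsScalarTower R S B] {x q t : R}
    [IsAdicComplete (Ideal.span {algebraMap R S x}) S] {f : R[X]} {a ρ' : S} {ρ : B} {γ' : S[X]}
    {γ : B[X]} (hρ : q • ρ = algebraMap S B ρ') (hγ : q • γ = γ'.map (algebraMap S B))
    (hf : ∀ z, aeval (algebraMap S B a + ρ * z) f = algebraMap R B t * (z + z ^ 2 * γ.eval z))
    (h : R[X]) :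
    ∃ s : S, aeval (algebraMap S B (a + x • s)) (f + C (t * (x * q) ^ 2) * h) = 0 := by
  obtain ⟨w, hw⟩ := exists_eq_mul_normalized_add (algebraMap R S x) (algebraMap R S q) a ρ' γ'
    (h.map (algebraMap R S))
  set z : S := algebraMap R S x * algebraMap R S q * w with hz
  have hα : a + ρ' * (algebraMap R S x * w) = a + x • (ρ' * w) := by
    rw [Algebra.smul_def]
    ring
  have hαz : algebraMap S B (a + x • (ρ' * w)) = algebraMap S B a + ρ * algebraMap S B z := by
    simp only [hz, map_add, map_mul, ← hρ, Algebra.smul_def, ← IsScalarTower.algebraMap_apply]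
    ring
  have hγz : algebraMap R B q * γ.eval (algebraMap S B z) = algebraMap S B (γ'.eval z) := by
    have := congrArg (eval (algebraMap S B z)) hγ
    rwa [eval_smul, Algebra.smul_def, eval_map_apply] at this
  refine ⟨ρ' * w, ?_⟩
  rw [map_add, map_mul, aeval_C, aeval_algebraMap_apply B _ h, hαz, hf, ← eval_map_algebraMap]
  have hwB := congrArg (algebraMap S B) hw
  rw [hα] at hwB
  simp only [hz, map_add, map_mul, map_pow, map_zero, ← IsScalarTower.algebraMap_apply]
    at hwB hγz ⊢
  linear_combination (algebraMap R B t * algebraMap R B x * algebraMap R B q) * hwB +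
    algebraMap R B t * algebraMap R B x ^ 2 * algebraMap R B q * algebraMap S B w ^ 2 * hγz

theorem IsTameRoot.exists_perturbed_root {R B : Type*} [CommRing R] [IsNoetherianRing R]
    [CommRing B] [Algebra R B] {x t : R} [IsAdicComplete (Ideal.span {x}) R] {M : Submonoid R}
    {f : R[X]} {α : B} (hf : IsTameRoot t f α) (hα : IsIntegral R α)
    (hM : ∀ y, ∃ q ∈ M, q • y ∈ Algebra.adjoin R {α}) :
    ∃ q ∈ M, ∀ h : R[X], ∃ α' : B, Algebra.adjoin R {α'} = Algebra.adjoin R {α} ∧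
      aeval α' (f + C (t * (x * q) ^ 2) * h) = 0 := by
  obtain ⟨ρ, γ, hfγ⟩ := hf.exists_normalized
  obtain ⟨q, hqM, ρ', γ', hρ', hγ'⟩ := exists_smul_eq_coe_and_smul_eq_map hM ρ γ
  have : Module.Finite R (Algebra.adjoin R {α}) := Module.Finite.iff_fg.mpr hα.fg_adjoin_singleton
  have : IsAdicComplete (Ideal.span {algebraMap R (Algebra.adjoin R {α}) x})
      (Algebra.adjoin R {α}) := by
    simpa only [Ideal.map_span, Set.image_singleton] using
      isAdicComplete_map_algebraMap_of_moduleFinite (S := Algebra.adjoin R {α}) (Ideal.span {x})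
  refine ⟨q, hqM, fun h => ?_⟩
  obtain ⟨s, hs⟩ := exists_perturbed_root_of_normalized (x := x)
    (a := ⟨α, Algebra.self_mem_adjoin_singleton R α⟩) hρ' hγ' hfγ h
  refine ⟨α + x • (s : B), adjoin_singleton_add_smul_eq hα ?_ s.2, hs⟩
  exact (Ideal.span_singleton_le_iff_mem _).mp (IsAdicComplete.le_jacobson_bot _)

theorem monic_sub_C_mul_and_natDegree_eq {R : Type*} [CommRing R] {Q g : R[X]} (hQ : Q.Monic)
    (hg : g.degree < Q.natDegree) (t : R) :
    (Q - C t * g).Monic ∧ (Q - C t * g).natDegree = Q.natDegree := by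
  nontriviality R
  have hdeg : (C t * g).degree < Q.degree := by
    rw [degree_eq_natDegree hQ.ne_zero, ← smul_eq_C_mul]
    exact (degree_smul_le t g).trans_lt hg
  exact ⟨hQ.sub_of_left hdeg, natDegree_eq_of_degree_eq (degree_sub_eq_left_of_degree_lt hdeg)⟩

theorem degree_sub_X_pow_natDegree_lt {R : Type*} [CommRing R] [Nontrivial R] {m : R[X]}
    (hm : m.Monic) : (m - X ^ m.natDegree).degree < (m.natDegree : WithBot ℕ) := by
  rw [← degree_eq_natDegree hm.ne_zero]
  refine degree_sub_lt_left ?_ hm.ne_zero ?_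
  · rw [degree_X_pow, degree_eq_natDegree hm.ne_zero]
  · rw [leadingCoeff_X_pow, hm.leadingCoeff]

theorem HasRemaindersIn.exists_monic_root_adjoin_eq {A₀ R B : Type*} [CommRing A₀] [CommRing R]
    [Nontrivial R] [IsNoetherianRing R] [CommRing B] [Algebra A₀ R] [Algebra R B] [Algebra A₀ B]
    [IsScalarTower A₀ R B] {M : Submonoid R} (hM : HasRemaindersIn A₀ M) {x : R}
    [IsAdicComplete (Ideal.span {x}) R] (hx : x ∈ M) {Q : A₀[X]} (hQ : Q.Monic) {g : R[X]}
    (hg : g.degree < Q.natDegree) {t : A₀} {α : B}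
    (hα : IsTameRoot (algebraMap A₀ R t)
      (Q.map (algebraMap A₀ R) - C (algebraMap A₀ R t) * g) α)
    (hden : ∀ y, ∃ q ∈ M, q • y ∈ Algebra.adjoin R {α}) :
    ∃ (f : A₀[X]) (α' : B), f.Monic ∧ f.natDegree = Q.natDegree ∧ aeval α' f = 0 ∧
      Algebra.adjoin R {α'} = Algebra.adjoin R {α} := by
  have hα_int : IsIntegral R α :=
    ⟨_, (monic_sub_C_mul_and_natDegree_eq (hQ.map _) (by rwa [hQ.natDegree_map]) _).1,
      hα.aeval_eq_zero⟩
  obtain ⟨q, hqM, hq⟩ := hα.exists_perturbed_root (x := x) hα_int hden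
  obtain ⟨a, h, ha, rfl⟩ := hM.exists_eq_map_add (pow_mem (mul_mem hx hqM) 2) hg
  obtain ⟨α', hα', hroot⟩ := hq h
  obtain ⟨hmonic, hdeg⟩ := monic_sub_C_mul_and_natDegree_eq hQ ha t
  refine ⟨Q - C t * a, α', hmonic, hdeg, ?_, hα'⟩
  rw [← hroot, ← aeval_map_algebraMap R]
  congr 1
  simp only [Polynomial.map_sub, Polynomial.map_mul, map_C, C_mul]
  ring

theorem exists_smul_mem_adjoin_of_isLocalization {R A B : Type*} [CommRing R] [CommRing A]
    [CommRing B] [Algebra R A] [Algebra A B] [Algebra R B] [IsScalarTower R A B]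
    (M : Submonoid R) [IsLocalization M A] {α : B} (hα : Algebra.adjoin A {α} = ⊤) (y : B) :
    ∃ q ∈ M, q • y ∈ Algebra.adjoin R {α} := by
  obtain ⟨p, rfl⟩ : y ∈ (aeval (R := A) α).range := by
    rw [← Algebra.adjoin_singleton_eq_range_aeval, hα]
    exact Algebra.mem_top
  obtain ⟨q, hq, hp⟩ := IsLocalization.integerNormalization_spec M p
  refine ⟨q, hq, ?_⟩
  have := congrArg (aeval (R := A) α) hp
  rw [aeval_map_algebraMap, ← algebraMap_smul A, map_smul, algebraMap_smul] at this
  exact this ▸ aeval_mem_adjoin_singleton R α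

theorem adjoin_singleton_algebraMap_mul {A B : Type*} [CommRing A] [CommRing B] [Algebra A B]
    {s : A} (hs : IsUnit s) (α : B) :
    Algebra.adjoin A {algebraMap A B s * α} = Algebra.adjoin A {α} := by
  obtain ⟨u, rfl⟩ := hs
  rw [← Algebra.smul_def]
  refine le_antisymm (Algebra.adjoin_singleton_le ?_) (Algebra.adjoin_singleton_le ?_)
  · exact Subalgebra.smul_mem _ (Algebra.self_mem_adjoin_singleton A α) _
  · have := Subalgebra.smul_mem _ (Algebra.self_mem_adjoin_singleton A ((u : A) • α)) (↑u⁻¹ : A)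
    rwa [smul_smul, u.inv_mul, one_smul] at this

theorem scaleRoots_sub_C_mul {A : Type*} [CommRing A] {Q g : A[X]} (hQ : Q.Monic)
    (hg : g.degree < Q.natDegree) (t s : A) :
    (Q - C t * g).scaleRoots s =
      Q.scaleRoots s - C t * ((X ^ Q.natDegree + g).scaleRoots s - X ^ Q.natDegree) := by
  nontriviality A
  have hdeg : (X ^ Q.natDegree + g).natDegree = Q.natDegree := by
    rw [natDegree_add_eq_left_of_degree_lt (by rwa [degree_X_pow]), natDegree_X_pow]
  ext i
  simp only [coeff_scaleRoots, (monic_sub_C_mul_and_natDegree_eq hQ hg t).2, hdeg, coeff_sub,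
    coeff_C_mul, coeff_add, coeff_X_pow]
  split_ifs with hi
  · rw [hi, tsub_self, pow_zero]
    ring
  · ring

namespace HasRemaindersIn

variable {A₀ R : Type*} [CommRing A₀] [CommRing R] [Algebra A₀ R] {M : Submonoid R} {x : R}
  (A : Type*) [CommRing A] [Nontrivial A] [Algebra R A] [IsLocalization M A]

theorem exists_map_eq_scaleRoots (hM : HasRemaindersIn A₀ M) (hx : x ∈ M)
    (hx' : x ∈ Ideal.jacobson (⊥ : Ideal R)) {m : A[X]} (hm : m.Monic) :
    ∃ (s : A₀) (m' : R[X]), IsUnit (algebraMap R A (algebraMap A₀ R s)) ∧ m'.Monic ∧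
      m'.natDegree = m.natDegree ∧
      m'.map (algebraMap R A) = m.scaleRoots (algebraMap R A (algebraMap A₀ R s)) := by
  let r := IsLocalization.commonDenom M m.support m.coeff
  obtain ⟨s, u, hs⟩ := hM.exists_algebraMap_eq_mul_unit hx hx' r.2
  have hlift := IsLocalization.scaleRoots_commonDenom_mem_lifts M m
    (by rw [hm.leadingCoeff]; exact one_mem _)
  obtain ⟨m', hm', hdeg, hmonic⟩ :=
    lifts_and_natDegree_eq_and_monic hlift ((monic_scaleRoots_iff _).mpr hm)
  refine ⟨s, m'.scaleRoots u, ?_, (monic_scaleRoots_iff _).mpr hmonic, ?_, ?_⟩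
  · rw [hs, map_mul]
    exact (IsLocalization.map_units A r).mul (u.isUnit.map _)
  · rw [natDegree_scaleRoots, hdeg, natDegree_scaleRoots]
  · rw [map_scaleRoots _ _ _ (by rw [hmonic.leadingCoeff, map_one]; exact one_ne_zero), hm', hs,
      map_mul, scaleRoots_mul]

end HasRemaindersIn

/-- The `F`-algebra `L` is generated by a root of a monic polynomial over `A₀` whose degree is the
rank of `L`; over fields this means that `L` is isomorphic to `F ⊗ A₀[X] ⧸ (f)`. -/
def DescendsTo (A₀ F L : Type*) [CommRing A₀] [CommRing F] [CommRing L] [Algebra F L]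
    [Algebra A₀ L] : Prop :=
  ∃ (f : A₀[X]) (α : L), f.Monic ∧ f.natDegree = Module.finrank F L ∧ aeval α f = 0 ∧
    Algebra.adjoin F {α} = ⊤

theorem HasRemaindersIn.descendsTo_of_isTameRoot {A₀ R A B : Type*} [CommRing A₀] [CommRing R]
    [IsNoetherianRing R] [CommRing A] [Nontrivial A] [CommRing B] [Algebra A₀ R] [Algebra R A]
    [Algebra A₀ A] [Algebra A B] [Algebra R B] [Algebra A₀ B] [IsScalarTower A₀ R A]
    [IsScalarTower R A B] [IsScalarTower A₀ R B] {M : Submonoid R} [IsLocalization M A]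
    (hM : HasRemaindersIn A₀ M) {x : R} [IsAdicComplete (Ideal.span {x}) R]
    (hx : x ∈ M) {Q : A₀[X]} (hQ : Q.Monic) (hQdeg : Q.natDegree = Module.finrank A B) {g : A[X]}
    (hg : g.degree < Q.natDegree) {t : A₀} {α : B}
    (hα : IsTameRoot (algebraMap A₀ A t)
      (Q.map (algebraMap A₀ A) - C (algebraMap A₀ A t) * g) α)
    (hgen : Algebra.adjoin A {α} = ⊤) : DescendsTo A₀ A B := by
  have := (algebraMap R A).domain_nontrivial
  have hdeg : (X ^ Q.natDegree + g).natDegree = Q.natDegree := by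
    rw [natDegree_add_eq_left_of_degree_lt (by rwa [degree_X_pow]), natDegree_X_pow]
  obtain ⟨s, m, hs, hm, hmdeg, hmap⟩ := hM.exists_map_eq_scaleRoots A hx
    ((Ideal.span_singleton_le_iff_mem _).mp (IsAdicComplete.le_jacobson_bot _))
    (monic_X_pow_add hg)
  rw [hdeg] at hmdeg
  rw [← IsScalarTower.algebraMap_apply A₀ R A] at hs hmap
  have htame : IsTameRoot (algebraMap A₀ R t) ((Q.scaleRoots s).map (algebraMap A₀ R) -
      C (algebraMap A₀ R t) * (m - X ^ Q.natDegree)) (algebraMap A B (algebraMap A₀ A s) * α) := by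
    refine IsTameRoot.of_map (A := A) ?_
    convert hα.scaleRoots (hs.map (algebraMap A B)) using 1
    · exact (IsScalarTower.algebraMap_apply A₀ R A t).symm
    · rw [scaleRoots_sub_C_mul (hQ.map _) (by rwa [hQ.natDegree_map]), hQ.natDegree_map, ← hmap,
        ← map_scaleRoots _ _ _ (by rw [hQ.leadingCoeff, map_one]; exact one_ne_zero)]
      simp only [Polynomial.map_sub, Polynomial.map_mul, map_map, map_C, Polynomial.map_pow, map_X,
        ← IsScalarTower.algebraMap_eq, ← IsScalarTower.algebraMap_apply]
  have hdegree : (m - X ^ Q.natDegree).degree < ((Q.scaleRoots s).natDegree : WithBot ℕ) := by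
    rw [natDegree_scaleRoots, ← hmdeg]
    exact degree_sub_X_pow_natDegree_lt hm
  have hgen' := (adjoin_singleton_algebraMap_mul hs α).trans hgen
  obtain ⟨f, α', hf, hfdeg, hroot, hadjoin⟩ := hM.exists_monic_root_adjoin_eq hx
    ((monic_scaleRoots_iff s).mpr hQ) hdegree htame
    (exists_smul_mem_adjoin_of_isLocalization M hgen')
  refine ⟨f, α', hf, by rw [hfdeg, natDegree_scaleRoots, hQdeg], hroot, ?_⟩
  refine eq_top_iff.mpr (hgen' ▸ Algebra.adjoin_singleton_le ?_)
  exact Algebra.adjoin_singleton_le (S := (Algebra.adjoin A {α'}).restrictScalars R)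
    (Algebra.self_mem_adjoin_singleton A α') (hadjoin ▸ Algebra.self_mem_adjoin_singleton R _)

theorem map_eq_minpoly_of_adjoin_eq_top {A₀ F L : Type*} [CommRing A₀] [Field F] [Field L]
    [Algebra A₀ F] [Algebra F L] [Algebra A₀ L] [IsScalarTower A₀ F L] [FiniteDimensional F L]
    {f : A₀[X]} {α : L} (hf : f.Monic) (hdeg : f.natDegree = Module.finrank F L)
    (hroot : aeval α f = 0) (hgen : Algebra.adjoin F {α} = ⊤) :
    f.map (algebraMap A₀ F) = minpoly F α := by
  have hα : IsIntegral F α := Algebra.IsIntegral.isIntegral α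
  have hprim : IntermediateField.adjoin F {α} = ⊤ :=
    (IntermediateField.adjoin_simple_eq_top_iff_of_isAlgebraic hα.isAlgebraic).mpr hgen
  refine eq_of_monic_of_dvd_of_natDegree_le (minpoly.monic hα) (hf.map _)
    (minpoly.dvd F α (by rwa [aeval_map_algebraMap])) ?_
  rw [hf.natDegree_map, hdeg, (Field.primitive_element_iff_minpoly_natDegree_eq F α).mp hprim]

theorem aeval_derivative_ne_zero_of_adjoin_eq_top {A₀ F L : Type*} [CommRing A₀] [Field F] [Field L]
    [Algebra A₀ F] [Algebra F L] [Algebra A₀ L] [IsScalarTower A₀ F L] [FiniteDimensional F L]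
    [Algebra.IsSeparable F L] {f : A₀[X]} {α : L} (hf : f.Monic)
    (hdeg : f.natDegree = Module.finrank F L) (hroot : aeval α f = 0)
    (hgen : Algebra.adjoin F {α} = ⊤) : aeval α (derivative f) ≠ 0 := by
  have hsep := (Algebra.IsSeparable.isSeparable F α).aeval_derivative_ne_zero (minpoly.aeval F α)
  rwa [← map_eq_minpoly_of_adjoin_eq_top hf hdeg hroot hgen, derivative_map,
    aeval_map_algebraMap] at hsep

theorem HasRemaindersIn.descendsTo_of_isSeparable {A₀ R κ l : Type*} [CommRing A₀] [CommRing R]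
    [IsNoetherianRing R] [Field κ] [Field l] [Algebra A₀ R] [Algebra R κ] [Algebra A₀ κ]
    [Algebra κ l] [Algebra A₀ l] [IsScalarTower A₀ R κ] [IsScalarTower A₀ κ l]
    [FiniteDimensional κ l] [Algebra.IsSeparable κ l] {M : Submonoid R} [IsLocalization M κ]
    (hM : HasRemaindersIn A₀ M) {x : R} [IsAdicComplete (Ideal.span {x}) R] (hx : x ∈ M) :
    DescendsTo A₀ κ l := by
  let : Algebra R l := ((algebraMap κ l).comp (algebraMap R κ)).toAlgebra
  have : IsScalarTower R κ l := .of_algebraMap_eq fun _ => rfl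
  have : IsScalarTower A₀ R l := .of_algebraMap_eq fun a => by
    rw [IsScalarTower.algebraMap_apply A₀ κ l, IsScalarTower.algebraMap_apply A₀ R κ,
      IsScalarTower.algebraMap_apply R κ l]
  have := (algebraMap A₀ κ).domain_nontrivial
  obtain ⟨α, hα⟩ := Field.exists_primitive_element κ l
  have hα_int : IsIntegral κ α := Algebra.IsIntegral.isIntegral α
  have hdeg := (Field.primitive_element_iff_minpoly_natDegree_eq κ α).mp hα
  have hg : (X ^ Module.finrank κ l - minpoly κ α).degree <
      (((X : A₀[X]) ^ Module.finrank κ l).natDegree : WithBot ℕ) := by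
    rw [natDegree_X_pow, ← hdeg, ← degree_neg, neg_sub]
    exact degree_sub_X_pow_natDegree_lt (minpoly.monic hα_int)
  refine hM.descendsTo_of_isTameRoot (A := κ) hx (monic_X_pow (Module.finrank κ l))
    (natDegree_X_pow _) hg (t := 1) (α := α) ?_ ?_
  · simp only [Polynomial.map_pow, map_X, map_one, one_mul, sub_sub_cancel]
    refine .of_isUnit_aeval_derivative (minpoly.aeval κ α) (IsUnit.mk0 _ ?_)
    exact (Algebra.IsSeparable.isSeparable κ α).aeval_derivative_ne_zero (minpoly.aeval κ α)
  · exact (IntermediateField.adjoin_simple_eq_top_iff_of_isAlgebraic hα_int.isAlgebraic).mp hα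

/-! ### Simultaneous generators of residue extensions -/

theorem finite_setOf_eval_add_natCast_mul_eq_zero {k : Type*} [CommRing k] [IsDomain k]
    [CharZero k] {G : k[X]} (hG : G ≠ 0) (a : k) {d : k} (hd : d ≠ 0) :
    {m : ℕ | G.eval (a + m * d) = 0}.Finite :=
  (finite_setOfPred_isRoot hG).preimage fun _ _ _ _ h =>
    Nat.cast_injective (mul_right_cancel₀ hd (add_left_cancel h))

theorem exists_natCast_shift_aeval_ne_zero {A₀ ι : Type*} {k : ι → Type*} [CommRing A₀] [Finite ι]
    [∀ i, CommRing (k i)] [∀ i, IsDomain (k i)] [∀ i, CharZero (k i)] [∀ i, Algebra A₀ (k i)]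
    {p : ι → A₀[X]} (hp : ∀ i, (p i).Monic) (β : ∀ i, k i) :
    ∃ c : ι → ℕ, ∀ i j, i ≠ j → aeval (β i + c i - c j) (p j) ≠ 0 := by
  obtain ⟨d, hd⟩ := Countable.exists_injective_nat ι
  have hfin : (⋃ ij : {ij : ι × ι // ij.1 ≠ ij.2}, {m : ℕ |
      aeval (β ij.1.1 + (m * d ij.1.1 : ℕ) - (m * d ij.1.2 : ℕ)) (p ij.1.2) = 0}).Finite := by
    refine Set.finite_iUnion fun ⟨⟨i, j⟩, hij⟩ => ?_
    have hd_ne : (d i - d j : k i) ≠ 0 :=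
      sub_ne_zero.mpr (Nat.cast_injective.ne (hd.ne hij))
    refine (finite_setOf_eval_add_natCast_mul_eq_zero
      ((hp j).map (algebraMap A₀ (k i))).ne_zero (β i) hd_ne).subset fun m hm => ?_
    rw [Set.mem_ofPred_eq, eval_map_algebraMap, mul_sub, ← add_sub_assoc]
    exact_mod_cast hm
  obtain ⟨m, hm⟩ := hfin.exists_notMem
  exact ⟨fun i => m * d i, fun i j hij h => hm (Set.mem_iUnion.mpr ⟨⟨(i, j), hij⟩, h⟩)⟩

theorem exists_aeval_eq_zero_iff_of_descendsTo {A₀ F ι : Type*} {k : ι → Type*} [CommRing A₀]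
    [Finite ι] [CommRing F] [∀ i, CommRing (k i)] [∀ i, IsDomain (k i)] [∀ i, CharZero (k i)]
    [∀ i, Algebra A₀ (k i)] [∀ i, Algebra F (k i)] (h : ∀ i, DescendsTo A₀ F (k i)) :
    ∃ (p : ι → A₀[X]) (β : ∀ i, k i), (∀ i, (p i).Monic) ∧
      (∀ i, (p i).natDegree = Module.finrank F (k i)) ∧
      (∀ i j, aeval (β i) (p j) = 0 ↔ i = j) ∧ ∀ i, Algebra.adjoin F {β i} = ⊤ := by
  choose p β hp hdeg hroot hgen using h
  obtain ⟨c, hc⟩ := exists_natCast_shift_aeval_ne_zero hp β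
  have haeval (i j) : aeval (β i + c i) (taylor (-c j : A₀) (p j)) =
      aeval (β i + c i - c j) (p j) := by
    simp [taylor_apply, aeval_comp, sub_eq_add_neg]
  refine ⟨fun i => taylor (-c i : A₀) (p i), fun i => β i + c i,
    fun i => (leadingCoeff_taylor ..).trans (hp i), fun i => (natDegree_taylor _ _).trans (hdeg i),
    fun i j => ?_, fun i => ?_⟩
  · rw [haeval]
    refine ⟨fun h => by_contra fun hij => hc i j hij h, ?_⟩
    rintro rfl
    rw [add_sub_cancel_right, hroot]
  · rw [eq_top_iff, ← hgen i]
    refine Algebra.adjoin_singleton_le ?_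
    simpa using sub_mem (Algebra.self_mem_adjoin_singleton F (β i + c i)) (natCast_mem _ (c i))

theorem aeval_quotientMk {A B : Type*} [CommRing A] [CommRing B] [Algebra A B] (I : Ideal B) (b : B)
    (f : A[X]) : aeval (Ideal.Quotient.mk I b) f = Ideal.Quotient.mk I (aeval b f) :=
  aeval_algebraMap_apply (B ⧸ I) b f

theorem exists_mk_eq_and_aeval_notMem_sq {A B : Type*} [CommRing A] [CommRing B]
    [IsDedekindDomain B] [Algebra A B] {q : Ideal B} [q.IsPrime] (hq : q ≠ ⊥) {p : A[X]} {β : B ⧸ q}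
    (hβ : aeval β (derivative p) ≠ 0) : ∃ b, Ideal.Quotient.mk q b = β ∧ aeval b p ∉ q ^ 2 := by
  obtain ⟨b, rfl⟩ := Ideal.Quotient.mk_surjective β
  by_cases hsq : aeval b p ∈ q ^ 2
  swap
  · exact ⟨b, rfl, hsq⟩
  obtain ⟨π, hπ, hπ_sq⟩ : ∃ π ∈ q, π ∉ q ^ 2 :=
    SetLike.exists_of_lt (Ideal.pow_lt_self q hq (Ideal.IsPrime.ne_top ‹_›) 2 le_rfl)
  refine ⟨b + π, ?_, fun hmem => ?_⟩
  · rw [map_add, Ideal.Quotient.eq_zero_iff_mem.mpr hπ, add_zero]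
  obtain ⟨k, hk⟩ := binomExpansion (p.map (algebraMap A B)) b π
  simp only [derivative_map, eval_map_algebraMap] at hk
  have hlinear : aeval b (derivative p) * π ∈ q ^ 2 := by
    rw [hk] at hmem
    simpa using sub_mem (sub_mem hmem (Ideal.mul_mem_left _ k (Ideal.pow_mem_pow hπ 2))) hsq
  rw [aeval_quotientMk, ne_eq, Ideal.Quotient.eq_zero_iff_mem] at hβ
  exact (Ideal.IsPrime.mul_mem_pow q hlinear).elim hβ hπ_sq

theorem span_singleton_eq_of_notMem_sq {B : Type*} [CommRing B] [IsDedekindDomain B] {q : Ideal B}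
    {y : B} (hy : y ∈ q) (hy' : y ∉ q ^ 2) (h : ∀ J : Ideal B, J.IsMaximal → y ∈ J → J = q) :
    Ideal.span {y} = q := by
  obtain ⟨J, hJ⟩ := Ideal.dvd_span_singleton.mpr hy
  have hmem : y ∈ q * J := hJ ▸ Ideal.mem_span_singleton_self y
  suffices hJ_top : J = ⊤ from hJ.trans (hJ_top ▸ Ideal.mul_top q)
  by_contra hJ_ne
  obtain ⟨J', hJ', hle⟩ := Ideal.exists_le_maximal J hJ_ne
  have hJ'_eq : J' = q := h J' hJ' (hle (Ideal.mul_le_right hmem))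
  rw [sq] at hy'
  exact hy' (Ideal.mul_mono_right (hJ'_eq ▸ hle) hmem)

theorem exists_mem_adjoin_add_prod_pow_mul {A B ι : Type*} [CommRing A] [CommRing B] [Algebra A B]
    {S : Subalgebra A B} {s : Finset ι} {π : ι → B} (hπ : ∀ i ∈ s, π i ∈ S)
    (h : ∀ i ∈ s, ∀ y, ∃ a ∈ S, ∃ w, y = a + π i * w) (e : ι → ℕ) (y : B) :
    ∃ a ∈ S, ∃ w, y = a + (∏ i ∈ s, π i ^ e i) * w := by
  let G : Submonoid B :=
    { carrier := {P | P ∈ S ∧ ∀ y, ∃ a ∈ S, ∃ w, y = a + P * w}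
      one_mem' := ⟨one_mem S, fun y => ⟨0, zero_mem S, y, by simp⟩⟩
      mul_mem' := by
        rintro P P' ⟨hP, h⟩ ⟨hP', h'⟩
        refine ⟨mul_mem hP hP', fun y => ?_⟩
        obtain ⟨a, ha, w, rfl⟩ := h y
        obtain ⟨a', ha', w', rfl⟩ := h' w
        exact ⟨a + P * a', add_mem ha (mul_mem hP ha'), w', by ring⟩ }
  exact (show ∏ i ∈ s, π i ^ e i ∈ G from
    prod_mem fun i hi => pow_mem (show π i ∈ G from ⟨hπ i hi, h i hi⟩) _).2 y

section TameRoot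

variable {A B ι : Type*} [CommRing A] [CommRing B] [Algebra A B]

theorem exists_eval_add_mul_eq_mul_eval (p : B[X]) (α σ : B) :
    ∃ P : B[X], P.coeff 0 = 1 ∧ P.coeff 1 = (derivative p).eval α * σ ∧
      ∀ z, p.eval (α + p.eval α * σ * z) = p.eval α * P.eval z := by
  obtain ⟨D, hD⟩ : ∃ D : B[X], ∀ y, p.eval (α + y) =
      p.eval α + (derivative p).eval α * y + y ^ 2 * D.eval y := by
    refine ⟨(taylor α p).divX.divX, fun y => ?_⟩
    have h0 := congrArg (eval y) (divX_mul_X_add (taylor α p))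
    have h1 := congrArg (eval y) (divX_mul_X_add (taylor α p).divX)
    simp only [eval_add, eval_mul, eval_X, eval_C, coeff_divX, zero_add, taylor_coeff_zero,
      taylor_coeff_one, taylor_eval] at h0 h1
    rw [add_comm α, ← h0, ← h1]
    ring
  refine ⟨1 + X * (C ((derivative p).eval α * σ) +
    X * (C (σ * (p.eval α * σ)) * D.comp (C (p.eval α * σ) * X))), by simp, ?_, fun z => ?_⟩
  · rw [coeff_add, coeff_X_mul]
    simp [coeff_one]
  · simp only [hD, eval_add, eval_one, eval_mul, eval_X, eval_C, eval_comp]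
    ring

theorem coeff_one_eq_eval_derivative (p : B[X]) : p.coeff 1 = (derivative p).eval 0 := by
  rw [← taylor_coeff_one, taylor_zero]

theorem coeff_one_prod_pow_of_coeff_zero_eq_one {s : Finset ι} {P : ι → B[X]}
    (hP : ∀ i ∈ s, (P i).coeff 0 = 1) (e : ι → ℕ) :
    (∏ i ∈ s, P i ^ e i).coeff 1 = ∑ i ∈ s, e i * (P i).coeff 1 := by
  classical
  simp only [coeff_zero_eq_eval_zero, coeff_one_eq_eval_derivative] at hP ⊢
  rw [derivative_prod_finset, eval_finsetSum]
  refine Finset.sum_congr rfl fun i hi => ?_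
  have h_erase : ∏ j ∈ s.erase i, eval 0 (P j) ^ e j = 1 :=
    Finset.prod_eq_one fun j hj => by rw [hP j (Finset.mem_of_mem_erase hj), one_pow]
  simp [eval_prod, derivative_pow, hP i hi, h_erase]

theorem isTameRoot_prod_pow_sub_C_mul [Fintype ι] [DecidableEq ι] {p : ι → A[X]} {e : ι → ℕ}
    {t : A} {g : A[X]} {α : B}
    (hprod : ∏ i, aeval α (p i) ^ e i = algebraMap A B t * aeval α g)
    (hunit : IsUnit (aeval α g * ∑ i, e i * (aeval α (derivative (p i)) *
      ∏ j ∈ Finset.univ.erase i, aeval α (p j)) -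
        (∏ i, aeval α (p i)) * aeval α (derivative g))) :
    IsTameRoot t (∏ i, p i ^ e i - C t * g) α := by
  set ρ := ∏ i, aeval α (p i) with hρ
  choose P hP0 hP1 hP using fun i => exists_eval_add_mul_eq_mul_eval ((p i).map (algebraMap A B)) α
    (∏ j ∈ Finset.univ.erase i, aeval α (p j))
  simp only [eval_map_algebraMap, derivative_map, Finset.mul_prod_erase Finset.univ
    (fun j => aeval α (p j)) (Finset.mem_univ _), ← hρ] at hP hP1
  refine ⟨ρ, C (aeval α g) * ∏ i, P i ^ e i - (g.map (algebraMap A B)).comp (C α + C ρ * X),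
    ?_, ?_, fun z => ?_⟩
  · simp only [coeff_zero_eq_eval_zero] at hP0 ⊢
    simp [eval_prod, eval_comp, hP0]
  · convert hunit using 1
    rw [coeff_sub, coeff_C_mul, coeff_one_prod_pow_of_coeff_zero_eq_one fun i _ => hP0 i]
    rw [coeff_one_eq_eval_derivative (comp _ _)]
    simp [hP1, derivative_comp, eval_comp]
  · simp only [map_sub, map_prod, map_pow, map_mul, aeval_C, hP, mul_pow,
      Finset.prod_mul_distrib, hprod, eval_sub, eval_mul, eval_prod, eval_pow, eval_comp, eval_add,
      eval_C, eval_X, eval_map_algebraMap]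
    ring

end TameRoot

theorem sum_mul_prod_erase_notMem {B ι : Type*} [CommRing B] [Fintype ι] [DecidableEq ι]
    {q : Ideal B} [q.IsPrime] {π a : ι → B} {i : ι} (hi : π i ∈ q) (hπ : ∀ j, j ≠ i → π j ∉ q)
    (ha : a i ∉ q) : ∑ j, a j * ∏ l ∈ Finset.univ.erase j, π l ∉ q := by
  have hrest : ∑ j ∈ Finset.univ.erase i, a j * ∏ l ∈ Finset.univ.erase j, π l ∈ q :=
    sum_mem fun j hj => Ideal.mul_mem_left _ _ <| Ideal.mem_of_dvd _
      (Finset.dvd_prod_of_mem π (Finset.mem_erase.mpr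
        ⟨(Finset.ne_of_mem_erase hj).symm, Finset.mem_univ i⟩)) hi
  rw [← Finset.add_sum_erase _ _ (Finset.mem_univ i), Submodule.add_mem_iff_left _ hrest]
  refine fun hmem => (Ideal.IsPrime.mem_or_mem ‹_› hmem).elim ha fun hprod => ?_
  obtain ⟨j, hj, hjq⟩ := Ideal.IsPrime.prod_mem_iff.mp hprod
  exact hπ j (Finset.ne_of_mem_erase hj) hjq

/-! ### Extensions of discrete valuation rings -/

section PrimesOver

open IsLocalRing

variable {A₀ A B : Type*} [CommRing A₀] [CommRing A] [IsLocalRing A] [CommRing B] [Algebra A B]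

theorem mem_primesOver_of_isMaximal [Algebra.IsIntegral A B] (I : Ideal B) [I.IsMaximal] :
    I ∈ (maximalIdeal A).primesOver B :=
  ⟨inferInstance, ⟨(eq_maximalIdeal (Ideal.IsMaximal.under A I)).symm⟩⟩

theorem isUnit_of_forall_notMem_primesOver [Algebra.IsIntegral A B] {y : B}
    (hy : ∀ v : (maximalIdeal A).primesOver B, y ∉ v.1) : IsUnit y := by
  by_contra h
  obtain ⟨I, hI, hyI⟩ := exists_max_ideal_of_mem_nonunits h
  exact hy ⟨I, mem_primesOver_of_isMaximal I⟩ hyI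

variable [IsDomain A] [IsDedekindDomain B] [Module.Finite A B] [Module.IsTorsionFree A B]

theorem exists_mk_eq_and_span_aeval_eq [Algebra A₀ B] (h𝔪 : maximalIdeal A ≠ ⊥)
    {p : (maximalIdeal A).primesOver B → A₀[X]} {β : ∀ v : (maximalIdeal A).primesOver B, B ⧸ v.1}
    (hβ : ∀ v w, aeval (β v) (p w) = 0 ↔ v = w)
    (hβ' : ∀ v, aeval (β v) (derivative (p v)) ≠ 0) :
    ∃ α : B, (∀ v, Ideal.Quotient.mk v.1 α = β v) ∧ ∀ v, Ideal.span {aeval α (p v)} = v.1 := by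
  have hbot (v : (maximalIdeal A).primesOver B) : v.1 ≠ ⊥ :=
    Ideal.ne_bot_of_liesOver_of_ne_bot h𝔪 v.1
  choose b hb hb_sq using fun v => exists_mk_eq_and_aeval_notMem_sq (hbot v) (hβ' v)
  obtain ⟨α, hα⟩ := IsDedekindDomain.exists_forall_sub_mem_ideal (s := Finset.univ)
    (fun v : (maximalIdeal A).primesOver B => v.1) (fun _ => 2)
    (fun v _ => Ideal.prime_of_isPrime (hbot v) v.2.1)
    (fun v _ w _ hvw h => hvw (Subtype.ext h)) (fun v => b v)
  simp only [Finset.mem_univ, forall_const] at hα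
  have hαβ (v) : Ideal.Quotient.mk v.1 α = β v := by
    rw [← hb, Ideal.Quotient.mk_eq_mk_iff_sub_mem]
    exact Ideal.pow_le_self two_ne_zero (hα v)
  have hα_mem (v w) : aeval α (p w) ∈ v.1 ↔ v = w := by
    rw [← hβ, ← hαβ, aeval_quotientMk, Ideal.Quotient.eq_zero_iff_mem]
  refine ⟨α, hαβ, fun v => span_singleton_eq_of_notMem_sq ((hα_mem v v).mpr rfl)
    (fun hsq => hb_sq v ?_) fun J hJ hJ_mem => ?_⟩
  · have hsub := sub_dvd_eval_sub α (b v) ((p v).map (algebraMap A₀ B))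
    simp only [eval_map_algebraMap] at hsub
    simpa using sub_mem hsq (Ideal.mem_of_dvd _ hsub (hα v))
  · exact congrArg Subtype.val ((hα_mem ⟨J, mem_primesOver_of_isMaximal J⟩ v).mp hJ_mem)

theorem span_prod_pow_ramificationIdx_eq (h𝔪 : maximalIdeal A ≠ ⊥)
    {π : (maximalIdeal A).primesOver B → B} (hπ : ∀ v, Ideal.span {π v} = v.1) :
    Ideal.span {∏ v, π v ^ v.1.ramificationIdx A} = (maximalIdeal A).map (algebraMap A B) := by
  rw [Ideal.map_algebraMap_eq_finsetProd_pow h𝔪, ← Finset.prod_set_coe, ← Ideal.prod_span_singleton]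
  simp only [← Ideal.span_singleton_pow, hπ]

theorem adjoin_eq_top_of_forall_primesOver (h𝔪 : maximalIdeal A ≠ ⊥) {α : B}
    {π : (maximalIdeal A).primesOver B → B} (hπ : ∀ v, Ideal.span {π v} = v.1)
    (hπα : ∀ v, π v ∈ Algebra.adjoin A {α})
    (hα : ∀ v : (maximalIdeal A).primesOver B,
      Algebra.adjoin (A ⧸ maximalIdeal A) {Ideal.Quotient.mk v.1 α} = ⊤) :
    Algebra.adjoin A {α} = ⊤ := by
  have hlift (v : (maximalIdeal A).primesOver B) (y : B) :
      ∃ a ∈ Algebra.adjoin A {α}, ∃ w, y = a + π v * w := by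
    have hy : Ideal.Quotient.mk v.1 y ∈
        Algebra.adjoin (A ⧸ maximalIdeal A) {Ideal.Quotient.mk v.1 α} := hα v ▸ Algebra.mem_top
    rw [Algebra.adjoin_singleton_eq_range_aeval] at hy
    obtain ⟨f, hf⟩ := (AlgHom.mem_range _).mp hy
    obtain ⟨f, rfl⟩ := map_surjective _ Ideal.Quotient.mk_surjective f
    have hmem : y - aeval α f ∈ Ideal.span {π v} := by
      rw [hπ, ← Ideal.Quotient.mk_eq_mk_iff_sub_mem, ← hf, ← aeval_quotientMk]
      exact aeval_map_algebraMap (A ⧸ maximalIdeal A) (Ideal.Quotient.mk v.1 α) f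
    obtain ⟨w, hw⟩ := Ideal.mem_span_singleton'.mp hmem
    exact ⟨_, aeval_mem_adjoin_singleton A α, w, by linear_combination -hw⟩
  have htop : (⊤ : Submodule A B) ≤ Subalgebra.toSubmodule (Algebra.adjoin A {α}) := by
    refine Submodule.le_of_le_smul_of_le_jacobson_bot (I := maximalIdeal A)
      (Module.finite_def.mp inferInstance) (maximalIdeal_le_jacobson _) fun y _ => ?_
    obtain ⟨a, ha, w, rfl⟩ := exists_mem_adjoin_add_prod_pow_mul (s := Finset.univ)
      (fun v _ => hπα v) (fun v _ => hlift v) (fun v => v.1.ramificationIdx A) y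
    refine Submodule.add_mem_sup ha ?_
    rw [Ideal.smul_top_eq_map, Submodule.restrictScalars_mem,
      ← span_prod_pow_ramificationIdx_eq h𝔪 hπ]
    exact Ideal.mul_mem_right _ _ (Ideal.mem_span_singleton_self _)
  exact eq_top_iff.mpr fun y _ => htop Submodule.mem_top

theorem isUnit_mul_sum_ramificationIdx_mul_prod_erase_sub [CharZero (A ⧸ maximalIdeal A)]
    [DecidableEq ((maximalIdeal A).primesOver B)] {π d : (maximalIdeal A).primesOver B → B}
    (hπ : ∀ v, Ideal.span {π v} = v.1) (hd : ∀ v, d v ∉ v.1) {u : B} (hu : IsUnit u) (w : B) :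
    IsUnit (u * ∑ v, v.1.ramificationIdx A * (d v * ∏ j ∈ Finset.univ.erase v, π j) -
      (∏ v, π v) * w) := by
  refine isUnit_of_forall_notMem_primesOver (A := A) fun v hv => ?_
  have hπ_mem (v) : π v ∈ v.1 := hπ v ▸ Ideal.mem_span_singleton_self _
  have hπ_notMem (w) (hwv : w ≠ v) : π w ∉ v.1 := fun hmem => by
    have hle : w.1 ≤ v.1 := hπ w ▸ (Ideal.span_singleton_le_iff_mem _).mpr hmem
    have hmax : w.1.IsMaximal := inferInstance
    exact hwv (Subtype.ext (hmax.eq_of_le v.2.1.ne_top hle))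
  have hram : (v.1.ramificationIdx A : B) ∉ v.1 := fun hmem => by
    have hmem' : (v.1.ramificationIdx A : A) ∈ maximalIdeal A := by
      rwa [Ideal.mem_of_liesOver v.1 (maximalIdeal A), map_natCast]
    rw [← Ideal.Quotient.eq_zero_iff_mem, map_natCast, Nat.cast_eq_zero] at hmem'
    exact (Ideal.ramificationIdx_pos v.1 A).ne' hmem'
  have hprod : (∏ v, π v) * w ∈ v.1 := Ideal.mul_mem_right _ _ <|
    Ideal.mem_of_dvd _ (Finset.dvd_prod_of_mem π (Finset.mem_univ v)) (hπ_mem v)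
  have hsum := (Ideal.unit_mul_mem_iff_mem _ hu).mp ((Submodule.sub_mem_iff_left _ hprod).mp hv)
  simp only [← mul_assoc] at hsum
  exact sum_mul_prod_erase_notMem (hπ_mem v) hπ_notMem (v.2.1.mul_notMem hram (hd v)) hsum

end PrimesOver

theorem exists_degree_lt_finrank_and_aeval_eq {A B : Type*} [CommRing A] [Nontrivial A] [CommRing B]
    [Algebra A B] [Module.Finite A B] [Module.Free A B] {α : B} (hα : Algebra.adjoin A {α} = ⊤)
    (y : B) : ∃ g : A[X], g.degree < Module.finrank A B ∧ aeval α g = y := by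
  have hy : y ∈ Algebra.adjoin A {α} := hα ▸ Algebra.mem_top
  rw [Algebra.adjoin_singleton_eq_range_aeval] at hy
  obtain ⟨g, rfl⟩ := (AlgHom.mem_range _).mp hy
  have hmonic := (Algebra.lmul A B α).charpoly_monic
  refine ⟨g %ₘ (Algebra.lmul A B α).charpoly, ?_,
    aeval_modByMonic_eq_self_of_root (Algebra.aeval_self_charpoly_lmul α)⟩
  rw [← (Algebra.lmul A B α).charpoly_natDegree, ← degree_eq_natDegree hmonic.ne_zero]
  exact degree_modByMonic_lt _ hmonic

section DiscreteValuationRing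

open IsLocalRing

variable {A₀ A B : Type*} [CommRing A₀] [CommRing A] [IsDomain A] [IsDiscreteValuationRing A]
  [Algebra A₀ A] [CharZero (A ⧸ maximalIdeal A)] [CommRing B] [IsDedekindDomain B] [Algebra A B]
  [Algebra A₀ B] [IsScalarTower A₀ A B] [Module.Finite A B] [Module.IsTorsionFree A B]

theorem exists_generator_and_span_aeval_eq
    (h : ∀ v : (maximalIdeal A).primesOver B, DescendsTo A₀ (A ⧸ maximalIdeal A) (B ⧸ v.1)) :
    ∃ (p : (maximalIdeal A).primesOver B → A₀[X]) (α : B), (∀ v, (p v).Monic) ∧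
      (∀ v, (p v).natDegree = v.1.inertiaDeg A) ∧ (∀ v, Ideal.span {aeval α (p v)} = v.1) ∧
      (∀ v, aeval α (derivative (p v)) ∉ v.1) ∧ Algebra.adjoin A {α} = ⊤ := by
  have h𝔪 := IsDiscreteValuationRing.not_a_field A
  let : Field (A ⧸ maximalIdeal A) := Ideal.Quotient.field _
  let (v : (maximalIdeal A).primesOver B) : Field (B ⧸ v.1) := Ideal.Quotient.field _
  have (v : (maximalIdeal A).primesOver B) : CharZero (B ⧸ v.1) :=
    charZero_of_injective_algebraMap (algebraMap (A ⧸ maximalIdeal A) (B ⧸ v.1)).injective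
  obtain ⟨p, β, hp, hdeg, hβ, hgen⟩ := exists_aeval_eq_zero_iff_of_descendsTo h
  obtain ⟨α, hα, hspan⟩ := exists_mk_eq_and_span_aeval_eq h𝔪 hβ fun v =>
    aeval_derivative_ne_zero_of_adjoin_eq_top (hp v) (hdeg v) ((hβ v v).mpr rfl) (hgen v)
  refine ⟨p, α, hp, fun v => ?_, hspan, fun v => ?_, ?_⟩
  · rw [hdeg, Ideal.inertiaDeg_eq_of_isMaximal (maximalIdeal A) v.1]
  · rw [← Ideal.Quotient.eq_zero_iff_mem, ← aeval_quotientMk, hα]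
    exact aeval_derivative_ne_zero_of_adjoin_eq_top (hp v) (hdeg v) ((hβ v v).mpr rfl) (hgen v)
  · refine adjoin_eq_top_of_forall_primesOver h𝔪 hspan (fun v => ?_) fun v => ?_
    · rw [← aeval_map_algebraMap A]
      exact aeval_mem_adjoin_singleton A α
    · rw [hα, hgen]

theorem exists_isTameRoot_of_forall_primesOver {t : A₀}
    (ht : maximalIdeal A = Ideal.span {algebraMap A₀ A t})
    (h : ∀ v : (maximalIdeal A).primesOver B, DescendsTo A₀ (A ⧸ maximalIdeal A) (B ⧸ v.1)) :
    ∃ (Q : A₀[X]) (g : A[X]) (α : B), Q.Monic ∧ Q.natDegree = Module.finrank A B ∧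
      g.degree < Q.natDegree ∧ Algebra.adjoin A {α} = ⊤ ∧
      IsTameRoot (algebraMap A₀ A t) (Q.map (algebraMap A₀ A) - C (algebraMap A₀ A t) * g) α := by
  classical
  obtain ⟨p, α, hp, hdeg, hspan, hsimple, hgen⟩ := exists_generator_and_span_aeval_eq h
  obtain ⟨u, hu⟩ : Associated (algebraMap A B (algebraMap A₀ A t))
      (∏ v, aeval α (p v) ^ v.1.ramificationIdx A) := by
    rw [← Ideal.span_singleton_eq_span_singleton,
      span_prod_pow_ramificationIdx_eq (IsDiscreteValuationRing.not_a_field A) hspan, ht,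
      Ideal.map_span, Set.image_singleton]
  obtain ⟨g, hg, hgα⟩ := exists_degree_lt_finrank_and_aeval_eq hgen (u : B)
  have hQdeg : (∏ v, p v ^ v.1.ramificationIdx A).natDegree = Module.finrank A B := by
    rw [natDegree_prod_of_monic _ _ fun v _ => (hp v).pow _,
      ← Ideal.sum_ramification_inertia_eq_finrank (maximalIdeal A) B]
    exact Finset.sum_congr rfl fun v _ => by rw [(hp v).natDegree_pow, hdeg]
  refine ⟨∏ v, p v ^ v.1.ramificationIdx A, g, α, monic_prod_of_monic _ _ fun v _ => (hp v).pow _,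
    hQdeg, hQdeg ▸ hg, hgen, ?_⟩
  rw [Polynomial.map_prod]
  simp only [Polynomial.map_pow]
  refine isTameRoot_prod_pow_sub_C_mul ?_ ?_
  · simp only [aeval_map_algebraMap]
    rw [hgα, hu]
  · simp only [aeval_map_algebraMap, derivative_map, hgα]
    exact isUnit_mul_sum_ramificationIdx_mul_prod_erase_sub hspan hsimple u.isUnit _

theorem HasRemaindersIn.descendsTo_of_forall_primesOver {R : Type*} [CommRing R]
    [IsNoetherianRing R] [Algebra A₀ R] [Algebra R A] [IsScalarTower A₀ R A] {M : Submonoid R}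
    [IsLocalization M A] (hM : HasRemaindersIn A₀ M) {x : R} [IsAdicComplete (Ideal.span {x}) R]
    (hx : x ∈ M) {t : A₀} (ht : maximalIdeal A = Ideal.span {algebraMap A₀ A t})
    (h : ∀ v : (maximalIdeal A).primesOver B, DescendsTo A₀ (A ⧸ maximalIdeal A) (B ⧸ v.1)) :
    DescendsTo A₀ A B := by
  let : Algebra R B := ((algebraMap A B).comp (algebraMap R A)).toAlgebra
  have : IsScalarTower R A B := .of_algebraMap_eq fun _ => rfl
  have : IsScalarTower A₀ R B := .of_algebraMap_eq fun a => by
    rw [IsScalarTower.algebraMap_apply A₀ A B, IsScalarTower.algebraMap_apply A₀ R A,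
      IsScalarTower.algebraMap_apply R A B]
  obtain ⟨Q, g, α, hQ, hQdeg, hg, hgen, hα⟩ := exists_isTameRoot_of_forall_primesOver ht h
  exact hM.descendsTo_of_isTameRoot hx hQ hQdeg hg hα hgen

end DiscreteValuationRing

/-! ### Localization at a principal prime -/

theorem DescendsTo.of_isLocalization {A₀ A F L B : Type*} [CommRing A₀] [CommRing A] [CommRing F]
    [CommRing B] [CommRing L] [Algebra A F] [Algebra A B] [Algebra A L] [Algebra B L] [Algebra F L]
    [IsScalarTower A F L] [IsScalarTower A B L] [Algebra A₀ B] [Algebra A₀ L] [IsScalarTower A₀ B L]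
    {M : Submonoid A} (hM : M ≤ nonZeroDivisors A) [IsLocalization M F]
    [IsLocalization (Algebra.algebraMapSubmonoid B M) L] (h : DescendsTo A₀ A B) :
    DescendsTo A₀ F L := by
  obtain ⟨f, α, hf, hdeg, hroot, hgen⟩ := h
  refine ⟨f, algebraMap B L α, hf, ?_, ?_, ?_⟩
  · rw [hdeg, IsLocalization.finrank_eq F M hM,
      IsLocalizedModule.finrank_eq M (IsScalarTower.toAlgHom A B L).toLinearMap hM]
  · rw [aeval_algebraMap_apply, hroot, map_zero]
  · have hspan := span_eq_top_localization_localization (Rₛ := F) (Aₛ := L) M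
      (v := (Algebra.adjoin A {α} : Set B)) (by rw [hgen]; exact Submodule.span_univ)
    rw [← Algebra.toSubmodule_eq_top, eq_top_iff, ← hspan, Submodule.span_le]
    rintro _ ⟨y, hy, rfl⟩
    have hmem : algebraMap B L y ∈ Algebra.adjoin A {algebraMap B L α} := by
      rw [← Set.image_singleton, Algebra.adjoin_algebraMap]
      exact ⟨y, hy, rfl⟩
    have hle : Algebra.adjoin A {algebraMap B L α} ≤
        (Algebra.adjoin F {algebraMap B L α}).restrictScalars A :=
      Algebra.adjoin_singleton_le (Algebra.self_mem_adjoin_singleton F (algebraMap B L α))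
    exact hle hmem

theorem isDiscreteValuationRing_localization_atPrime {R : Type*} [CommRing R] [IsDomain R]
    [IsNoetherianRing R] (P : Ideal R) [P.IsPrime] [P.IsPrincipal] (hP : P ≠ ⊥) :
    IsDiscreteValuationRing (Localization.AtPrime P) := by
  have hmax := Localization.AtPrime.map_eq_maximalIdeal (I := P)
  have := IsLocalization.isNoetherianRing P.primeCompl (Localization.AtPrime P) inferInstance
  have hfield : ¬ IsField (Localization.AtPrime P) := by
    rw [IsLocalRing.isField_iff_maximalIdeal_eq, ← hmax]
    rwa [Ideal.map_eq_bot_iff_of_injective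
      (IsLocalization.injective _ P.primeCompl_le_nonZeroDivisors)]
  refine ((IsDiscreteValuationRing.TFAE (Localization.AtPrime P) hfield).out 0 4).mpr ?_
  rw [← hmax]
  infer_instance

open IsLocalRing in
theorem isFractionRing_quotient_maximalIdeal {R : Type*} [CommRing R] (P : Ideal R) [P.IsPrime]
    (A : Type*) [CommRing A] [IsLocalRing A] [Algebra R A] [IsLocalization.AtPrime A P]
    [(maximalIdeal A).LiesOver P] : IsFractionRing (R ⧸ P) (A ⧸ maximalIdeal A) := by
  let : Field (A ⧸ maximalIdeal A) := Ideal.Quotient.field _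
  refine .of_field (R ⧸ P) _ fun z => ?_
  obtain ⟨a, rfl⟩ := Ideal.Quotient.mk_surjective z
  obtain ⟨r, m, rfl⟩ := IsLocalization.exists_mk'_eq P.primeCompl a
  have hm : algebraMap R A m ∉ maximalIdeal A := fun h =>
    m.2 ((IsLocalization.AtPrime.to_map_mem_maximal_iff A P _).mp h)
  refine ⟨Ideal.Quotient.mk P r, Ideal.Quotient.mk P m, ?_⟩
  simp only [Ideal.Quotient.algebraMap_mk_of_liesOver]
  rw [eq_div_iff (mt Ideal.Quotient.eq_zero_iff_mem.mp hm), ← map_mul, IsLocalization.mk'_spec]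

section Prime

open IsLocalRing

variable {A₀ R : Type*} [CommRing A₀] [CommRing R] [Algebra A₀ R] {P : Ideal R} [P.IsPrime]

theorem HasRemaindersIn.quotient (hM : HasRemaindersIn A₀ P.primeCompl) :
    HasRemaindersIn A₀ (nonZeroDivisors (R ⧸ P)) := by
  intro G hG r
  obtain ⟨G, rfl⟩ := Ideal.Quotient.mk_surjective G
  obtain ⟨r, rfl⟩ := Ideal.Quotient.mk_surjective r
  have hGP : G ∉ P := fun h => nonZeroDivisors.ne_zero hG (Ideal.Quotient.eq_zero_iff_mem.mpr h)
  obtain ⟨a, b, rfl⟩ := hM G hGP r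
  exact ⟨a, Ideal.Quotient.mk P b, by rw [map_add, map_mul]; rfl⟩

variable [IsNoetherianRing R]

theorem HasRemaindersIn.descendsTo_of_isFractionRing_quotient
    (hM : HasRemaindersIn A₀ P.primeCompl) {x : R} [IsAdicComplete (Ideal.span {x}) R] (hx : x ∉ P)
    {κ l : Type*} [Field κ] [Algebra (R ⧸ P) κ] [IsFractionRing (R ⧸ P) κ] [Algebra A₀ κ]
    [IsScalarTower A₀ (R ⧸ P) κ] [Field l] [Algebra κ l] [FiniteDimensional κ l]
    [Algebra.IsSeparable κ l] [Algebra A₀ l] [IsScalarTower A₀ κ l] : DescendsTo A₀ κ l := by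
  have : IsAdicComplete (Ideal.span {Ideal.Quotient.mk P x}) (R ⧸ P) := by
    rw [← Set.image_singleton, ← Ideal.map_span]
    exact isAdicComplete_map_algebraMap_of_moduleFinite (Ideal.span {x})
  refine hM.quotient.descendsTo_of_isSeparable (x := Ideal.Quotient.mk P x) ?_
  rwa [mem_nonZeroDivisors_iff_ne_zero, ne_eq, Ideal.Quotient.eq_zero_iff_mem]

theorem HasRemaindersIn.descendsTo_of_isDiscreteValuationRing [CharZero (R ⧸ P)]
    (hM : HasRemaindersIn A₀ P.primeCompl) {x : R} [IsAdicComplete (Ideal.span {x}) R] (hx : x ∉ P)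
    {t : A₀} (ht : P = Ideal.span {algebraMap A₀ R t}) {A B : Type*} [CommRing A] [IsDomain A]
    [IsDiscreteValuationRing A] [Algebra R A] [IsLocalization.AtPrime A P] [Algebra A₀ A]
    [IsScalarTower A₀ R A] [CommRing B] [IsDedekindDomain B] [Algebra A B] [Module.Finite A B]
    [Module.IsTorsionFree A B] [Algebra A₀ B] [IsScalarTower A₀ A B] :
    DescendsTo A₀ A B := by
  have : (maximalIdeal A).LiesOver P := ⟨(IsLocalization.AtPrime.under_maximalIdeal A P).symm⟩
  have := isFractionRing_quotient_maximalIdeal P A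
  let : Field (A ⧸ maximalIdeal A) := Ideal.Quotient.field _
  have : CharZero (A ⧸ maximalIdeal A) :=
    charZero_of_injective_algebraMap (IsFractionRing.injective (R ⧸ P) (A ⧸ maximalIdeal A))
  have hmax : maximalIdeal A = Ideal.span {algebraMap A₀ A t} := by
    rw [IsScalarTower.algebraMap_apply A₀ R A, ← Set.image_singleton, ← Ideal.map_span, ← ht,
      IsLocalization.AtPrime.map_eq_maximalIdeal P A]
  refine hM.descendsTo_of_forall_primesOver hx hmax fun v => ?_
  let : Field (B ⧸ v.1) := Ideal.Quotient.field _
  have : IsScalarTower A₀ (R ⧸ P) (A ⧸ maximalIdeal A) := .of_algebraMap_eq fun a =>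
    congrArg (Ideal.Quotient.mk _) (IsScalarTower.algebraMap_apply A₀ R A a)
  have : IsScalarTower A₀ (A ⧸ maximalIdeal A) (B ⧸ v.1) := .of_algebraMap_eq fun a =>
    congrArg (Ideal.Quotient.mk _) (IsScalarTower.algebraMap_apply A₀ A B a)
  exact hM.descendsTo_of_isFractionRing_quotient hx

theorem HasRemaindersIn.descendsTo_of_isPrime [IsDomain R] [CharZero (R ⧸ P)]
    (hM : HasRemaindersIn A₀ P.primeCompl) {x : R} [IsAdicComplete (Ideal.span {x}) R] (hx : x ∉ P)
    {t : A₀} (ht : P = Ideal.span {algebraMap A₀ R t}) (hP : P ≠ ⊥) {F L : Type*} [Field F]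
    [Algebra R F] [IsFractionRing R F] [Algebra A₀ F] [IsScalarTower A₀ R F]
    [Field L] [Algebra F L] [FiniteDimensional F L] [Algebra A₀ L] [IsScalarTower A₀ F L] :
    DescendsTo A₀ F L := by
  let A := Localization.AtPrime P
  have : P.IsPrincipal := ⟨_, ht⟩
  have : IsDiscreteValuationRing A := isDiscreteValuationRing_localization_atPrime P hP
  let : Algebra A F := IsLocalization.localizationAlgebraOfSubmonoidLe A F P.primeCompl
    (nonZeroDivisors R) P.primeCompl_le_nonZeroDivisors
  have : IsScalarTower R A F := IsLocalization.localization_isScalarTower_of_submonoid_le A F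
    P.primeCompl (nonZeroDivisors R) P.primeCompl_le_nonZeroDivisors
  have : IsFractionRing A F :=
    IsFractionRing.isFractionRing_of_isDomain_of_isLocalization P.primeCompl A F
  let : Algebra A L := ((algebraMap F L).comp (algebraMap A F)).toAlgebra
  have : IsScalarTower A F L := .of_algebraMap_eq fun _ => rfl
  have : IsScalarTower A₀ A L := .of_algebraMap_eq fun a => by
    rw [IsScalarTower.algebraMap_apply A₀ F L, IsScalarTower.algebraMap_apply A₀ R F,
      IsScalarTower.algebraMap_apply R A F, ← IsScalarTower.algebraMap_apply A₀ R A,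
      ← IsScalarTower.algebraMap_apply A F L]
  have : CharZero R := (Ideal.Quotient.mk P).charZero
  have : CharZero F := charZero_of_injective_algebraMap (IsFractionRing.injective R F)
  have : FaithfulSMul A L := .trans A F L
  let B := integralClosure A L
  have : IsDedekindDomain B := IsIntegralClosure.isDedekindDomain A F L B
  have : Module.Finite A B := IsIntegralClosure.finite A F L B
  have := IsIntegralClosure.isLocalization A F L B
  exact .of_isLocalization (A := A) (B := B) le_rfl
    (hM.descendsTo_of_isDiscreteValuationRing hx ht)

end Prime

/-! ### Power series and base change -/

theorem ker_powerSeriesMap_eq_span_C {R S : Type*} [CommRing R] [CommRing S] {f : R →+* S} {t : R}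
    (ht : RingHom.ker f = Ideal.span {t}) :
    RingHom.ker (PowerSeries.map f) = Ideal.span {PowerSeries.C t} := by
  refine le_antisymm (fun r hr => ?_) ((Ideal.span_singleton_le_iff_mem _).mpr ?_)
  · have hcoeff (i : ℕ) : ∃ y, PowerSeries.coeff i r = t * y := by
      rw [← dvd_def, ← Ideal.mem_span_singleton, ← ht, RingHom.mem_ker, ← PowerSeries.coeff_map,
        RingHom.mem_ker.mp hr, map_zero]
    choose y hy using hcoeff
    refine Ideal.mem_span_singleton.mpr ⟨PowerSeries.mk y, PowerSeries.ext fun i => ?_⟩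
    rw [PowerSeries.coeff_C_mul, PowerSeries.coeff_mk, hy]
  · rw [RingHom.mem_ker, PowerSeries.map_C,
      show f t = 0 from RingHom.mem_ker.mp (ht.ge (Ideal.mem_span_singleton_self t)), map_zero]

section PowerSeries

open IsLocalRing
open scoped PowerSeries

variable {T : Type*} [CommRing T]

instance isPrime_ker_powerSeriesMap_residue [IsLocalRing T] :
    (RingHom.ker (PowerSeries.map (residue T))).IsPrime :=
  RingHom.ker_isPrime _

theorem hasRemaindersIn_powerSeries [IsLocalRing T] [IsAdicComplete (maximalIdeal T) T] :
    HasRemaindersIn T[X] (RingHom.ker (PowerSeries.map (residue T))).primeCompl := by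
  intro G hG r
  obtain ⟨q, a, h⟩ := PowerSeries.exists_isWeierstrassDivision r hG
  refine ⟨a, q, ?_⟩
  rw [h.eq_mul_add, PowerSeries.algebraMap_apply', add_comm]
  simp only [Algebra.algebraMap_self, PowerSeries.map_id, id_eq]

theorem descendsTo_polynomial_of_isFractionRing_powerSeries [IsDomain T] [IsDiscreteValuationRing T]
    [IsAdicComplete (maximalIdeal T) T] [CharZero (ResidueField T)] {F L : Type*} [Field F]
    [Algebra T⟦X⟧ F] [IsFractionRing T⟦X⟧ F] [Algebra T[X] F] [IsScalarTower T[X] T⟦X⟧ F]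
    [Field L] [Algebra F L] [FiniteDimensional F L] [Algebra T[X] L] [IsScalarTower T[X] F L] :
    DescendsTo T[X] F L := by
  obtain ⟨t, ht⟩ := IsPrincipalIdealRing.principal (maximalIdeal T)
  have ht₀ : t ≠ 0 := by
    rintro rfl
    exact IsDiscreteValuationRing.not_a_field T (by rw [ht, Submodule.span_zero_singleton])
  have hker := ker_powerSeriesMap_eq_span_C (ker_residue.trans ht)
  have : CharZero (ResidueField T)⟦X⟧ := charZero_of_injective_ringHom PowerSeries.C_injective
  have : CharZero (T⟦X⟧ ⧸ RingHom.ker (PowerSeries.map (residue T))) :=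
    (RingHom.kerLift (PowerSeries.map (residue T))).charZero
  refine hasRemaindersIn_powerSeries.descendsTo_of_isPrime (x := PowerSeries.X) (t := C t) ?_ ?_ ?_
  · rw [RingHom.mem_ker, PowerSeries.map_X]
    exact PowerSeries.X_ne_zero
  · rw [hker, PowerSeries.algebraMap_apply', coe_C, PowerSeries.map_C, Algebra.algebraMap_self,
      RingHom.id_apply]
  · rw [hker, Ne, Ideal.span_singleton_eq_bot]
    exact (map_ne_zero_iff _ PowerSeries.C_injective).mpr ht₀

end PowerSeries

theorem DescendsTo.tower {A₀ k F L : Type*} [CommRing A₀] [CommRing k] [CommRing F] [CommRing L]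
    [Algebra F L] [Algebra A₀ L] [Algebra A₀ k] [Algebra k L] [IsScalarTower A₀ k L] [Nontrivial k]
    (h : DescendsTo A₀ F L) : DescendsTo k F L := by
  obtain ⟨f, α, hf, hdeg, hroot, hgen⟩ := h
  exact ⟨f.map (algebraMap A₀ k), α, hf.map _, (hf.natDegree_map _).trans hdeg,
    (aeval_map_algebraMap k α f).trans hroot, hgen⟩

theorem DescendsTo.exists_algEquiv_tensorProduct {k F L : Type*} [Field k] [Field F] [Field L]
    [Algebra k F] [Algebra F L] [FiniteDimensional F L] [Algebra k L] [IsScalarTower k F L]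
    (h : DescendsTo k F L) :
    ∃ (f : k[X]) (_ : Fact (Irreducible f)), FiniteDimensional k (AdjoinRoot f) ∧
      Nonempty (AdjoinRoot f ⊗[k] F ≃ₐ[F] L) := by
  obtain ⟨f, α, hf, hdeg, hroot, hgen⟩ := h
  have hmin := map_eq_minpoly_of_adjoin_eq_top hf hdeg hroot hgen
  have hirr : Irreducible f := hf.irreducible_of_irreducible_map (algebraMap k F) f <|
    hmin ▸ minpoly.irreducible (Algebra.IsIntegral.isIntegral α)
  have : Module.Finite k (AdjoinRoot f) := hf.finite_adjoinRoot
  refine ⟨f, ⟨hirr⟩, this, ?_⟩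
  let g : F ⊗[k] AdjoinRoot f →ₐ[F] L := Algebra.TensorProduct.lift (Algebra.ofId F L)
    (AdjoinRoot.liftAlgHom f (Algebra.ofId k L) α hroot) fun _ _ => .all _ _
  have hg : Function.Surjective g := by
    rw [← AlgHom.range_eq_top, eq_top_iff, ← hgen]
    refine Algebra.adjoin_singleton_le ⟨1 ⊗ₜ AdjoinRoot.root f, ?_⟩
    refine (Algebra.TensorProduct.lift_tmul ..).trans ?_
    rw [map_one, one_mul]
    exact AdjoinRoot.lift_root hroot
  have hfinrank : Module.finrank F (F ⊗[k] AdjoinRoot f) = Module.finrank F L := by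
    rw [Module.finrank_baseChange, (AdjoinRoot.powerBasis hf.ne_zero).finrank,
      AdjoinRoot.powerBasis_dim, hdeg]
  have hg' : Function.Injective g :=
    (LinearMap.injective_iff_surjective_of_finrank_eq_finrank hfinrank (f := g.toLinearMap)).mpr hg
  exact ⟨(Algebra.TensorProduct.commRight k F (AdjoinRoot f)).symm.trans (.ofBijective g ⟨hg', hg⟩)⟩

/-- Descent from the complete local ring at a point: if `T` is a complete discrete
valuation ring with residue field of characteristic zero and fraction field `K`, then
every finite field extension of `Frac(T⟦x⟧)` is induced by a finite field extension of
the rational function field `K(x)`, where `K(x)` embeds in `Frac(T⟦x⟧)` via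
`T[x] ⊆ T⟦x⟧`. -/
theorem point_to_global_powerSeries_char_zero
    (T : Type) [CommRing T] [IsDomain T] [IsDiscreteValuationRing T]
    [IsAdicComplete (IsLocalRing.maximalIdeal T) T]
    [CharZero (IsLocalRing.ResidueField T)]
    (ψ : RatFunc (FractionRing T) →+* FractionRing (PowerSeries T))
    (hψ : ∀ q : Polynomial T,
      ψ (algebraMap (Polynomial (FractionRing T)) (RatFunc (FractionRing T))
          (q.map (algebraMap T (FractionRing T)))) =
        algebraMap (PowerSeries T) (FractionRing (PowerSeries T))
          (Polynomial.coeToPowerSeries.ringHom q))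
    (E_P : Type) [Field E_P] [Algebra (FractionRing (PowerSeries T)) E_P]
    [FiniteDimensional (FractionRing (PowerSeries T)) E_P] :
    letI : Algebra (RatFunc (FractionRing T)) (FractionRing (PowerSeries T)) :=
      ψ.toAlgebra
    ∃ (E : Type) (_ : Field E) (_ : Algebra (RatFunc (FractionRing T)) E),
      FiniteDimensional (RatFunc (FractionRing T)) E ∧
      Nonempty ((E ⊗[RatFunc (FractionRing T)] FractionRing (PowerSeries T))
        ≃ₐ[FractionRing (PowerSeries T)] E_P) := by
  let : Algebra (RatFunc (FractionRing T)) (FractionRing (PowerSeries T)) := ψ.toAlgebra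
  let ι : T[X] →+* RatFunc (FractionRing T) :=
    (algebraMap (FractionRing T)[X] (RatFunc (FractionRing T))).comp
      (mapRingHom (algebraMap T (FractionRing T)))
  let : Algebra T[X] (RatFunc (FractionRing T)) := ι.toAlgebra
  let : Algebra T[X] E_P := ((algebraMap (FractionRing (PowerSeries T)) E_P).comp
    (algebraMap T[X] (FractionRing (PowerSeries T)))).toAlgebra
  let : Algebra (RatFunc (FractionRing T)) E_P :=
    ((algebraMap (FractionRing (PowerSeries T)) E_P).comp ψ).toAlgebra
  have : IsScalarTower T[X] (FractionRing (PowerSeries T)) E_P := .of_algebraMap_eq fun _ => rfl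
  have : IsScalarTower (RatFunc (FractionRing T)) (FractionRing (PowerSeries T)) E_P :=
    .of_algebraMap_eq fun _ => rfl
  have : IsScalarTower T[X] (RatFunc (FractionRing T)) E_P := .of_algebraMap_eq fun q => by
    refine congrArg (algebraMap (FractionRing (PowerSeries T)) E_P) (Eq.trans ?_ (hψ q).symm)
    rw [IsScalarTower.algebraMap_apply T[X] (PowerSeries T), PowerSeries.algebraMap_apply',
      Algebra.algebraMap_self, PowerSeries.map_id]
    rfl
  have hT : DescendsTo T[X] (FractionRing (PowerSeries T)) E_P :=
    descendsTo_polynomial_of_isFractionRing_powerSeries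
  obtain ⟨f, _, hfin, hiso⟩ :=
    (hT.tower (k := RatFunc (FractionRing T))).exists_algEquiv_tensorProduct
  exact ⟨AdjoinRoot f, inferInstance, inferInstance, hfin, hiso⟩
end

section
/- Let T be a complete discrete valuation ring whose residue field has characteristic p > 0, and let K be its fraction field. Then there exists a Galois field extension E_P of Frac(T⟦x⟧) of degree p such that no field extension E of the rational function field K(x) with [E : K(x)] = p satisfies E ⊗_{K(x)} Frac(T⟦x⟧) ≅ E_P as Frac(T⟦x⟧)-algebras. -/
open scoped TensorProduct

attribute [local instance] Algebra.TensorProduct.rightAlgebra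

/-!
Let `F` be the fraction field of `T⟦x⟧`, containing `F₀ = K(x)`. If `E ⊗[F₀] F` is isomorphic over
`F` to a field `L`, then `E` embeds in `L` and generates it over `F`, and each element of `E`
becomes separable over `F₀` after raising it to a power of the exponential characteristic. So it
suffices to find a Galois extension `L / F` of degree `p` that is rigid: every element of `L`
separable over `F₀` lies in `F`. Indeed `E` then consists of elements that are both separable and
purely inseparable over `F`, so it lies in `F`, and `L = F`.

The source of rigidity is that the Taylor coefficients (Hasse derivatives) of an element of `F`
separable over `F₀` are algebraic over `T[x]`, that reduction modulo the maximal ideal preserves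
algebraicity, and that the lacunary series `φ = ∑ x ^ (p * j! + 1)` has a derivative whose
reduction is transcendental. Let `ϖ` be a uniformizer of `T`. If `F` has characteristic `p`, then
`L` is the Artin–Schreier extension `y ^ p - y = φ / ϖ`: were it not rigid, then
`φ = ϖ (b + h - h ^ p)` with `b` separable over `F₀`, and comparing Taylor coefficients of index
`1, p, p ^ 2, …` would make a power of the reduction of `φ'` algebraic. If `F` has characteristic
`0`, a Kummer extension of `F(ζ)` plays this role, with the logarithmic derivative as obstruction;
its generator is chosen equivariant under `Gal(F(ζ) / F)`, so that the extension is Galois over `F`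
with the Kummer group central and of order prime to its index, hence a direct factor, and `L` is
the fixed field of the complement.
-/

namespace PointToGlobal

open Polynomial IsLocalRing

open scoped PowerSeries IntermediateField

universe u

section Lacunary

open scoped Nat

variable {R S : Type*} [CommRing R] [CommRing S]

theorem exists_natDegree_eval_le (Q : R[X][X]) :
    ∃ C : ℕ, ∀ a : R[X], (Q.eval a).natDegree ≤ C + Q.natDegree * a.natDegree := by
  refine ⟨Q.support.sup fun i ↦ (Q.coeff i).natDegree, fun a ↦ ?_⟩
  rw [eval_eq_sum, Polynomial.sum]
  refine natDegree_sum_le_of_forall_le _ _ fun i hi ↦ natDegree_mul_le.trans (add_le_add ?_ ?_)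
  · exact Finset.le_sup (f := fun i ↦ (Q.coeff i).natDegree) hi
  · exact natDegree_pow_le.trans (Nat.mul_le_mul_right _ (le_natDegree_of_mem_supp _ hi))

theorem eq_zero_of_X_pow_dvd_coe {P : R[X]} {n : ℕ} (hn : P.natDegree < n)
    (hP : PowerSeries.X ^ n ∣ (P : R⟦X⟧)) : P = 0 := by
  have h := PowerSeries.X_pow_dvd_iff.mp hP _ hn
  rwa [Polynomial.coeff_coe, coeff_natDegree, leadingCoeff_eq_zero] at h

/- Liouville's criterion: for large `N` the polynomial `Q (a N)` is congruent to `Q f = 0` modulo a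
power of `X` larger than its degree, so `a N` is a root of `Q`. -/
theorem transcendental_of_X_pow_dvd_sub [IsDomain R] {f : R⟦X⟧} (a : ℕ → R[X])
    (hdeg : StrictMono fun N ↦ (a N).natDegree)
    (happrox : ∀ N, PowerSeries.X ^ (N * (a N).natDegree + 1) ∣ f - (a N : R⟦X⟧)) :
    Transcendental R[X] f := by
  rw [transcendental_iff]
  intro Q hQ
  obtain ⟨B, hB⟩ := exists_natDegree_eval_le Q
  have isRoot (N : ℕ) (hN : B + Q.natDegree + 1 ≤ N) : Q.IsRoot (a N) := by
    refine eq_zero_of_X_pow_dvd_coe (n := N * (a N).natDegree + 1) ?_ ?_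
    · have hpos : 1 ≤ (a N).natDegree := le_trans (by omega) hdeg.le_apply
      nlinarith [hB (a N)]
    · have hdvd := sub_dvd_eval_sub f (a N : R⟦X⟧) (Q.map (algebraMap R[X] R⟦X⟧))
      rw [eval_map_algebraMap, eval_map_algebraMap, hQ, zero_sub, dvd_neg] at hdvd
      have heval : aeval (a N : R⟦X⟧) Q = (Q.eval (a N) : R[X]) := by
        have h := aeval_algebraMap_apply R⟦X⟧ (a N) Q
        rwa [coe_aeval_eq_eval] at h
      exact heval ▸ (happrox N).trans hdvd
  refine eq_zero_of_infinite_isRoot Q (Set.infinite_of_injective_forall_mem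
    (f := fun n ↦ a (n + (B + Q.natDegree + 1))) ?_ fun n ↦ isRoot _ (by omega))
  exact (Function.Injective.of_comp (f := natDegree) hdeg.injective).comp (add_left_injective _)

open Classical in
/-- The power series `∑ⱼ X ^ (p * j! + 1)`. Its gaps make it transcendental over the polynomials,
and all its exponents are `1` modulo `p`. -/
noncomputable def lacunarySeries (p : ℕ) (R : Type*) [CommRing R] : R⟦X⟧ :=
  PowerSeries.mk fun n ↦ if ∃ j : ℕ, n = p * j ! + 1 then 1 else 0

@[simp]
theorem map_lacunarySeries (p : ℕ) (f : R →+* S) :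
    PowerSeries.map f (lacunarySeries p R) = lacunarySeries p S := by
  ext n
  simp only [lacunarySeries, PowerSeries.coeff_map, PowerSeries.coeff_mk]
  split_ifs <;> simp

theorem natDegree_trunc_lacunarySeries [Nontrivial R] (p N : ℕ) :
    (PowerSeries.trunc (p * N ! + 2) (lacunarySeries p R)).natDegree = p * N ! + 1 := by
  apply le_antisymm
  · exact Nat.lt_succ_iff.mp (PowerSeries.natDegree_trunc_lt _ (p * N ! + 1))
  · apply le_natDegree_of_ne_zero
    rw [PowerSeries.coeff_trunc, if_pos (by omega), lacunarySeries, PowerSeries.coeff_mk,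
      if_pos ⟨N, rfl⟩]
    exact one_ne_zero

theorem X_pow_dvd_lacunarySeries_sub_trunc (p N : ℕ) :
    PowerSeries.X ^ (p * (N + 1)! + 1) ∣
      lacunarySeries p R -
        ((PowerSeries.trunc (p * N ! + 2) (lacunarySeries p R) : R[X]) : R⟦X⟧) := by
  rw [PowerSeries.X_pow_dvd_iff]
  intro m hm
  simp only [map_sub, lacunarySeries, coeff_coe, PowerSeries.coeff_trunc, PowerSeries.coeff_mk]
  by_cases hlow : m < p * N ! + 2
  · simp [hlow]
  rw [if_neg hlow, sub_zero, if_neg]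
  rintro ⟨j, rfl⟩
  have hjN : j < N + 1 := (Nat.monotone_factorial).reflect_lt
    (lt_of_mul_lt_mul_left (by omega : p * j ! < p * (N + 1)!) (Nat.zero_le p))
  have hNj : N < j := (Nat.monotone_factorial).reflect_lt
    (lt_of_mul_lt_mul_left (by omega : p * N ! < p * j !) (Nat.zero_le p))
  omega

theorem transcendental_lacunarySeries [IsDomain R] {p : ℕ} (hp : 0 < p) :
    Transcendental R[X] (lacunarySeries p R) := by
  refine transcendental_of_X_pow_dvd_sub
    (fun N ↦ PowerSeries.trunc (p * (N + 1)! + 2) (lacunarySeries p R)) ?_ fun N ↦ ?_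
  · simp only [natDegree_trunc_lacunarySeries]
    refine strictMono_nat_of_lt_succ fun N ↦ Nat.succ_lt_succ (Nat.mul_lt_mul_of_pos_left ?_ hp)
    exact (Nat.factorial_lt (Nat.succ_pos N)).mpr (Nat.lt_succ_self _)
  · refine (pow_dvd_pow _ ?_).trans (X_pow_dvd_lacunarySeries_sub_trunc p (N + 1))
    have hle : N + 1 ≤ p * (N + 1)! :=
      (Nat.self_le_factorial _).trans (Nat.le_mul_of_pos_left _ hp)
    rw [natDegree_trunc_lacunarySeries, Nat.factorial_succ (N + 1)]
    nlinarith

theorem X_mul_derivative_lacunarySeries (p : ℕ) [CharP R p] :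
    PowerSeries.X * PowerSeries.derivative R (lacunarySeries p R) = lacunarySeries p R := by
  ext (_ | n)
  · simp [lacunarySeries]
  · rw [mul_comm, PowerSeries.coeff_succ_mul_X, PowerSeries.coeff_derivative]
    simp only [lacunarySeries, PowerSeries.coeff_mk]
    split_ifs with h
    · obtain ⟨j, hj⟩ := h
      simp [Nat.succ_injective hj]
    · simp

end Lacunary

section LacunaryDerivative

theorem transcendental_derivative_div_lacunarySeries {k : Type*} [Field k] {p : ℕ} [CharP k p]
    (hp : 0 < p) (c : k) :
    Transcendental k[X] (algebraMap k⟦X⟧ (FractionRing k⟦X⟧) (.derivative k (lacunarySeries p k)) /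
      algebraMap k⟦X⟧ (FractionRing k⟦X⟧) (1 + .C c * lacunarySeries p k)) := by
  set φ := algebraMap k⟦X⟧ (FractionRing k⟦X⟧) (lacunarySeries p k)
  set φ' := algebraMap k⟦X⟧ (FractionRing k⟦X⟧) (.derivative k (lacunarySeries p k))
  have coe_poly (P : k[X]) : algebraMap k[X] (FractionRing k⟦X⟧) P = algebraMap k⟦X⟧ _ P := rfl
  set γ := algebraMap k[X] (FractionRing k⟦X⟧) (C c) with hγ
  set x := algebraMap k[X] (FractionRing k⟦X⟧) X with hx
  have hφ_trans : Transcendental k[X] φ :=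
    (transcendental_algebraMap_iff (IsFractionRing.injective _ _)).mpr
      (transcendental_lacunarySeries hp)
  have hφ' : x * φ' = φ := by
    rw [hx, coe_poly, coe_X, ← map_mul, X_mul_derivative_lacunarySeries]
  have hden : algebraMap k⟦X⟧ (FractionRing k⟦X⟧) (1 + .C c * lacunarySeries p k) = 1 + γ * φ := by
    rw [map_add, map_mul, map_one, hγ, coe_poly, coe_C]
  have hden0 : 1 + γ * φ ≠ 0 := by
    rw [← hden, Ne, IsFractionRing.to_map_eq_zero_iff]
    intro h
    rw [← X_mul_derivative_lacunarySeries] at h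
    simpa using congrArg PowerSeries.constantCoeff h
  rw [hden]
  intro hw
  set w := φ' / (1 + γ * φ)
  have hφw : φ * (1 - γ * (x * w)) = x * w := by
    linear_combination -x * div_mul_cancel₀ φ' hden0 - hφ'
  have hxw : IsAlgebraic k[X] (x * w) := (isAlgebraic_algebraMap X).mul hw
  have hne : 1 - γ * (x * w) ≠ 0 := by
    intro h
    rw [h, mul_zero] at hφw
    simp [← hφw] at h
  refine hφ_trans ?_
  rw [eq_div_of_mul_eq hne hφw, div_eq_mul_inv]
  exact hxw.mul (isAlgebraic_one.sub ((isAlgebraic_algebraMap _).mul hxw)).inv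

end LacunaryDerivative

section Reduction

variable (T : Type*) [CommRing T] [IsLocalRing T]

/-- The graph of reduction modulo the maximal ideal, as a partial map from `Frac T⟦X⟧` to
`Frac k⟦X⟧`: it consists of the pairs `(f / g, f̄ / ḡ)` with `ḡ ≠ 0`. -/
noncomputable def reductionGraph :
    Subring (FractionRing T⟦X⟧ × FractionRing (ResidueField T)⟦X⟧) where
  carrier := {w | ∃ f g : T⟦X⟧, g.map (residue T) ≠ 0 ∧
    w.1 * algebraMap _ _ g = algebraMap _ _ f ∧
    w.2 * algebraMap _ _ (g.map (residue T)) = algebraMap _ _ (f.map (residue T))}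
  mul_mem' := by
    rintro ⟨u, v⟩ ⟨u', v'⟩ ⟨f, g, hg, hu, hv⟩ ⟨f', g', hg', hu', hv'⟩
    refine ⟨f * f', g * g', by simpa using ⟨hg, hg'⟩, ?_, ?_⟩
    · simp only [Prod.mk_mul_mk, map_mul, ← hu, ← hu']
      ring
    · simp only [Prod.mk_mul_mk, map_mul, ← hv, ← hv']
      ring
  one_mem' := ⟨1, 1, by simp⟩
  add_mem' := by
    rintro ⟨u, v⟩ ⟨u', v'⟩ ⟨f, g, hg, hu, hv⟩ ⟨f', g', hg', hu', hv'⟩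
    refine ⟨f * g' + f' * g, g * g', by simpa using ⟨hg, hg'⟩, ?_, ?_⟩
    · simp only [Prod.mk_add_mk, map_mul, map_add, ← hu, ← hu']
      ring
    · simp only [Prod.mk_add_mk, map_mul, map_add, ← hv, ← hv']
      ring
  zero_mem' := ⟨0, 1, by simp⟩
  neg_mem' := by
    rintro ⟨u, v⟩ ⟨f, g, hg, hu, hv⟩
    exact ⟨-f, g, hg, by simp [← hu], by simp [← hv]⟩

/-- The elements of `Frac T⟦X⟧` that can be reduced modulo the maximal ideal of `T`, that is, the
localization of `T⟦X⟧` at the prime ideal generated by that maximal ideal. -/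
noncomputable def reducible : Subring (FractionRing T⟦X⟧) :=
  (reductionGraph T).map (RingHom.fst _ _)

variable {T}

theorem mem_reducible_iff {u : FractionRing T⟦X⟧} :
    u ∈ reducible T ↔ ∃ v, (u, v) ∈ reductionGraph T := by
  simp [reducible]

theorem algebraMap_mem_reductionGraph (f : T⟦X⟧) :
    (algebraMap _ (FractionRing T⟦X⟧) f,
      algebraMap _ (FractionRing (ResidueField T)⟦X⟧) (f.map (residue T))) ∈ reductionGraph T :=
  ⟨f, 1, by simp⟩

theorem algebraMap_constant_mem_reductionGraph (a : T) :
    (algebraMap T (FractionRing T⟦X⟧) a,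
      algebraMap _ (FractionRing (ResidueField T)⟦X⟧) (residue T a)) ∈ reductionGraph T := by
  have h := algebraMap_mem_reductionGraph (PowerSeries.C a)
  rw [PowerSeries.map_C] at h
  exact h

theorem eq_zero_of_mem_reductionGraph {v : FractionRing (ResidueField T)⟦X⟧}
    (h : (0, v) ∈ reductionGraph T) : v = 0 := by
  obtain ⟨f, g, hg, hf, hv⟩ := h
  rw [zero_mul, eq_comm, IsFractionRing.to_map_eq_zero_iff] at hf
  simpa [hf, hg] using hv

theorem inv_mem_reductionGraph [IsDomain T] {u : FractionRing T⟦X⟧}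
    {v : FractionRing (ResidueField T)⟦X⟧} (h : (u, v) ∈ reductionGraph T) (hv : v ≠ 0) :
    (u⁻¹, v⁻¹) ∈ reductionGraph T := by
  have hu : u ≠ 0 := fun hu ↦ hv (eq_zero_of_mem_reductionGraph (hu ▸ h))
  obtain ⟨f, g, hg, hf, hf'⟩ := h
  refine ⟨g, f, fun hf₀ ↦ hv ?_, ?_, ?_⟩
  · simpa [hf₀, hg] using hf'
  · rw [← hf, inv_mul_cancel_left₀ hu]
  · rw [← hf', inv_mul_cancel_left₀ hv]

end Reduction

section DiscreteValuationRing

instance {R : Type*} [CommRing R] : FaithfulSMul R[X] (FractionRing R⟦X⟧) :=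
  (faithfulSMul_iff_algebraMap_injective _ _).mpr <|
    (IsFractionRing.injective R⟦X⟧ _).comp (Polynomial.coe_injective R)

instance {R : Type*} [CommRing R] : FaithfulSMul R (FractionRing R⟦X⟧) :=
  (faithfulSMul_iff_algebraMap_injective _ _).mpr <|
    (IsFractionRing.injective R⟦X⟧ _).comp PowerSeries.C_injective

variable {T : Type*} [CommRing T] [IsDomain T] [IsDiscreteValuationRing T]

theorem exists_aeval_eq_zero_and_map_residue_ne_zero {A : Type*} [CommRing A] [IsDomain A]
    [Algebra T[X] A] [FaithfulSMul T[X] A] {u : A} (hu : IsAlgebraic T[X] u) :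
    ∃ Q : T[X][X], aeval u Q = 0 ∧ Q.map (mapRingHom (residue T)) ≠ 0 := by
  obtain ⟨Q, hQ0, hQ⟩ := hu
  obtain ⟨π, hπ⟩ := IsDiscreteValuationRing.exists_irreducible T
  have hunit : ¬ IsUnit (C (C π) : T[X][X]) := by
    simpa only [isUnit_C] using hπ.not_isUnit
  obtain ⟨n, P, hP, rfl⟩ := WfDvdMonoid.max_power_factor' hQ0 hunit
  refine ⟨P, ?_, fun hzero ↦ hP ?_⟩
  · rw [map_mul, map_pow, aeval_C] at hQ
    refine (mul_eq_zero.mp hQ).resolve_left (pow_ne_zero _ ?_)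
    simpa using hπ.ne_zero
  · simp only [C_dvd_iff_dvd_coeff]
    intro i j
    have hij := congrArg (fun q ↦ (q.coeff i).coeff j) hzero
    simp only [coeff_map, coe_mapRingHom, coeff_zero] at hij
    rwa [residue_eq_zero_iff, hπ.maximalIdeal_eq, Ideal.mem_span_singleton] at hij

theorem isAlgebraic_of_mem_reductionGraph {u : FractionRing T⟦X⟧}
    {v : FractionRing (ResidueField T)⟦X⟧} (h : (u, v) ∈ reductionGraph T)
    (hu : IsAlgebraic T[X] u) : IsAlgebraic (ResidueField T)[X] v := by
  obtain ⟨Q, hQu, hQ⟩ := exists_aeval_eq_zero_and_map_residue_ne_zero hu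
  refine ⟨_, hQ, eq_zero_of_mem_reductionGraph ?_⟩
  let coeffHom : T[X] →+* FractionRing T⟦X⟧ × FractionRing (ResidueField T)⟦X⟧ :=
    (algebraMap T[X] _).prod ((algebraMap (ResidueField T)[X] _).comp (mapRingHom (residue T)))
  have coeffHom_mem (P : T[X]) : coeffHom P ∈ reductionGraph T := by
    have hP : coeffHom P = (algebraMap T⟦X⟧ _ P, algebraMap _ _ (PowerSeries.map (residue T) P)) :=
      Prod.ext rfl (congrArg (algebraMap (ResidueField T)⟦X⟧ _) polynomial_map_coe)
    exact hP ▸ algebraMap_mem_reductionGraph _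
  have hmem : Q.eval₂ coeffHom (u, v) ∈ reductionGraph T := by
    rw [eval₂_eq_sum_range]
    exact sum_mem fun i _ ↦ mul_mem (coeffHom_mem _) (pow_mem h i)
  convert hmem using 1
  ext
  · exact hQu.symm.trans (hom_eval₂ Q coeffHom (RingHom.fst _ _) (u, v)).symm
  · rw [aeval_def, eval₂_map]
    exact (hom_eval₂ Q coeffHom (RingHom.snd _ _) (u, v)).symm

theorem C_dvd_of_map_residue_eq_zero {π : T} (hπ : Irreducible π) {f : T⟦X⟧}
    (hf : f.map (residue T) = 0) : PowerSeries.C π ∣ f := by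
  have hdvd (n : ℕ) : π ∣ f.coeff n := by
    rw [← Ideal.mem_span_singleton, ← hπ.maximalIdeal_eq, ← residue_eq_zero_iff,
      ← PowerSeries.coeff_map, hf, map_zero]
  choose c hc using hdvd
  exact ⟨.mk c, by ext n; simp [hc]⟩

theorem exists_eq_C_pow_mul {π : T} (hπ : Irreducible π) {g : T⟦X⟧} (hg : g ≠ 0) :
    ∃ (n : ℕ) (g₀ : T⟦X⟧), g₀.map (residue T) ≠ 0 ∧ g = PowerSeries.C π ^ n * g₀ := by
  have hunit : ¬ IsUnit (PowerSeries.C π) := fun h ↦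
    hπ.not_isUnit (by simpa using h.map PowerSeries.constantCoeff)
  obtain ⟨n, g₀, hg₀, rfl⟩ := WfDvdMonoid.max_power_factor' hg hunit
  exact ⟨n, g₀, fun h ↦ hg₀ (C_dvd_of_map_residue_eq_zero hπ h), rfl⟩

theorem exists_pow_mul_mem_reducible {π : T} (hπ : Irreducible π) (u : FractionRing T⟦X⟧) :
    ∃ n : ℕ, algebraMap T (FractionRing T⟦X⟧) π ^ n * u ∈ reducible T := by
  obtain ⟨f, g, hg, rfl⟩ := IsFractionRing.div_surjective (A := T⟦X⟧) u
  obtain ⟨n, g₀, hg₀, rfl⟩ := exists_eq_C_pow_mul hπ (nonZeroDivisors.ne_zero hg)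
  have hC : algebraMap T⟦X⟧ (FractionRing T⟦X⟧) (PowerSeries.C π) = algebraMap T _ π := rfl
  have hg' := IsFractionRing.to_map_ne_zero_of_mem_nonZeroDivisors (K := FractionRing T⟦X⟧) hg
  refine ⟨n, mem_reducible_iff.mpr ⟨_, f, g₀, hg₀, ?_, div_mul_cancel₀ _ (by simpa using hg₀)⟩⟩
  rw [map_mul, map_pow, hC] at hg' ⊢
  rw [mul_div_assoc', div_mul_eq_mul_div, div_eq_iff hg']
  ring

end DiscreteValuationRing

section Taylor

variable {R : Type*} [CommRing R]

theorem coeff_mul_eq_coeff_hasseDeriv (f g : R⟦X⟧) (k n : ℕ) :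
    ((n + k).choose k : R) * (f * g).coeff (n + k) =
      ∑ ij ∈ Finset.HasAntidiagonal.antidiagonal k, ∑ mn ∈ Finset.HasAntidiagonal.antidiagonal n,
        ((mn.1 + ij.1).choose ij.1 * f.coeff (mn.1 + ij.1)) *
          ((mn.2 + ij.2).choose ij.2 * g.coeff (mn.2 + ij.2)) := by
  have htrunc (f : R⟦X⟧) {m : ℕ} (hm : m ≤ n + k) : (f.trunc (n + k + 1)).coeff m = f.coeff m := by
    rw [PowerSeries.coeff_trunc, if_pos (Nat.lt_succ_of_le hm)]
  rw [PowerSeries.coeff_mul_eq_coeff_trunc_mul_trunc f g (Nat.lt_succ_self _), ← coe_mul, coeff_coe,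
    ← hasseDeriv_coeff, hasseDeriv_mul, finsetSum_coeff]
  refine Finset.sum_congr rfl fun ij hij ↦ ?_
  rw [coeff_mul]
  refine Finset.sum_congr rfl fun mn hmn ↦ ?_
  rw [Finset.HasAntidiagonal.mem_antidiagonal] at hij hmn
  rw [hasseDeriv_coeff, hasseDeriv_coeff, htrunc f (by omega), htrunc g (by omega)]

/-- The Taylor expansion `f ↦ f(x + ε)` of power series in `x` as power series in `ε`, whose
coefficients are the Hasse derivatives of `f`. -/
noncomputable def taylorHom (R : Type*) [CommRing R] : R⟦X⟧ →+* R⟦X⟧⟦X⟧ where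
  toFun f := .mk fun k ↦ .mk fun n ↦ (n + k).choose k * f.coeff (n + k)
  map_one' := by
    ext k n
    simp only [PowerSeries.coeff_mk, PowerSeries.coeff_one]
    aesop
  map_mul' f g := by
    ext k n
    simp only [PowerSeries.coeff_mk, PowerSeries.coeff_mul k, map_sum, PowerSeries.coeff_mul n]
    exact coeff_mul_eq_coeff_hasseDeriv f g k n
  map_zero' := by ext; simp
  map_add' f g := by ext; simp [mul_add]

theorem coeff_coeff_taylorHom (f : R⟦X⟧) (k n : ℕ) :
    ((taylorHom R f).coeff k).coeff n = (n + k).choose k * f.coeff (n + k) := by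
  simp [taylorHom]

@[simp]
theorem constantCoeff_taylorHom (f : R⟦X⟧) : (taylorHom R f).constantCoeff = f := by
  ext n
  rw [← PowerSeries.coeff_zero_eq_constantCoeff_apply, coeff_coeff_taylorHom]
  simp

theorem constantCoeff_map_taylorHom {S : Type*} [CommRing S] (ρ : R⟦X⟧ →+* S) (f : R⟦X⟧) :
    ((taylorHom R f).map ρ).constantCoeff = ρ f := by
  rw [← PowerSeries.coeff_zero_eq_constantCoeff_apply, PowerSeries.coeff_map,
    PowerSeries.coeff_zero_eq_constantCoeff_apply, constantCoeff_taylorHom]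

theorem coeff_one_taylorHom (f : R⟦X⟧) : (taylorHom R f).coeff 1 = .derivative R f := by
  ext n
  rw [coeff_coeff_taylorHom, PowerSeries.coeff_derivative, Nat.choose_one_right, mul_comm]
  push_cast
  rfl

theorem coeff_taylorHom_coe (P : R[X]) (k : ℕ) :
    (taylorHom R P).coeff k = (hasseDeriv k P : R[X]) := by
  ext n
  rw [coeff_coeff_taylorHom, coeff_coe, coeff_coe, hasseDeriv_coeff]

theorem taylorHom_C (a : R) : taylorHom R (.C a) = .C (.C a) := by
  ext k n
  rw [coeff_coeff_taylorHom]
  rcases eq_or_ne k 0 with rfl | hk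
  · simp
  · simp [PowerSeries.coeff_C, hk]

variable [IsDomain R]

/-- The extension of `taylorHom` to fractions of power series. -/
noncomputable def taylorFracHom (R : Type*) [CommRing R] [IsDomain R] :
    FractionRing R⟦X⟧ →+* (FractionRing R⟦X⟧)⟦X⟧ :=
  IsLocalization.lift (M := nonZeroDivisors R⟦X⟧)
    (g := (PowerSeries.map (algebraMap _ _)).comp (taylorHom R)) fun g ↦ by
      rw [PowerSeries.isUnit_iff_constantCoeff, RingHom.comp_apply, constantCoeff_map_taylorHom]
      exact IsLocalization.map_units _ g

@[simp]
theorem taylorFracHom_algebraMap (f : R⟦X⟧) :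
    taylorFracHom R (algebraMap _ _ f) = (taylorHom R f).map (algebraMap _ _) :=
  IsLocalization.lift_eq _ _

@[simp]
theorem constantCoeff_taylorFracHom (u : FractionRing R⟦X⟧) :
    (taylorFracHom R u).constantCoeff = u := by
  have h : (PowerSeries.constantCoeff.comp (taylorFracHom R)) = RingHom.id _ :=
    IsLocalization.ringHom_ext (nonZeroDivisors R⟦X⟧)
      (by ext f : 1; simp [constantCoeff_map_taylorHom])
  exact RingHom.congr_fun h u

theorem coeff_taylorFracHom_algebraMap_mul (a : R) (u : FractionRing R⟦X⟧) (k : ℕ) :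
    (taylorFracHom R (algebraMap R _ a * u)).coeff k =
      algebraMap R _ a * (taylorFracHom R u).coeff k := by
  have h : taylorFracHom R (algebraMap R _ a) = .C (algebraMap R _ a) := by
    rw [IsScalarTower.algebraMap_apply R R⟦X⟧, taylorFracHom_algebraMap]
    simp [taylorHom_C]
  rw [map_mul, h, PowerSeries.coeff_C_mul]

end Taylor

section PowChar

variable {R : Type*} [CommRing R] {p : ℕ} [Fact p.Prime] [CharP R p]

theorem coeff_pow_char (f : R⟦X⟧) (n : ℕ) :
    (f ^ p).coeff n = if p ∣ n then f.coeff (n / p) ^ p else 0 := by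
  have h : (f.expand p (NeZero.ne p)).map (frobenius R p) = f ^ p :=
    MvPowerSeries.map_frobenius_expand p (NeZero.ne p)
  rw [← h, PowerSeries.coeff_map, PowerSeries.coeff_expand]
  split_ifs <;> simp [frobenius_def, NeZero.ne p]

end PowChar

section Newton

variable {A : Type*} [CommRing A]

theorem mem_range_map_subtype_iff {S : Subring A} {y : A⟦X⟧} :
    y ∈ (PowerSeries.map S.subtype).range ↔ ∀ n, y.coeff n ∈ S := by
  constructor
  · rintro ⟨z, rfl⟩ n
    simp
  · intro h
    exact ⟨.mk fun n ↦ ⟨y.coeff n, h n⟩, by ext; simp⟩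

theorem eval_mem {S : Subring A} {P : A[X]} {a : A}
    (hP : ∀ i, P.coeff i ∈ S) (ha : a ∈ S) : P.eval a ∈ S := by
  rw [eval_eq_sum_range]
  exact sum_mem fun i _ ↦ mul_mem (hP i) (pow_mem ha i)

theorem constantCoeff_eval_add_X_pow_mul (Q : A⟦X⟧[X]) (a r : A⟦X⟧) {n : ℕ} (hn : n ≠ 0) :
    (Q.eval (a + PowerSeries.X ^ n * r)).constantCoeff = (Q.eval a).constantCoeff := by
  simp only [← eval₂_at_apply]
  simp [hn]

/- Newton's method: writing `y = a + X ^ n * r` with `a` the truncation, the coefficient of `X ^ n`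
in `0 = Q y = Q a + Q' a * X ^ n * r + ⋯` determines that of `y`. -/
theorem coeff_mem_of_isRoot {E : Type*} [Field E] {S : Subring E} {Q : E⟦X⟧[X]}
    {y : E⟦X⟧} (hQ : ∀ i n, (Q.coeff i).coeff n ∈ S) (hy : Q.IsRoot y) (hy₀ : y.constantCoeff ∈ S)
    (hQ' : (Q.derivative.eval y).constantCoeff ≠ 0)
    (hinv : (Q.derivative.eval y).constantCoeff⁻¹ ∈ S) (n : ℕ) : y.coeff n ∈ S := by
  induction n using Nat.strong_induction_on with | _ n ih
  rcases eq_or_ne n 0 with rfl | hn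
  · simpa using hy₀
  set a : E⟦X⟧ := ((y.trunc n : E[X]) : E⟦X⟧) with ha
  obtain ⟨r, hr⟩ : PowerSeries.X ^ n ∣ y - a :=
    PowerSeries.X_pow_dvd_iff.mpr fun m hm ↦ by simp [ha, PowerSeries.coeff_trunc, hm]
  replace hr : y = a + PowerSeries.X ^ n * r := by rw [← hr, add_sub_cancel]
  have coeff_X_pow_mul (s : E⟦X⟧) : (PowerSeries.X ^ n * s).coeff n = s.constantCoeff := by
    simpa using PowerSeries.coeff_X_pow_mul s n 0
  have hyn : y.coeff n = r.constantCoeff := by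
    rw [hr, map_add, coeff_X_pow_mul, ha, coeff_coe, PowerSeries.coeff_trunc, if_neg (lt_irrefl n),
      zero_add]
  have haS : Q.eval a ∈ (PowerSeries.map S.subtype).range := by
    refine eval_mem (fun i ↦ mem_range_map_subtype_iff.mpr (hQ i))
      (mem_range_map_subtype_iff.mpr fun m ↦ ?_)
    rw [ha, coeff_coe, PowerSeries.coeff_trunc]
    split_ifs with hm
    · exact ih m hm
    · exact zero_mem S
  obtain ⟨b, hb⟩ := Q.binomExpansion a (PowerSeries.X ^ n * r)
  have hcoeff : (Q.eval a).coeff n + (Q.derivative.eval y).constantCoeff * y.coeff n = 0 := by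
    have hb' : Q.eval a +
        PowerSeries.X ^ n * (Q.derivative.eval a * r + PowerSeries.X ^ n * (b * r ^ 2)) = 0 := by
      rw [← hy.eq_zero, hr, hb]
      ring
    replace hb' := congrArg (PowerSeries.coeff n) hb'
    rw [map_add, coeff_X_pow_mul] at hb'
    rw [hyn, hr, constantCoeff_eval_add_X_pow_mul _ _ _ hn]
    simpa [hn] using hb'
  have hsolve : y.coeff n = -(Q.eval a).coeff n * (Q.derivative.eval y).constantCoeff⁻¹ := by
    rw [eq_mul_inv_iff_mul_eq₀ hQ']
    linear_combination hcoeff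
  rw [hsolve]
  exact mul_mem (neg_mem (mem_range_map_subtype_iff.mp haS n)) hinv

end Newton

section TaylorCoefficients

theorem coeff_mem_of_mul_eq {E : Type*} [Field E] {S : Subring E} {y f g : E⟦X⟧}
    (h : g * y = f) (hf : ∀ n, f.coeff n ∈ S) (hg : ∀ n, g.coeff n ∈ S)
    (hg₀ : g.constantCoeff ≠ 0) (hinv : g.constantCoeff⁻¹ ∈ S) (n : ℕ) : y.coeff n ∈ S := by
  have hy₀ : y.constantCoeff = g.constantCoeff⁻¹ * f.constantCoeff := by
    rw [← h, map_mul, inv_mul_cancel_left₀ hg₀]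
  refine coeff_mem_of_isRoot (Q := C g * X - C f) (fun i m ↦ ?_) (by simp [h]) ?_ (by simpa)
    (by simpa) n
  · rw [coeff_sub, coeff_C_mul, coeff_X, coeff_C, mul_ite, mul_one, mul_zero, map_sub]
    refine sub_mem ?_ ?_ <;> split_ifs <;> simp [hf, hg]
  · rw [hy₀]
    exact mul_mem hinv (by simpa using hf 0)

theorem coeff_taylorFracHom_mem_reducible {T : Type*} [CommRing T] [IsDomain T] [IsLocalRing T]
    {u : FractionRing T⟦X⟧} (hu : u ∈ reducible T) (k : ℕ) :
    (taylorFracHom T u).coeff k ∈ reducible T := by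
  obtain ⟨v, f, g, hg, hf, -⟩ := mem_reducible_iff.mp hu
  have mem (f : T⟦X⟧) : algebraMap _ _ f ∈ reducible T :=
    mem_reducible_iff.mpr ⟨_, algebraMap_mem_reductionGraph f⟩
  have hinv : (algebraMap T⟦X⟧ (FractionRing T⟦X⟧) g)⁻¹ ∈ reducible T :=
    mem_reducible_iff.mpr ⟨_, inv_mem_reductionGraph (algebraMap_mem_reductionGraph g) (by simpa)⟩
  have hg₀ : g ≠ 0 := by
    rintro rfl
    simp at hg
  refine coeff_mem_of_mul_eq (g := taylorFracHom T (algebraMap _ _ g))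
    (f := taylorFracHom T (algebraMap _ _ f)) ?_ ?_ ?_ ?_ ?_ k
  · rw [← map_mul, mul_comm, hf]
  · simp [mem]
  · simp [mem]
  · rwa [constantCoeff_taylorFracHom, Ne, IsFractionRing.to_map_eq_zero_iff]
  · rwa [constantCoeff_taylorFracHom]

variable {R : Type*} [CommRing R] [IsDomain R]

theorem isAlgebraic_coeff_taylorFracHom_algebraMap (P : R[X]) (k : ℕ) :
    IsAlgebraic R[X] ((taylorFracHom R (algebraMap R[X] _ P)).coeff k) := by
  rw [IsScalarTower.algebraMap_apply R[X] R⟦X⟧, taylorFracHom_algebraMap, PowerSeries.coeff_map]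
  exact (congrArg (algebraMap R⟦X⟧ (FractionRing R⟦X⟧)) (coeff_taylorHom_coe P k)) ▸
    isAlgebraic_algebraMap (A := FractionRing R⟦X⟧) (hasseDeriv k P)

variable {F₀ : Type*} [Field F₀] [Algebra R[X] F₀] [IsFractionRing R[X] F₀]
  [Algebra F₀ (FractionRing R⟦X⟧)] [IsScalarTower R[X] F₀ (FractionRing R⟦X⟧)]

theorem isAlgebraic_coeff_taylorFracHom_algebraMap_of_isFractionRing (a : F₀) (k : ℕ) :
    IsAlgebraic R[X] ((taylorFracHom R (algebraMap F₀ _ a)).coeff k) := by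
  obtain ⟨P, Q, hQ, rfl⟩ := IsFractionRing.div_surjective (A := R[X]) a
  have hPQ : algebraMap F₀ (FractionRing R⟦X⟧) (algebraMap R[X] F₀ P / algebraMap R[X] F₀ Q) =
      algebraMap R[X] _ P / algebraMap R[X] _ Q := by
    rw [map_div₀, ← IsScalarTower.algebraMap_apply, ← IsScalarTower.algebraMap_apply]
  have hQ₀ : algebraMap R[X] (FractionRing R⟦X⟧) Q ≠ 0 :=
    (FaithfulSMul.algebraMap_injective _ _).ne_iff' (map_zero _) |>.mpr (nonZeroDivisors.ne_zero hQ)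
  refine coeff_mem_of_mul_eq (S := (Subalgebra.algebraicClosure R[X] _).toSubring)
    (g := taylorFracHom R (algebraMap R[X] _ Q)) (f := taylorFracHom R (algebraMap R[X] _ P))
    ?_ (isAlgebraic_coeff_taylorFracHom_algebraMap P) (isAlgebraic_coeff_taylorFracHom_algebraMap Q)
    ?_ ?_ k
  · rw [← map_mul, hPQ, mul_div_cancel₀ _ hQ₀]
  · rwa [constantCoeff_taylorFracHom]
  · rw [constantCoeff_taylorFracHom]
    exact (isAlgebraic_algebraMap (A := FractionRing R⟦X⟧) Q).inv

theorem isAlgebraic_coeff_taylorFracHom {b : FractionRing R⟦X⟧} (hb : IsSeparable F₀ b) (k : ℕ) :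
    IsAlgebraic R[X] ((taylorFracHom R b).coeff k) := by
  have eval_map_minpoly (P : F₀[X]) :
      (P.map ((taylorFracHom R).comp (algebraMap F₀ _))).eval (taylorFracHom R b) =
        taylorFracHom R (aeval b P) := by
    rw [eval_map, aeval_def, hom_eval₂]
  have hb_alg : IsAlgebraic R[X] b :=
    (IsFractionRing.isAlgebraic_iff R[X] F₀ _).mpr hb.isIntegral.isAlgebraic
  have hderiv : IsAlgebraic R[X] (aeval b (minpoly F₀ b).derivative) :=
    (IsFractionRing.isAlgebraic_iff R[X] F₀ _).mpr (IsIntegral.isAlgebraic <|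
      .of_mem_of_fg _ hb.isIntegral.fg_adjoin_singleton _ (aeval_mem_adjoin_singleton _ _))
  refine coeff_mem_of_isRoot (S := (Subalgebra.algebraicClosure R[X] _).toSubring)
    (Q := (minpoly F₀ b).map ((taylorFracHom R).comp (algebraMap F₀ _)))
    (fun i n ↦ ?_) ?_ ?_ ?_ ?_ k
  · rw [coeff_map, RingHom.comp_apply]
    exact isAlgebraic_coeff_taylorFracHom_algebraMap_of_isFractionRing _ n
  · rw [IsRoot.def, eval_map_minpoly, minpoly.aeval, map_zero]
  · rwa [constantCoeff_taylorFracHom]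
  · rw [derivative_map, eval_map_minpoly, constantCoeff_taylorFracHom]
    exact hb.aeval_derivative_ne_zero (minpoly.aeval F₀ b)
  · rw [derivative_map, eval_map_minpoly, constantCoeff_taylorFracHom]
    exact hderiv.inv

end TaylorCoefficients

section ArtinSchreierObstruction

theorem mul_mem_reductionGraph_zero {T : Type*} [CommRing T] [IsLocalRing T] {a : T}
    (ha : a ∈ maximalIdeal T) {u : FractionRing T⟦X⟧} (hu : u ∈ reducible T) :
    (algebraMap T (FractionRing T⟦X⟧) a * u, 0) ∈ reductionGraph T := by
  obtain ⟨v, hv⟩ := mem_reducible_iff.mp hu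
  have h := mul_mem (algebraMap_constant_mem_reductionGraph a) hv
  rwa [(residue_eq_zero_iff a).mpr ha, map_zero, Prod.mk_mul_mk, zero_mul] at h

theorem isAlgebraic_algebraMap_constant {R : Type*} [CommRing R] [Nontrivial R] (a : R) :
    IsAlgebraic R[X] (algebraMap R (FractionRing R⟦X⟧) a) := by
  have h : algebraMap R[X] (FractionRing R⟦X⟧) (C a) = algebraMap R _ a :=
    congrArg (algebraMap R⟦X⟧ (FractionRing R⟦X⟧)) (coe_C a)
  exact h ▸ isAlgebraic_algebraMap (C a)

theorem charP_fractionRing_powerSeries (p : ℕ) (R : Type*) [CommRing R] [CharP R p] :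
    CharP (FractionRing R⟦X⟧) p :=
  charP_of_injective_algebraMap (FaithfulSMul.algebraMap_injective R _) p

variable {p : ℕ} [Fact p.Prime] {T : Type*} [CommRing T] [IsDomain T] [CharP T p]

theorem coeff_one_taylorFracHom_pow_char (u : FractionRing T⟦X⟧) :
    (taylorFracHom T (u ^ p)).coeff 1 = 0 := by
  have := charP_fractionRing_powerSeries p T
  rw [map_pow, coeff_pow_char, if_neg (Fact.out : p.Prime).not_dvd_one]

theorem coeff_taylorFracHom_pow_char (u : FractionRing T⟦X⟧) (j : ℕ) :
    (taylorFracHom T (u ^ p)).coeff (p ^ (j + 1)) = (taylorFracHom T u).coeff (p ^ j) ^ p := by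
  have := charP_fractionRing_powerSeries p T
  rw [map_pow, coeff_pow_char, if_pos (dvd_pow_self p j.succ_ne_zero), pow_succ,
    Nat.mul_div_cancel _ (Fact.out : p.Prime).pos]

variable [IsDiscreteValuationRing T]
  {F₀ : Type*} [Field F₀] [Algebra T[X] F₀] [IsFractionRing T[X] F₀]
  [Algebra F₀ (FractionRing T⟦X⟧)] [IsScalarTower T[X] F₀ (FractionRing T⟦X⟧)]
  {ϖ : T} {f : T⟦X⟧} {b h : FractionRing T⟦X⟧}

theorem exists_isAlgebraic_mul_coeff_taylorFracHom_sub_mem_reductionGraph (hϖ : Irreducible ϖ)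
    (hb : IsSeparable F₀ b)
    (hf : algebraMap _ (FractionRing T⟦X⟧) f = algebraMap T _ ϖ * (b + h - h ^ p)) (j : ℕ) :
    ∃ β : FractionRing T⟦X⟧, IsAlgebraic T[X] β ∧
      (algebraMap T _ ϖ ^ p ^ j * ((taylorFracHom T h).coeff (p ^ j) - β),
        algebraMap _ (FractionRing (ResidueField T)⟦X⟧)
          ((PowerSeries.derivative T f).map (residue T)) ^ p ^ j) ∈ reductionGraph T := by
  have coeff_f (k : ℕ) : (taylorFracHom T (algebraMap _ _ f)).coeff k = algebraMap T _ ϖ *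
      ((taylorFracHom T b).coeff k + (taylorFracHom T h).coeff k -
        (taylorFracHom T (h ^ p)).coeff k) := by
    rw [hf, coeff_taylorFracHom_algebraMap_mul, map_sub, map_add, map_sub, map_add]
  have coeff_b_alg (k : ℕ) := isAlgebraic_coeff_taylorFracHom hb k
  induction j with
  | zero =>
    refine ⟨-(taylorFracHom T b).coeff 1, (coeff_b_alg 1).neg, ?_⟩
    have h₁ := coeff_f 1
    rw [coeff_one_taylorFracHom_pow_char, taylorFracHom_algebraMap, PowerSeries.coeff_map,
      coeff_one_taylorHom] at h₁
    convert algebraMap_mem_reductionGraph (PowerSeries.derivative T f) using 2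
    · rw [pow_zero, pow_one, h₁]
      ring
    · rw [pow_zero, pow_one]
  | succ j ih =>
    obtain ⟨β, hβ, hmem⟩ := ih
    refine ⟨β ^ p - (taylorFracHom T b).coeff (p ^ (j + 1)),
      (hβ.pow p).sub (coeff_b_alg _), ?_⟩
    have := charP_fractionRing_powerSeries p T
    have hj := coeff_f (p ^ (j + 1))
    rw [coeff_taylorFracHom_pow_char] at hj
    have hlt : 1 < p ^ (j + 1) := Nat.one_lt_pow j.succ_ne_zero (Fact.out : p.Prime).one_lt
    obtain ⟨n, hn⟩ := Nat.exists_eq_add_of_lt hlt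
    have hrem : (algebraMap T (FractionRing T⟦X⟧) (ϖ ^ (n + 1)) *
        (taylorFracHom T (algebraMap _ _ f)).coeff (p ^ (j + 1)), 0) ∈ reductionGraph T :=
      mul_mem_reductionGraph_zero
        (Ideal.pow_mem_of_mem _ ((mem_maximalIdeal ϖ).mpr hϖ.not_isUnit) _ n.succ_pos) <|
        coeff_taylorFracHom_mem_reducible
          (mem_reducible_iff.mpr ⟨_, algebraMap_mem_reductionGraph f⟩) _
    convert add_mem (pow_mem hmem p) hrem using 1
    refine Prod.ext ?_ ?_
    · simp only [Prod.fst_add, Prod.pow_fst]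
      rw [hj, mul_pow, ← pow_mul, ← pow_succ, sub_pow_char, map_pow, hn]
      ring
    · simp only [Prod.snd_add, Prod.pow_snd]
      rw [add_zero, ← pow_mul, ← pow_succ]

theorem algebraMap_ne_mul_add_sub_pow_char (hϖ : Irreducible ϖ) (hb : IsSeparable F₀ b)
    (hf : Transcendental (ResidueField T)[X] (algebraMap _ (FractionRing (ResidueField T)⟦X⟧)
      ((PowerSeries.derivative T f).map (residue T)))) :
    algebraMap _ (FractionRing T⟦X⟧) f ≠ algebraMap T _ ϖ * (b + h - h ^ p) := by
  intro heq
  obtain ⟨N, hN⟩ := exists_pow_mul_mem_reducible hϖ h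
  obtain ⟨n, hn⟩ := Nat.exists_eq_add_of_lt (Nat.lt_pow_self (n := N) (Fact.out : p.Prime).one_lt)
  obtain ⟨β, hβ, hmem⟩ :=
    exists_isAlgebraic_mul_coeff_taylorFracHom_sub_mem_reductionGraph hϖ hb heq N
  have hh : (algebraMap T (FractionRing T⟦X⟧) (ϖ ^ (n + 1)) *
      (taylorFracHom T (algebraMap T _ (ϖ ^ N) * h)).coeff (p ^ N), 0) ∈ reductionGraph T :=
    mul_mem_reductionGraph_zero
      (Ideal.pow_mem_of_mem _ ((mem_maximalIdeal ϖ).mpr hϖ.not_isUnit) _ n.succ_pos) <|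
      coeff_taylorFracHom_mem_reducible (by rwa [map_pow]) _
  have hβmem : (algebraMap T (FractionRing T⟦X⟧) ϖ ^ p ^ N * β,
      -algebraMap _ (FractionRing (ResidueField T)⟦X⟧)
        ((PowerSeries.derivative T f).map (residue T)) ^ p ^ N) ∈ reductionGraph T := by
    convert sub_mem hh hmem using 1
    refine Prod.ext ?_ (zero_sub _).symm
    rw [coeff_taylorFracHom_algebraMap_mul, Prod.fst_sub, map_pow, map_pow, hn]
    ring
  have halg := (isAlgebraic_of_mem_reductionGraph hβmem
    (((isAlgebraic_algebraMap_constant ϖ).pow _).mul hβ)).neg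
  rw [neg_neg] at halg
  exact hf.pow (pow_pos (Fact.out : p.Prime).pos N) halg

end ArtinSchreierObstruction

section LogDeriv

/-- The first Taylor coefficient as a derivation, for a Taylor expansion `τ : A →+* A⟦X⟧`. -/
noncomputable def taylorDerivation {A : Type*} [CommRing A] (τ : A →+* A⟦X⟧)
    (hτ : ∀ a, (τ a).constantCoeff = a) : Derivation ℤ A A :=
  .mk' ((PowerSeries.coeff 1).toAddMonoidHom.comp τ.toAddMonoidHom).toIntLinearMap fun a b ↦ by
    simp [PowerSeries.coeff_one_mul, hτ, mul_comm, add_comm]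

variable {R : Type*} [CommRing R] [IsDomain R]

/-- The derivation `d/dX` on fractions of power series, as the first Taylor coefficient. -/
noncomputable instance : Differential (FractionRing R⟦X⟧) :=
  ⟨taylorDerivation (taylorFracHom R) constantCoeff_taylorFracHom⟩

theorem logDeriv_eq_coeff_taylorFracHom_div (u : FractionRing R⟦X⟧) :
    Differential.logDeriv u = (taylorFracHom R u).coeff 1 / u :=
  rfl

theorem logDeriv_algebraMap_powerSeries (f : R⟦X⟧) :
    Differential.logDeriv (algebraMap _ (FractionRing R⟦X⟧) f) =
      algebraMap _ _ (PowerSeries.derivative R f) / algebraMap _ _ f := by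
  rw [logDeriv_eq_coeff_taylorFracHom_div, taylorFracHom_algebraMap, PowerSeries.coeff_map,
    coeff_one_taylorHom]

theorem isAlgebraic_logDeriv {F₀ : Type*} [Field F₀] [Algebra R[X] F₀] [IsFractionRing R[X] F₀]
    [Algebra F₀ (FractionRing R⟦X⟧)] [IsScalarTower R[X] F₀ (FractionRing R⟦X⟧)]
    {γ : FractionRing R⟦X⟧} (hγ : IsSeparable F₀ γ) :
    IsAlgebraic R[X] (Differential.logDeriv γ) := by
  rw [logDeriv_eq_coeff_taylorFracHom_div, div_eq_mul_inv]
  exact (isAlgebraic_coeff_taylorFracHom hγ 1).mul <| IsAlgebraic.inv <|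
    (IsFractionRing.isAlgebraic_iff R[X] F₀ _).mpr hγ.isIntegral.isAlgebraic

variable {T : Type*} [CommRing T] [IsDomain T] [IsDiscreteValuationRing T]

theorem logDeriv_algebraMap_mem_reducible {f : T⟦X⟧} (hf : f ≠ 0) :
    Differential.logDeriv (algebraMap _ (FractionRing T⟦X⟧) f) ∈ reducible T := by
  obtain ⟨π, hπ⟩ := IsDiscreteValuationRing.exists_irreducible T
  obtain ⟨n, f₀, hf₀, rfl⟩ := exists_eq_C_pow_mul hπ hf
  have hf' : algebraMap _ (FractionRing T⟦X⟧) (PowerSeries.C π ^ n * f₀) ≠ 0 := by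
    rwa [Ne, IsFractionRing.to_map_eq_zero_iff]
  rw [map_mul] at hf' ⊢
  obtain ⟨hπ₀, hf₀'⟩ := mul_ne_zero_iff.mp hf'
  have hC :
      Differential.logDeriv (algebraMap T⟦X⟧ (FractionRing T⟦X⟧) (PowerSeries.C π ^ n)) = 0 := by
    rw [map_pow, Differential.logDeriv_pow, logDeriv_algebraMap_powerSeries,
      PowerSeries.derivative_C, map_zero, zero_div, mul_zero]
  rw [Differential.logDeriv_mul _ _ hπ₀ hf₀', hC, zero_add, logDeriv_algebraMap_powerSeries]
  exact mem_reducible_iff.mpr ⟨_, mul_mem (algebraMap_mem_reductionGraph _)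
    (inv_mem_reductionGraph (algebraMap_mem_reductionGraph _) (by simpa using hf₀))⟩

theorem logDeriv_mem_reducible (h : FractionRing T⟦X⟧) :
    Differential.logDeriv h ∈ reducible T := by
  obtain rfl | hh := eq_or_ne h 0
  · rw [Differential.logDeriv_zero]
    exact zero_mem _
  obtain ⟨f, g, -, rfl⟩ := IsFractionRing.div_surjective (A := T⟦X⟧) h
  obtain ⟨hf, hg⟩ := div_ne_zero_iff.mp hh
  rw [Differential.logDeriv_div _ _ hf hg]
  exact sub_mem (logDeriv_algebraMap_mem_reducible (ne_zero_of_map hf))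
    (logDeriv_algebraMap_mem_reducible (ne_zero_of_map hg))

theorem ne_mul_pow_of_logDeriv_eq {F₀ : Type*} [Field F₀] [Algebra T[X] F₀]
    [IsFractionRing T[X] F₀] [Algebra F₀ (FractionRing T⟦X⟧)]
    [IsScalarTower T[X] F₀ (FractionRing T⟦X⟧)] {μ ν : T} {n : ℕ} (hμ : μ ≠ 0)
    (hν : ν ∈ maximalIdeal T) (hn : (n : T) = μ * ν) {z w γ : FractionRing T⟦X⟧}
    {v : FractionRing (ResidueField T)⟦X⟧} (hz : Differential.logDeriv z = algebraMap T _ μ * w)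
    (hwv : (w, v) ∈ reductionGraph T) (hv : Transcendental (ResidueField T)[X] v)
    (hγ : IsSeparable F₀ γ) (h : FractionRing T⟦X⟧) : z ≠ γ * h ^ n := by
  rintro rfl
  have hμ' : algebraMap T (FractionRing T⟦X⟧) μ ≠ 0 :=
    (FaithfulSMul.algebraMap_injective T _).ne_iff' (map_zero _) |>.mpr hμ
  have hn' : (n : FractionRing T⟦X⟧) = algebraMap T _ μ * algebraMap T _ ν := by
    rw [← map_natCast (algebraMap T _), hn, map_mul]
  have hw₀ : w ≠ 0 := by
    rintro rfl
    exact hv (eq_zero_of_mem_reductionGraph hwv ▸ isAlgebraic_zero)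
  have hγh : γ * h ^ n ≠ 0 := fun h₀ ↦ by
    simp [h₀, hμ', hw₀] at hz
  obtain ⟨hγ₀, hh₀⟩ := mul_ne_zero_iff.mp hγh
  rw [Differential.logDeriv_mul _ _ hγ₀ hh₀, Differential.logDeriv_pow, hn'] at hz
  have hmem : ((algebraMap T (FractionRing T⟦X⟧) μ)⁻¹ * Differential.logDeriv γ, v) ∈
      reductionGraph T := by
    convert sub_mem hwv (mul_mem_reductionGraph_zero hν (logDeriv_mem_reducible h)) using 1
    refine Prod.ext ?_ (sub_zero _).symm
    rw [Prod.fst_sub, inv_mul_eq_iff_eq_mul₀ hμ']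
    linear_combination hz
  exact hv <| isAlgebraic_of_mem_reductionGraph hmem <|
    (isAlgebraic_algebraMap_constant μ).inv.mul (isAlgebraic_logDeriv hγ)

end LogDeriv

section KummerObstruction

theorem transcendental_algebraMap_mul {R : Type*} [CommRing R] [IsDomain R] {a : R} (ha : a ≠ 0)
    {v : FractionRing R⟦X⟧} (hv : Transcendental R[X] v) :
    Transcendental R[X] (algebraMap R _ a * v) := by
  intro h
  have ha' : algebraMap R (FractionRing R⟦X⟧) a ≠ 0 :=
    (FaithfulSMul.algebraMap_injective R _).ne_iff' (map_zero _) |>.mpr ha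
  have := (isAlgebraic_algebraMap_constant a).inv.mul h
  rw [inv_mul_cancel_left₀ ha'] at this
  exact hv this

variable {T : Type*} [CommRing T] [IsDomain T] [IsDiscreteValuationRing T]
  {F₀ : Type*} [Field F₀] [Algebra T[X] F₀] [IsFractionRing T[X] F₀]
  [Algebra F₀ (FractionRing T⟦X⟧)] [IsScalarTower T[X] F₀ (FractionRing T⟦X⟧)]

theorem logDeriv_one_add_C_mul (a : T) (f : T⟦X⟧) :
    Differential.logDeriv (algebraMap _ (FractionRing T⟦X⟧) (1 + PowerSeries.C a * f)) =
      algebraMap T _ a *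
        (algebraMap _ _ (PowerSeries.derivative T f) /
          algebraMap _ _ (1 + PowerSeries.C a * f)) := by
  have h : PowerSeries.derivative T (1 + PowerSeries.C a * f) =
      PowerSeries.C a * PowerSeries.derivative T f := by
    simp [Derivation.leibniz]
  rw [logDeriv_algebraMap_powerSeries, h, map_mul, mul_div_assoc]
  rfl

theorem mul_div_mem_reductionGraph (a b : T) {f : T⟦X⟧}
    (hf : 1 + PowerSeries.C (residue T b) * f.map (residue T) ≠ 0) :
    (algebraMap T (FractionRing T⟦X⟧) a *
        (algebraMap _ _ (PowerSeries.derivative T f) / algebraMap _ _ (1 + PowerSeries.C b * f)),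
      algebraMap _ (FractionRing (ResidueField T)⟦X⟧) (residue T a) *
        (algebraMap _ _ ((PowerSeries.derivative T f).map (residue T)) /
          algebraMap _ _ (1 + PowerSeries.C (residue T b) * f.map (residue T)))) ∈
      reductionGraph T := by
  have hb : (1 + PowerSeries.C b * f).map (residue T) =
      1 + PowerSeries.C (residue T b) * f.map (residue T) := by simp
  rw [← hb] at hf ⊢
  have hinv := inv_mem_reductionGraph
    (algebraMap_mem_reductionGraph (1 + PowerSeries.C b * f)) (by
      rwa [Ne, IsFractionRing.to_map_eq_zero_iff])
  have h := mul_mem (algebraMap_constant_mem_reductionGraph a)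
    (mul_mem (algebraMap_mem_reductionGraph (PowerSeries.derivative T f)) hinv)
  rwa [Prod.mk_mul_mk, Prod.mk_mul_mk, ← div_eq_mul_inv, ← div_eq_mul_inv] at h

theorem algebraMap_prod_one_add_C_mul_pow_ne {ι : Type*} [Fintype ι] {a g : ι → T} {n : ι → ℕ}
    {N : ℕ} {μ ν : T} {c : ResidueField T} {f : T⟦X⟧} {γ : FractionRing T⟦X⟧} (hμ : μ ≠ 0)
    (hν : ν ∈ maximalIdeal T) (hN : (N : T) = μ * ν) (ha : ∀ i, a i = μ * g i)
    (hc : ∀ i, residue T (a i) = c) (hsum : ∑ i, residue T (n i * g i) ≠ 0)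
    (hf : Transcendental (ResidueField T)[X] (algebraMap _ (FractionRing (ResidueField T)⟦X⟧)
      ((PowerSeries.derivative T f).map (residue T)) /
        algebraMap _ _ (1 + PowerSeries.C c * f.map (residue T))))
    (hγ : IsSeparable F₀ γ) (h : FractionRing T⟦X⟧) :
    algebraMap _ (FractionRing T⟦X⟧) (∏ i, (1 + PowerSeries.C (a i) * f) ^ n i) ≠ γ * h ^ N := by
  have hden : 1 + PowerSeries.C c * f.map (residue T) ≠ 0 := fun h₀ ↦ by
    simp [h₀, Transcendental, isAlgebraic_zero] at hf
  have hfac (i) : algebraMap _ (FractionRing T⟦X⟧) (1 + PowerSeries.C (a i) * f) ≠ 0 := by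
    rw [Ne, IsFractionRing.to_map_eq_zero_iff]
    rintro h₀
    simpa [hc i, hden] using congrArg (PowerSeries.map (residue T)) h₀
  refine ne_mul_pow_of_logDeriv_eq hμ hν hN
    (w := ∑ i, algebraMap T _ (n i * g i) * (algebraMap _ _ (PowerSeries.derivative T f) /
      algebraMap _ _ (1 + PowerSeries.C (a i) * f))) ?_ ?_
    (transcendental_algebraMap_mul hsum hf) hγ h
  · simp only [map_prod, map_pow]
    rw [Differential.logDeriv_prod _ _ _ fun i _ ↦ pow_ne_zero _ (hfac i), Finset.mul_sum]
    refine Finset.sum_congr rfl fun i _ ↦ ?_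
    rw [Differential.logDeriv_pow, logDeriv_one_add_C_mul, map_mul _ (n i : T), map_natCast,
      congrArg (algebraMap T (FractionRing T⟦X⟧)) (ha i), map_mul]
    ring
  · rw [map_sum, Finset.sum_mul]
    convert sum_mem fun i (_ : i ∈ Finset.univ) ↦
      mul_div_mem_reductionGraph (n i * g i) (a i) (by rwa [hc]) using 1
    simp [Prod.ext_iff, Prod.fst_sum, Prod.snd_sum, hc]

variable {p : ℕ} [Fact p.Prime]

/-- The element `∏ᵢ (1 + (ζ ^ i + ε) φ) ^ nᵢ`, where `i` runs over `(ℤ/p)ˣ` and `nᵢ` is the least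
natural number representing `i⁻¹`. When `ζ` is a primitive `p`-th root of unity, a Galois
conjugation `ζ ↦ ζ ^ j` maps it to its `j`-th power up to a `p`-th power, so that extracting a
`p`-th root of it descends to an extension of the field over which `φ` is defined. -/
noncomputable def kummerElement (p : ℕ) [Fact p.Prime] (ε : ℤ) {R : Type*} [CommRing R] (ζ φ : R) :
    R :=
  ∏ i : (ZMod p)ˣ, (1 + (ζ ^ (i : ZMod p).val + ε) * φ) ^ ((i⁻¹ : (ZMod p)ˣ) : ZMod p).val

theorem map_kummerElement (ε : ℤ) {R S : Type*} [CommRing R] [CommRing S] (σ : R →+* S) (ζ φ : R) :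
    σ (kummerElement p ε ζ φ) = kummerElement p ε (σ ζ) (σ φ) := by
  simp only [kummerElement, map_prod, map_pow, map_add, map_one, map_mul, map_intCast]

theorem sum_val_inv_mul_val (k : Type*) [CommRing k] [CharP k p] :
    ∑ i : (ZMod p)ˣ, ((((i⁻¹ : (ZMod p)ˣ) : ZMod p).val * (i : ZMod p).val : ℕ) : k) = -1 := by
  have h (i : (ZMod p)ˣ) : ((((i⁻¹ : (ZMod p)ˣ) : ZMod p).val * (i : ZMod p).val : ℕ) : k) = 1 := by
    rw [← Nat.cast_one, CharP.natCast_eq_natCast k p, ← ZMod.natCast_eq_natCast_iff,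
      Nat.cast_mul, ZMod.natCast_zmod_val, ZMod.natCast_zmod_val, Units.inv_mul, Nat.cast_one]
  simp only [h, Finset.sum_const, Finset.card_univ, ZMod.card_units_eq_totient,
    Nat.totient_prime (Fact.out : p.Prime), nsmul_eq_mul, mul_one]
  rw [Nat.cast_sub (Fact.out : p.Prime).one_le, CharP.cast_eq_zero, Nat.cast_one, zero_sub]

theorem exists_pow_eq_pow_mul_pow_of_modEq {E : Type*} [Field E] {a : E} (ha : a ≠ 0)
    {m n q : ℕ} (h : m ≡ n [MOD q]) : ∃ u, a ^ m = a ^ n * u ^ q := by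
  obtain ⟨k, hk⟩ := (Nat.modEq_iff_dvd.mp h.symm)
  refine ⟨a ^ k, ?_⟩
  rw [← zpow_natCast, ← zpow_natCast, ← zpow_natCast, ← zpow_mul, ← zpow_add₀ ha, mul_comm k, ← hk,
    add_sub_cancel]

theorem exists_kummerElement_pow_eq {E : Type*} [Field E] {ζ φ : E} (hζ : ζ ^ p = 1) {ε : ℤ}
    (h : kummerElement p ε ζ φ ≠ 0) {j : ℕ} (hj : j.Coprime p) :
    ∃ u, kummerElement p ε (ζ ^ j) φ = kummerElement p ε ζ φ ^ j * u ^ p := by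
  let J := ZMod.unitOfCoprime j hj
  let a (i : (ZMod p)ˣ) : E := 1 + (ζ ^ (i : ZMod p).val + ε) * φ
  let n (i : (ZMod p)ˣ) : ℕ := ((i⁻¹ : (ZMod p)ˣ) : ZMod p).val
  have ha (i) : a i ≠ 0 := by
    refine ne_zero_pow (n := n i) ?_ (Finset.prod_ne_zero_iff.mp h i (Finset.mem_univ i))
    exact (ZMod.val_ne_zero _).mpr i⁻¹.ne_zero
  have hconj (i : (ZMod p)ˣ) : 1 + ((ζ ^ j) ^ (i : ZMod p).val + ε) * φ = a (J * i) := by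
    have hpow : (ζ ^ j) ^ (i : ZMod p).val = ζ ^ ((J * i : (ZMod p)ˣ) : ZMod p).val := by
      rw [← pow_mul, ← pow_mod_orderOf, ← pow_mod_orderOf _ (ZMod.val _)]
      refine congrArg (ζ ^ ·) (Nat.ModEq.of_dvd (orderOf_dvd_of_pow_eq_one hζ) ?_)
      rw [← ZMod.natCast_eq_natCast_iff]
      simp [J]
    rw [hpow]
  have hexp (i : (ZMod p)ˣ) : n i ≡ n (J * i) * j [MOD p] := by
    rw [← ZMod.natCast_eq_natCast_iff, Nat.cast_mul, ZMod.natCast_zmod_val, ZMod.natCast_zmod_val,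
      ← ZMod.coe_unitOfCoprime j hj, ← Units.val_mul, mul_inv_rev, inv_mul_cancel_right]
  choose u hu using fun i ↦ exists_pow_eq_pow_mul_pow_of_modEq (ha (J * i)) (hexp i)
  refine ⟨∏ i, u i, ?_⟩
  have hreindex : kummerElement p ε ζ φ = ∏ i, a (J * i) ^ n (J * i) :=
    (Equiv.prod_comp (Equiv.mulLeft J) fun i ↦ a i ^ n i).symm
  rw [hreindex, ← Finset.prod_pow, ← Finset.prod_pow, ← Finset.prod_mul_distrib]
  refine Finset.prod_congr rfl fun i _ ↦ ?_
  rw [hconj, ← pow_mul]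
  exact hu i

theorem exists_natCast_eq_sub_one_mul {R : Type*} [CommRing R] [IsDomain R] {ζ : R}
    (hζ : IsPrimitiveRoot ζ p) (hp : p ≠ 2) : ∃ x, (p : R) = (ζ - 1) * ((ζ - 1) * x) := by
  obtain ⟨m, rfl⟩ : ∃ m, p = m + 2 + 1 :=
    ⟨p - 3, by have := (Fact.out : p.Prime).two_le; omega⟩
  have hprod := hζ.prod_one_sub_pow_eq_order
  rw [Finset.prod_range_succ', Finset.prod_range_succ'] at hprod
  refine ⟨(1 + ζ) * ∏ k ∈ Finset.range m, (1 - ζ ^ (k + 1 + 1 + 1)), ?_⟩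
  rw [Nat.cast_add_one, ← hprod]
  ring

variable [CharP (ResidueField T) p]

theorem residue_eq_one_of_pow_eq_one {ζ : T} (hζ : ζ ^ p = 1) : residue T ζ = 1 :=
  frobenius_inj _ p (by simp only [frobenius_def, ← map_pow, hζ, map_one])

theorem exists_algebraMap_kummerElement_ne [CharZero T] {ζ : T} (hζ : IsPrimitiveRoot ζ p)
    {f : T⟦X⟧} (hf : ∀ c : ResidueField T, Transcendental (ResidueField T)[X]
      (algebraMap _ (FractionRing (ResidueField T)⟦X⟧)
        ((PowerSeries.derivative T f).map (residue T)) /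
          algebraMap _ _ (1 + PowerSeries.C c * f.map (residue T)))) :
    ∃ ε : ℤ, ∀ γ h : FractionRing T⟦X⟧, IsSeparable F₀ γ →
      algebraMap _ (FractionRing T⟦X⟧) (kummerElement p ε (PowerSeries.C ζ) f) ≠ γ * h ^ p := by
  have hp_res : residue T p = 0 := by rw [map_natCast, CharP.cast_eq_zero]
  have hζ_res := residue_eq_one_of_pow_eq_one hζ.pow_eq_one
  suffices ∃ (ε : ℤ) (μ ν : T), μ ≠ 0 ∧ residue T ν = 0 ∧ (p : T) = μ * ν ∧
      ∀ i : (ZMod p)ˣ, ∃ g, ζ ^ (i : ZMod p).val + ε = μ * g ∧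
        residue T g = ((i : ZMod p).val : ResidueField T) by
    obtain ⟨ε, μ, ν, hμ, hν, hp, hg⟩ := this
    choose g hg hg_res using hg
    refine ⟨ε, fun γ h hγ ↦ ?_⟩
    have := algebraMap_prod_one_add_C_mul_pow_ne hμ ((residue_eq_zero_iff ν).mp hν) hp hg
      (n := fun i ↦ ((i⁻¹ : (ZMod p)ˣ) : ZMod p).val) (c := 1 + ε) (fun i ↦ by simp [hζ_res])
      (by
        simp only [map_mul, map_natCast, hg_res, ← Nat.cast_mul, sum_val_inv_mul_val]
        exact neg_ne_zero.mpr one_ne_zero) (hf _) hγ h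
    simpa only [kummerElement, map_add, map_pow, map_intCast] using this
  obtain rfl | hp2 := eq_or_ne p 2
  · refine ⟨0, 1, (2 : ℕ), one_ne_zero, hp_res, (one_mul _).symm,
      fun i ↦ ⟨_, (one_mul _).symm, ?_⟩⟩
    obtain rfl : i = 1 := Subsingleton.elim i 1
    simp [hζ_res, ZMod.val_one]
  · obtain ⟨x, hx⟩ := exists_natCast_eq_sub_one_mul hζ hp2
    refine ⟨-1, ζ - 1, (ζ - 1) * x, hζ.sub_one_ne_zero (Fact.out : p.Prime).one_lt,
      by simp [hζ_res], hx,
      fun i ↦ ⟨∑ k ∈ Finset.range (i : ZMod p).val, ζ ^ k, ?_, by simp [hζ_res]⟩⟩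
    rw [mul_geom_sum, Int.cast_neg, Int.cast_one, sub_eq_add_neg]

end KummerObstruction

/-- A Galois extension `L / F` of degree `n` is *rigid* over a subfield `F₀` of `F` if the only
elements of `L` that are separable over `F₀` are those of `F`: this is what keeps `L` from being
induced by an extension of `F₀`. -/
structure IsRigidGalois (F₀ F L : Type*) [Field F₀] [Field F] [Field L] [Algebra F L]
    [Algebra F₀ L] (n : ℕ) : Prop where
  isGalois : IsGalois F L
  finrank_eq : Module.finrank F L = n
  mem_range_of_isSeparable : ∀ e : L, IsSeparable F₀ e → e ∈ Set.range (algebraMap F L)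

section ArtinSchreierExtension

theorem coe_iterate_algEquivOfAlgEquiv {F₀ L : Type*} [Field F₀] [Field L] [Algebra F₀ L]
    (σ : Gal(L/F₀)) (n : ℕ) (x : separableClosure F₀ L) :
    ((separableClosure.algEquivOfAlgEquiv σ)^[n] x : L) = σ^[n] x :=
  Function.Semiconj.iterate_right (f := Subtype.val) (fun _ ↦ rfl) n x

theorem mem_range_algebraMap_of_apply_eq {F L : Type*} [Field F] [Field L] [Algebra F L]
    [FiniteDimensional F L] [IsGalois F L] (hL : (Module.finrank F L).Prime) {σ : Gal(L/F)}
    (hσ : σ ≠ 1) {x : L} (hx : σ x = x) : x ∈ Set.range (algebraMap F L) := by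
  have : Fact (Module.finrank F L).Prime := ⟨hL⟩
  have hgen : Subgroup.zpowers σ = ⊤ :=
    zpowers_eq_top_of_prime_card (IsGalois.card_aut_eq_finrank F L) hσ
  have hle : Subgroup.zpowers σ ≤ MulAction.stabilizer Gal(L/F) x := by
    rwa [Subgroup.zpowers_le, MulAction.mem_stabilizer_iff]
  exact (IsGalois.mem_range_algebraMap_iff_fixed x).mpr fun τ ↦
    MulAction.mem_stabilizer_iff.mp (hle (hgen ▸ Subgroup.mem_top τ))

theorem iterate_finrank_apply {F L : Type*} [Field F] [Field L] [Algebra F L]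
    [FiniteDimensional F L] [IsGalois F L] (σ : Gal(L/F)) (x : L) :
    σ^[Module.finrank F L] x = x := by
  rw [← AlgEquiv.coe_pow, ← IsGalois.card_aut_eq_finrank, pow_card_eq_one', AlgEquiv.one_apply]

variable {p : ℕ} [Fact p.Prime]

theorem exists_apply_eq_add_one_of_iterate_eq_zero {M : Type*} [Field M] (σ : M →+* M) (n : ℕ)
    {e : M} (he : σ e ≠ e) (hn : (fun x ↦ σ x - x)^[n] e = 0) : ∃ m, σ m = m + 1 := by
  induction n generalizing e with
  | zero => exact absurd (by simp [show e = 0 from hn]) he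
  | succ n ih =>
    have hc : σ e - e ≠ 0 := sub_ne_zero.mpr he
    by_cases h : σ (σ e - e) = σ e - e
    · exact ⟨e / (σ e - e), by rw [map_div₀, h]; field_simp; ring⟩
    · exact ih h hn

theorem exists_apply_eq_add_one {K M : Type*} [Field K] [Field M] [Algebra K M] [CharP K p]
    {σ : M →ₐ[K] M} {e : M} (hσ : σ^[p] e = e) (he : σ e ≠ e) : ∃ m, σ m = m + 1 := by
  have : CharP (Module.End K M) p :=
    charP_of_injective_algebraMap (algebraMap K (Module.End K M)).injective p
  have hp : ((σ.toLinearMap - 1) ^ p) e = 0 := by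
    rw [sub_pow_char_of_commute p (Commute.one_right _), one_pow, LinearMap.sub_apply,
      Module.End.pow_apply, sub_eq_zero]
    exact hσ
  exact exists_apply_eq_add_one_of_iterate_eq_zero (σ : M →+* M) p he
    ((Module.End.pow_apply _ p e).symm.trans hp)

variable {F L : Type*} [Field F] [Field L] [Algebra F L]

theorem exists_natCast_eq_of_pow_char_eq [CharP L p] {x : L} (hx : x ^ p = x) :
    ∃ n : ℕ, (n : L) = x := by
  have hbot : (⊥ : Subfield L) ≤ (ZMod.castHom (dvd_refl p) L).fieldRange := bot_le
  obtain ⟨n, rfl⟩ := hbot ((Subfield.mem_bot_iff_pow_eq_self L p).mpr hx)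
  exact ⟨n.val, by simp⟩

theorem exists_eq_add_natCast_of_pow_char_sub_eq [CharP L p] {y z : L}
    (h : z ^ p - z = y ^ p - y) : ∃ n : ℕ, z = y + n := by
  obtain ⟨n, hn⟩ := exists_natCast_eq_of_pow_char_eq (p := p) (x := z - y) (by
    rw [sub_pow_char]; linear_combination h)
  exact ⟨n, by rw [hn, add_sub_cancel]⟩

theorem pow_apply_eq_add_natCast_mul {σ : Gal(L/F)} {y c : L} (hσ : σ y = y + c) (hc : σ c = c)
    (m : ℕ) : (σ ^ m) y = y + m * c := by
  induction m with
  | zero => simp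
  | succ m ih =>
    rw [pow_succ', AlgEquiv.mul_apply, ih, map_add, map_mul, map_natCast, hσ, hc]
    push_cast
    ring

theorem exists_algEquiv_apply_eq_add_one [FiniteDimensional F L] [IsGalois F L] [CharP L p]
    {α : F} {y : L} (hy : y ^ p - y = algebraMap F L α) (hyF : y ∉ Set.range (algebraMap F L)) :
    ∃ σ : Gal(L/F), σ y = y + 1 := by
  obtain ⟨τ, hτ⟩ : ∃ τ : Gal(L/F), τ y ≠ y := by
    contrapose! hyF
    exact (IsGalois.mem_range_algebraMap_iff_fixed y).mpr hyF
  obtain ⟨n, hn⟩ := exists_eq_add_natCast_of_pow_char_sub_eq (p := p) (y := y) (z := τ y) (by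
    rw [← map_pow, ← map_sub, hy, AlgEquiv.commutes])
  have hn0 : (n : ZMod p) ≠ 0 := by
    intro h
    rw [ZMod.natCast_eq_zero_iff, ← CharP.cast_eq_zero_iff L p] at h
    exact hτ (by rw [hn, h, add_zero])
  refine ⟨τ ^ (n⁻¹ : ZMod p).val, ?_⟩
  rw [pow_apply_eq_add_natCast_mul hn (map_natCast τ n), ← Nat.cast_mul, ← Nat.cast_one (R := L),
    add_right_inj, CharP.natCast_eq_natCast L p, ← ZMod.natCast_eq_natCast_iff]
  simp [hn0]

theorem natDegree_X_pow_sub_X_sub_C {n : ℕ} (hn : 1 < n) (α : F) :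
    (X ^ n - X - C α).natDegree = n := by
  compute_degree!
  · simp [hn.ne, (zero_lt_one.trans hn).ne']
  · exact hn.le

theorem separable_X_pow_char_sub_X_sub_C {p : ℕ} [CharP F p] (α : F) :
    (X ^ p - X - C α).Separable := by
  refine ⟨0, -1, ?_⟩
  simp [derivative_X_pow]

theorem finrank_eq_of_apply_eq_add_one [FiniteDimensional F L] [IsGalois F L] [CharP L p]
    {α : F} {y : L} (hy : y ^ p - y = algebraMap F L α) (hgen : F⟮y⟯ = ⊤) {σ : Gal(L/F)}
    (hσ : σ y = y + 1) : Module.finrank F L = p := by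
  have hf : (X ^ p - X - C α).natDegree = p :=
    natDegree_X_pow_sub_X_sub_C (Fact.out : p.Prime).one_lt α
  refine Nat.le_antisymm ?_ (Nat.le_of_dvd Module.finrank_pos ?_)
  · calc Module.finrank F L = (minpoly F y).natDegree := by
          rw [← IntermediateField.finrank_top', ← hgen,
            IntermediateField.adjoin.finrank (Algebra.IsIntegral.isIntegral y)]
      _ ≤ (X ^ p - X - C α).natDegree := by
          refine natDegree_le_of_dvd (minpoly.dvd F y ?_) ?_
          · simp [hy]
          · exact ne_zero_of_natDegree_gt (hf ▸ (Fact.out : p.Prime).one_lt)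
      _ = p := hf
  · have horder := pow_apply_eq_add_natCast_mul hσ (map_one σ) (orderOf σ)
    rw [pow_orderOf_eq_one, AlgEquiv.one_apply, mul_one, left_eq_add, CharP.cast_eq_zero_iff L p]
      at horder
    exact horder.trans (IsGalois.card_aut_eq_finrank F L ▸ orderOf_dvd_natCard σ)

theorem adjoin_simple_eq_top_of_isSplittingField [CharP L p] {α : F}
    [IsSplittingField F L (X ^ p - X - C α)] {y : L} (hy : y ^ p - y = algebraMap F L α) :
    F⟮y⟯ = ⊤ := by
  refine IntermediateField.toSubalgebra_injective (top_le_iff.mp (?_ : ⊤ ≤ F⟮y⟯.toSubalgebra))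
  rw [← IsSplittingField.adjoin_rootSet L (X ^ p - X - C α)]
  refine Algebra.adjoin_le fun z hz ↦ ?_
  have hz : z ^ p - z = algebraMap F L α := by
    simpa [sub_eq_zero] using aeval_eq_zero_of_mem_rootSet hz
  obtain ⟨n, rfl⟩ := exists_eq_add_natCast_of_pow_char_sub_eq (hz.trans hy.symm)
  exact add_mem (IntermediateField.mem_adjoin_simple_self F y) (natCast_mem _ n)

section ArtinSchreierDescent

variable {F₀ : Type*} [Field F₀] [Algebra F₀ F] [Algebra F₀ L] [IsScalarTower F₀ F L]

theorem exists_isSeparable_apply_eq_add_one [CharP F₀ p] {σ : Gal(L/F₀)} {e : L}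
    (hσ : σ^[p] e = e) (he : IsSeparable F₀ e) (hσe : σ e ≠ e) :
    ∃ m : L, IsSeparable F₀ m ∧ σ m = m + 1 := by
  let τ : separableClosure F₀ L →ₐ[F₀] separableClosure F₀ L :=
    separableClosure.algEquivOfAlgEquiv σ
  obtain ⟨m, hm⟩ := exists_apply_eq_add_one (σ := τ) (e := ⟨e, mem_separableClosure_iff.mpr he⟩)
    (Subtype.ext ((coe_iterate_algEquivOfAlgEquiv σ p _).trans hσ))
    fun h ↦ hσe (congrArg Subtype.val h)
  exact ⟨m, mem_separableClosure_iff.mp m.2, congrArg Subtype.val hm⟩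

theorem mem_range_algebraMap_of_isSeparable_of_ne [CharP F₀ p] [FiniteDimensional F L]
    [IsGalois F L] (hL : Module.finrank F L = p) {α : F} {y : L}
    (hy : y ^ p - y = algebraMap F L α) {σ : Gal(L/F)} (hσ : σ y = y + 1)
    (hα : ∀ b h : F, IsSeparable F₀ b → α ≠ b + h - h ^ p) {e : L} (he : IsSeparable F₀ e) :
    e ∈ Set.range (algebraMap F L) := by
  have : CharP L p := charP_of_injective_algebraMap (algebraMap F₀ L).injective p
  have hσ1 : σ ≠ 1 := by
    rintro rfl
    simp at hσ
  have hfix {x : L} (hx : σ x = x) : x ∈ Set.range (algebraMap F L) :=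
    mem_range_algebraMap_of_apply_eq (hL ▸ Fact.out) hσ1 hx
  refine hfix (by_contra fun hσe ↦ ?_)
  obtain ⟨m, hm, hσm⟩ := exists_isSeparable_apply_eq_add_one
    (σ := σ.restrictScalars F₀) (hL ▸ iterate_finrank_apply σ e) he hσe
  change σ m = m + 1 at hσm
  obtain ⟨h, hh⟩ := hfix (show σ (m - y) = m - y by rw [map_sub, hσ, hσm]; ring)
  obtain ⟨b, hb⟩ := hfix (show σ (m ^ p - m) = m ^ p - m by
    rw [map_sub, map_pow, hσm, add_pow_char]
    ring)
  have hbsep : IsSeparable F₀ b := by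
    refine (isSeparable_map_iff (IsScalarTower.toAlgHom F₀ F L) (algebraMap F L).injective).mp ?_
    rw [IsScalarTower.coe_toAlgHom', hb, ← mem_separableClosure_iff]
    rw [← mem_separableClosure_iff] at hm
    exact sub_mem (pow_mem hm p) hm
  refine hα b h hbsep ((algebraMap F L).injective ?_)
  rw [map_sub, map_add, map_pow, hb, hh, ← hy, sub_pow_char]
  ring

end ArtinSchreierDescent

theorem exists_isRigidGalois_of_ne_add_sub_pow_char {F₀ : Type*} {F : Type u} [Field F₀] [Field F]
    [Algebra F₀ F] [CharP F₀ p] {α : F} (hα : ∀ b h : F, IsSeparable F₀ b → α ≠ b + h - h ^ p) :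
    ∃ (L : Type u) (_ : Field L) (_ : Algebra F L) (_ : Algebra F₀ L) (_ : IsScalarTower F₀ F L),
      IsRigidGalois F₀ F L p := by
  have : CharP F p := charP_of_injective_algebraMap (algebraMap F₀ F).injective p
  let f : F[X] := X ^ p - X - C α
  let L := f.SplittingField
  have : CharP L p := charP_of_injective_algebraMap (algebraMap F L).injective p
  have : IsGalois F L :=
    IsGalois.of_separable_splitting_field (separable_X_pow_char_sub_X_sub_C (p := p) α)
  have hf : f.natDegree = p := natDegree_X_pow_sub_X_sub_C (Fact.out : p.Prime).one_lt α
  obtain ⟨y, hy⟩ := (SplittingField.splits f).exists_eval_eq_zero (by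
    rw [degree_map]
    exact fun h ↦ (Fact.out : p.Prime).ne_zero (hf ▸ natDegree_eq_of_degree_eq_some h))
  replace hy : y ^ p - y = algebraMap F L α := by simpa [f, sub_eq_zero] using hy
  have hyF : y ∉ Set.range (algebraMap F L) := by
    rintro ⟨h, rfl⟩
    have h0 : IsSeparable F₀ (0 : F) := map_zero (algebraMap F₀ F) ▸ isSeparable_algebraMap 0
    have hneg : (-h) ^ p = -h ^ p := map_neg (frobenius F p) h
    refine hα 0 (-h) h0 ((algebraMap F L).injective ?_)
    rw [← hy, hneg]
    simp only [map_sub, map_add, map_neg, map_zero, map_pow]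
    ring
  obtain ⟨σ, hσ⟩ := exists_algEquiv_apply_eq_add_one hy hyF
  have hL : Module.finrank F L = p :=
    finrank_eq_of_apply_eq_add_one hy (adjoin_simple_eq_top_of_isSplittingField hy) hσ
  exact ⟨L, inferInstance, inferInstance, inferInstance, inferInstance, inferInstance, hL,
    fun e he ↦ mem_range_algebraMap_of_isSeparable_of_ne hL hy hσ hα he⟩

end ArtinSchreierExtension

section LagrangeResolvent

variable {M : Type*} [Field M]

/-- The Lagrange resolvent of `e` with respect to an endomorphism `σ` and a root of unity `ζ` of
order `n`. -/
def lagrangeResolvent (σ : M →+* M) (n : ℕ) (ζ e : M) : M :=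
  ∑ i ∈ Finset.range n, ζ ^ i * σ^[i] e

variable {σ : M →+* M} {n : ℕ} {ζ e : M}

theorem mul_apply_lagrangeResolvent (hζ : ζ ^ n = 1) (hσζ : σ ζ = ζ) (he : σ^[n] e = e) :
    ζ * σ (lagrangeResolvent σ n ζ e) = lagrangeResolvent σ n ζ e := by
  have hsucc := (Finset.sum_range_succ' (fun i ↦ ζ ^ i * σ^[i] e) n).symm.trans
    (Finset.sum_range_succ _ n)
  rw [hζ, he, pow_zero, Function.iterate_zero_apply, add_left_inj] at hsucc
  rw [lagrangeResolvent, map_sum, Finset.mul_sum, ← hsucc]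
  refine Finset.sum_congr rfl fun i _ ↦ ?_
  rw [map_mul, map_pow, hσζ, Function.iterate_succ_apply', pow_succ']
  ring

theorem sum_lagrangeResolvent (hζ : IsPrimitiveRoot ζ n) :
    ∑ k ∈ Finset.range n, lagrangeResolvent σ n (ζ ^ k) e = n * e := by
  simp only [lagrangeResolvent]
  rw [Finset.sum_comm]
  cases n with
  | zero => simp
  | succ n =>
    rw [Finset.sum_range_succ', Finset.sum_eq_zero fun i hi ↦ ?_]
    · simp
    · have hne : ζ ^ (i + 1) ≠ 1 :=
        hζ.pow_ne_one_of_pos_of_lt i.succ_ne_zero (by simpa using hi)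
      have hgeom : ∑ k ∈ Finset.range (n + 1), (ζ ^ (i + 1)) ^ k = 0 := by
        refine (mul_eq_zero.mp ((mul_neg_geom_sum _ _).trans ?_)).resolve_left
          (sub_ne_zero.mpr hne.symm)
        rw [← pow_mul, mul_comm, pow_mul, hζ.pow_eq_one, one_pow, sub_self]
      rw [← Finset.sum_mul]
      simp only [← pow_mul, mul_comm] at hgeom ⊢
      rw [hgeom, mul_zero]

theorem exists_apply_eq_mul (hn : n.Prime) (hζ : IsPrimitiveRoot ζ n) (hσζ : σ ζ = ζ)
    (hσ : σ^[n] e = e) (he : σ e ≠ e) : ∃ m ≠ 0, σ m = ζ * m := by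
  obtain ⟨k, hkn, hk0, hr⟩ : ∃ k < n, k ≠ 0 ∧ lagrangeResolvent σ n (ζ ^ k) e ≠ 0 := by
    by_contra! hzero
    have hsum : lagrangeResolvent σ n 1 e = n * e := by
      rw [← sum_lagrangeResolvent hζ, Finset.sum_eq_single_of_mem 0 (by simpa using hn.pos)
        fun k hk hk0 ↦ hzero k (Finset.mem_range.mp hk) hk0, pow_zero]
    have hfix := mul_apply_lagrangeResolvent (one_pow n) (map_one σ) hσ
    have : NeZero n := ⟨hn.ne_zero⟩
    rw [one_mul, hsum, map_mul, map_natCast] at hfix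
    exact he (mul_left_cancel₀ (hζ.neZero').out hfix)
  set r := lagrangeResolvent σ n (ζ ^ k) e
  have hσr : ζ ^ k * σ r = r := mul_apply_lagrangeResolvent
    (by rw [← pow_mul, mul_comm, pow_mul, hζ.pow_eq_one, one_pow]) (by rw [map_pow, hσζ]) hσ
  obtain ⟨l, -, hl⟩ := Nat.exists_mul_mod_eq_one_of_coprime
    (Nat.coprime_of_lt_prime hk0 hkn hn).symm hn.one_lt
  have hζkl : (ζ ^ k) ^ l = ζ := by
    rw [← pow_mul, pow_eq_pow_mod _ hζ.pow_eq_one, hl, pow_one]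
  refine ⟨r⁻¹ ^ l, pow_ne_zero _ (inv_ne_zero hr), ?_⟩
  have hσr' : σ r⁻¹ = ζ ^ k * r⁻¹ := by
    rw [map_inv₀]
    nth_rw 2 [← hσr]
    have := hζ.ne_zero hn.ne_zero
    field_simp
  rw [map_pow, hσr', mul_pow, hζkl]

theorem exists_eq_pow_mul_of_pow_eq [NeZero n] {a b : M} (hζ : IsPrimitiveRoot ζ n) (hb : b ≠ 0)
    (h : a ^ n = b ^ n) : ∃ i, a = ζ ^ i * b := by
  obtain ⟨i, -, hi⟩ := hζ.eq_pow_of_pow_eq_one (ξ := a / b) (by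
    rw [div_pow, h, div_self (pow_ne_zero n hb)])
  exact ⟨i, by rw [hi, div_mul_cancel₀ _ hb]⟩

end LagrangeResolvent

section KummerDescent

variable {p : ℕ} {F₀ F L : Type*} [Field F₀] [Field F] [Field L] [Algebra F₀ F]
  [Algebra F L] [Algebra F₀ L] [IsScalarTower F₀ F L]

theorem isSeparable_of_isPrimitiveRoot {ζ : F} [NeZero p] (hζ : IsPrimitiveRoot ζ p) :
    IsSeparable F₀ ζ := by
  have hp₀ : (p : F₀) ≠ 0 := fun h ↦ (hζ.neZero').out (by
    rw [← map_natCast (algebraMap F₀ F), h, map_zero])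
  exact (X_pow_sub_one_separable_iff.mpr hp₀).of_dvd
    (minpoly.dvd F₀ ζ (by simp [hζ.pow_eq_one]))

theorem exists_isSeparable_apply_eq_mul (hp : p.Prime) {σ : Gal(L/F₀)} {ζ e : L}
    (hζ : IsPrimitiveRoot ζ p) (hσζ : σ ζ = ζ) (hσ : σ^[p] e = e) (he : IsSeparable F₀ e)
    (hσe : σ e ≠ e) : ∃ m : L, m ≠ 0 ∧ IsSeparable F₀ m ∧ σ m = ζ * m := by
  have : NeZero p := ⟨hp.ne_zero⟩
  let τ : separableClosure F₀ L →+* separableClosure F₀ L :=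
    (separableClosure.algEquivOfAlgEquiv σ : _ →+* _)
  let ζ' : separableClosure F₀ L :=
    ⟨ζ, mem_separableClosure_iff.mpr (isSeparable_of_isPrimitiveRoot hζ)⟩
  have hζ' : IsPrimitiveRoot ζ' p := .of_map_of_injective (f := (separableClosure F₀ L).val) hζ
    (separableClosure F₀ L).val.injective
  obtain ⟨m, hm0, hm⟩ := exists_apply_eq_mul (σ := τ)
    (e := ⟨e, mem_separableClosure_iff.mpr he⟩) hp hζ' (Subtype.ext hσζ)
    (Subtype.ext ((coe_iterate_algEquivOfAlgEquiv σ p _).trans hσ))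
    fun h ↦ hσe (congrArg Subtype.val h)
  exact ⟨m, fun h ↦ hm0 (Subtype.ext h), mem_separableClosure_iff.mp m.2, congrArg Subtype.val hm⟩

theorem mem_range_algebraMap_of_isSeparable_of_pow_eq (hp : p.Prime) [FiniteDimensional F L]
    [IsGalois F L] (hL : Module.finrank F L = p) {ζ z : F} (hζ : IsPrimitiveRoot ζ p) {y : L}
    (hy : y ^ p = algebraMap F L z) (hz : ∀ γ h : F, IsSeparable F₀ γ → z ≠ γ * h ^ p) {e : L}
    (he : IsSeparable F₀ e) : e ∈ Set.range (algebraMap F L) := by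
  refine (IsGalois.mem_range_algebraMap_iff_fixed e).mpr fun σ ↦ by_contra fun hσe ↦ ?_
  have hσ1 : σ ≠ 1 := by
    rintro rfl
    exact hσe rfl
  have hfix {x : L} (hx : σ x = x) : x ∈ Set.range (algebraMap F L) :=
    mem_range_algebraMap_of_apply_eq (hL ▸ hp) hσ1 hx
  have hζL : IsPrimitiveRoot (algebraMap F L ζ) p :=
    hζ.map_of_injective (algebraMap F L).injective
  obtain ⟨m, hm0, hm, hσm⟩ := exists_isSeparable_apply_eq_mul hp
    (σ := σ.restrictScalars F₀) hζL (σ.commutes ζ) (hL ▸ iterate_finrank_apply σ e) he hσe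
  change σ m = algebraMap F L ζ * m at hσm
  have hy0 : y ≠ 0 := by
    rintro rfl
    have hz0 : z = 0 := (map_eq_zero (algebraMap F L)).mp (hy ▸ zero_pow hp.ne_zero)
    refine hz 0 0 (map_zero (algebraMap F₀ F) ▸ isSeparable_algebraMap 0) ?_
    rw [hz0, zero_mul]
  have : NeZero p := ⟨hp.ne_zero⟩
  obtain ⟨i, hσy⟩ := exists_eq_pow_mul_of_pow_eq hζL hy0
    (show σ y ^ p = y ^ p by rw [← map_pow, hy, σ.commutes])
  have hσmi : σ (m ^ i) = algebraMap F L ζ ^ i * m ^ i := by rw [map_pow, hσm, mul_pow]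
  obtain ⟨h, hh⟩ := hfix (show σ (y / m ^ i) = y / m ^ i by
    rw [map_div₀, hσy, hσmi]
    have := hζL.ne_zero hp.ne_zero
    field_simp)
  obtain ⟨γ, hγ⟩ := hfix (show σ ((m ^ i) ^ p) = (m ^ i) ^ p by
    rw [map_pow, hσmi, mul_pow, pow_right_comm, hζL.pow_eq_one, one_pow, one_mul])
  have hγsep : IsSeparable F₀ γ := by
    refine (isSeparable_map_iff (IsScalarTower.toAlgHom F₀ F L) (algebraMap F L).injective).mp ?_
    rw [IsScalarTower.coe_toAlgHom', hγ, ← mem_separableClosure_iff]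
    rw [← mem_separableClosure_iff] at hm
    exact pow_mem (pow_mem hm i) p
  refine hz γ h hγsep ((algebraMap F L).injective ?_)
  rw [map_mul, map_pow, hγ, hh, ← hy, ← mul_pow, mul_div_cancel₀ _ (pow_ne_zero i hm0)]

end KummerDescent

section CentralExtension

theorem exists_normal_index_eq_of_le_center {G : Type*} [Group G] [Finite G] {N : Subgroup G}
    (hN : N ≤ Subgroup.center G) (hcop : (Nat.card N).Coprime N.index) :
    ∃ H : Subgroup G, H.Normal ∧ H.index = Nat.card N ∧ N ⊔ H = ⊤ := by
  have : N.Normal :=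
    ⟨fun n hn g ↦ by rwa [Subgroup.mem_center_iff.mp (hN hn), mul_inv_cancel_right]⟩
  obtain ⟨H, hH⟩ := Subgroup.exists_right_complement'_of_coprime hcop
  refine ⟨H, Subgroup.normalizer_eq_top_iff.mp (top_le_iff.mp ?_), hH.index_eq_card, hH.sup_eq_top⟩
  rw [← hH.sup_eq_top, sup_le_iff]
  exact ⟨hN.trans (Subgroup.center_le_normalizer _), Subgroup.le_normalizer⟩

variable {F F' L : Type*} [Field F] [Field F'] [Field L] [Algebra F F'] [Algebra F' L]
  [Algebra F L] [IsScalarTower F F' L]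

theorem restrictNormalHom_eq_one_iff [Normal F F'] {σ : Gal(L/F)} :
    AlgEquiv.restrictNormalHom F' σ = 1 ↔ ∀ x, σ (algebraMap F' L x) = algebraMap F' L x := by
  rw [AlgEquiv.ext_iff]
  refine forall_congr' fun x ↦ ?_
  rw [← (algebraMap F' L).injective.eq_iff]
  exact Eq.congr_left (AlgEquiv.restrictNormal_commutes σ F' x)

variable [FiniteDimensional F L]

theorem isGalois_of_forall_exists_lift [IsGalois F F'] [IsGalois F' L]
    (hlift : ∀ τ : Gal(F'/F), ∃ τ' : Gal(L/F), ∀ x,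
      τ' (algebraMap F' L x) = algebraMap F' L (τ x)) : IsGalois F L := by
  refine IsGalois.of_fixedField_eq_bot F L (eq_bot_iff.mpr fun x hx ↦ ?_)
  have hfix (τ : Gal(L/F)) : τ x = x := hx ⟨τ, Subgroup.mem_top τ⟩
  have : FiniteDimensional F' L := FiniteDimensional.right F F' L
  have : FiniteDimensional F F' := FiniteDimensional.left F F' L
  obtain ⟨x, rfl⟩ := (IsGalois.mem_range_algebraMap_iff_fixed (F := F') x).mpr fun σ ↦
    hfix (σ.restrictScalars F)
  obtain ⟨x, rfl⟩ := (IsGalois.mem_range_algebraMap_iff_fixed (F := F) x).mpr fun τ ↦ by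
    obtain ⟨τ', hτ'⟩ := hlift τ
    exact (algebraMap F' L).injective ((hτ' x).symm.trans (hfix τ'))
  exact ⟨x, IsScalarTower.algebraMap_apply F F' L x⟩

theorem exists_isRigidGalois_intermediateField {F₀ : Type*} [Field F₀] [Algebra F₀ F]
    [Algebra F₀ L] [IsScalarTower F₀ F L] [IsGalois F F'] [IsGalois F L]
    (hcop : (Module.finrank F' L).Coprime (Module.finrank F F'))
    (hcomm : ∀ σ τ : Gal(L/F), (∀ x, σ (algebraMap F' L x) = algebraMap F' L x) → σ * τ = τ * σ)
    (hsep : ∀ e : L, IsSeparable F₀ e → e ∈ Set.range (algebraMap F' L)) :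
    ∃ E : IntermediateField F L, IsRigidGalois F₀ F E (Module.finrank F' L) := by
  have : FiniteDimensional F F' := FiniteDimensional.left F F' L
  let res : Gal(L/F) →* Gal(F'/F) := AlgEquiv.restrictNormalHom F'
  have hcenter : res.ker ≤ Subgroup.center Gal(L/F) := fun σ hσ ↦
    Subgroup.mem_center_iff.mpr fun τ ↦ (hcomm σ τ (restrictNormalHom_eq_one_iff.mp hσ)).symm
  have hindex : res.ker.index = Module.finrank F F' := by
    rw [Subgroup.index_ker, MonoidHom.range_eq_top_of_surjective res
      (AlgEquiv.restrictNormalHom_surjective L), Subgroup.card_top, IsGalois.card_aut_eq_finrank]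
  have hcard : Nat.card res.ker = Module.finrank F' L := by
    have hmul := res.ker.card_mul_index
    rw [hindex, IsGalois.card_aut_eq_finrank, ← Module.finrank_mul_finrank F F' L, mul_comm] at hmul
    exact mul_left_cancel₀ Module.finrank_pos.ne' hmul
  obtain ⟨H, hH, hHindex, hsup⟩ :=
    exists_normal_index_eq_of_le_center hcenter (by rwa [hcard, hindex])
  refine ⟨IntermediateField.fixedField H, inferInstance, ?_, fun e he ↦ ?_⟩
  · rw [IntermediateField.finrank_eq_fixingSubgroup_index,
      IntermediateField.fixingSubgroup_fixedField, hHindex, hcard]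
  · obtain ⟨x, hx⟩ := hsep e <|
      he.map ((IntermediateField.val _).restrictScalars F₀) Subtype.val_injective
    have hle : res.ker ⊔ H ≤ MulAction.stabilizer Gal(L/F) (e : L) :=
      sup_le (fun σ hσ ↦ by
        rw [← hx]
        exact restrictNormalHom_eq_one_iff.mp hσ x) fun τ hτ ↦ e.2 ⟨τ, hτ⟩
    obtain ⟨a, ha⟩ := (IsGalois.mem_range_algebraMap_iff_fixed (e : L)).mpr fun τ ↦
      hle (hsup ▸ Subgroup.mem_top τ)
    exact ⟨a, Subtype.ext ha⟩

end CentralExtension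

section KummerExtension

theorem root_X_pow_sub_C_pow_eq {R : Type*} [CommRing R] (n : ℕ) (z : R) :
    AdjoinRoot.root (X ^ n - C z) ^ n = algebraMap R (AdjoinRoot (X ^ n - C z)) z := by
  have h := AdjoinRoot.eval₂_root (X ^ n - C z)
  rwa [eval₂_sub, eval₂_X_pow, eval₂_C, sub_eq_zero] at h

variable {F F' : Type*} [Field F] [Field F'] [Algebra F F'] {p : ℕ} {z u : F'} {τ : Gal(F'/F)}
  {j : ℕ}

theorem finiteDimensional_adjoinRoot_X_pow_sub_C [FiniteDimensional F F'] (hp : 0 < p) (z : F') :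
    FiniteDimensional F (AdjoinRoot (X ^ p - C z)) :=
  have : Module.Finite F' (AdjoinRoot (X ^ p - C z)) :=
    (monic_X_pow_sub_C z hp.ne').finite_adjoinRoot
  Module.Finite.trans F' _

theorem exists_lift_adjoinRoot_X_pow_sub_C [FiniteDimensional F F'] (hp : 0 < p)
    [Fact (Irreducible (X ^ p - C z))] (hτ : τ z = z ^ j * u ^ p) :
    ∃ τ' : Gal(AdjoinRoot (X ^ p - C z)/F), ∀ x,
      τ' (algebraMap F' _ x) = algebraMap F' _ (τ x) := by
  let L := AdjoinRoot (X ^ p - C z)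
  have : FiniteDimensional F L := finiteDimensional_adjoinRoot_X_pow_sub_C hp z
  let y : L := AdjoinRoot.root _
  have hroot : eval₂ ((IsScalarTower.toAlgHom F F' L).comp τ : F' →ₐ[F] L)
      (y ^ j * algebraMap F' L u) (X ^ p - C z) = 0 := by
    rw [eval₂_sub, eval₂_X_pow, eval₂_C, mul_pow, pow_right_comm, root_X_pow_sub_C_pow_eq]
    change algebraMap F' L z ^ j * _ - algebraMap F' L (τ z) = 0
    rw [hτ, map_mul, map_pow, map_pow, sub_self]
  let f : L →ₐ[F] L := AdjoinRoot.liftAlgHom _ _ _ hroot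
  exact ⟨.ofBijective f (Algebra.IsAlgebraic.algHom_bijective f),
    AdjoinRoot.liftAlgHom_of _ _ _ hroot⟩

theorem apply_apply_comm_of_pow_eq {L : Type*} [Field L] [Algebra F' L] [Algebra F L]
    (hp : 0 < p) {ζ : F'} (hζ : IsPrimitiveRoot ζ p) (hz : z ≠ 0)
    (hτζ : τ ζ = ζ ^ j) (hτz : τ z = z ^ j * u ^ p) {σ τ' : Gal(L/F)}
    (hσ : ∀ x, σ (algebraMap F' L x) = algebraMap F' L x)
    (hτ' : ∀ x, τ' (algebraMap F' L x) = algebraMap F' L (τ x)) {y : L}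
    (hy : y ^ p = algebraMap F' L z) : σ (τ' y) = τ' (σ y) := by
  have : NeZero p := ⟨hp.ne'⟩
  have hζL : IsPrimitiveRoot (algebraMap F' L ζ) p :=
    hζ.map_of_injective (algebraMap F' L).injective
  have hy0 : y ≠ 0 := by
    rintro rfl
    rw [zero_pow (NeZero.ne p), eq_comm, map_eq_zero] at hy
    exact hz hy
  have hu0 : u ≠ 0 := by
    rintro rfl
    rw [zero_pow (NeZero.ne p), mul_zero, map_eq_zero] at hτz
    exact hz hτz
  obtain ⟨i, hσy⟩ := exists_eq_pow_mul_of_pow_eq (a := σ y) hζL hy0 (by rw [← map_pow, hy, hσ])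
  obtain ⟨k, hτy⟩ := exists_eq_pow_mul_of_pow_eq (a := τ' y) (b := y ^ j * algebraMap F' L u) hζL
    (mul_ne_zero (pow_ne_zero j hy0) ((_root_.map_ne_zero _).mpr hu0))
    (by rw [← map_pow, hy, hτ', hτz, mul_pow, pow_right_comm, hy, map_mul, map_pow, map_pow])
  calc σ (τ' y) =
        algebraMap F' L ζ ^ k * ((algebraMap F' L ζ ^ i * y) ^ j * algebraMap F' L u) := by
        rw [hτy, map_mul, map_mul, map_pow, map_pow, hσ, hσ, hσy]
    _ = (algebraMap F' L ζ ^ j) ^ i *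
        (algebraMap F' L ζ ^ k * (y ^ j * algebraMap F' L u)) := by ring
    _ = τ' (σ y) := by rw [hσy, map_mul, map_pow, hτ', hτζ, map_pow, hτy]

theorem commute_of_apply_eq_pow_mul_pow [Fact (Irreducible (X ^ p - C z))] (hp : 0 < p) {ζ : F'}
    (hζ : IsPrimitiveRoot ζ p) (hz : z ≠ 0) (hτζ : τ ζ = ζ ^ j) (hτz : τ z = z ^ j * u ^ p)
    {σ τ' : Gal(AdjoinRoot (X ^ p - C z)/F)}
    (hσ : ∀ x, σ (algebraMap F' _ x) = algebraMap F' _ x)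
    (hτ' : ∀ x, τ' (algebraMap F' _ x) = algebraMap F' _ (τ x)) : σ * τ' = τ' * σ := by
  let L := AdjoinRoot (X ^ p - C z)
  have hcomm : (AlgEquiv.toRingEquiv (σ * τ') : L →+* L) = AlgEquiv.toRingEquiv (τ' * σ) := by
    refine AdjoinRoot.ringHom_ext (RingHom.ext fun x ↦ ?_)
      (apply_apply_comm_of_pow_eq hp hζ hz hτζ hτz hσ hτ' (root_X_pow_sub_C_pow_eq p z))
    change σ (τ' (algebraMap F' _ x)) = τ' (σ (algebraMap F' _ x))
    rw [hσ, hτ', hσ]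
  exact AlgEquiv.ext fun x ↦ DFunLike.congr_fun hcomm x

end KummerExtension

section CyclotomicKummer

theorem coprime_finrank_of_isCyclotomicExtension {p : ℕ} (hp : p.Prime) (F F' : Type*) [Field F]
    [Field F'] [Algebra F F'] [IsCyclotomicExtension {p} F F'] {ζ : F'}
    (hζ : IsPrimitiveRoot ζ p) : p.Coprime (Module.finrank F F') := by
  have : NeZero p := ⟨hp.ne_zero⟩
  have := IsCyclotomicExtension.isGalois {p} F F'
  have := IsCyclotomicExtension.finiteDimensional {p} F F'
  have hdvd : Module.finrank F F' ∣ p - 1 := by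
    rw [← IsGalois.card_aut_eq_finrank, ← Nat.totient_prime hp, ← ZMod.card_units_eq_totient,
      ← Nat.card_eq_fintype_card]
    exact Subgroup.card_dvd_of_injective (hζ.autToPow F) (hζ.autToPow_injective F)
  have hlt := Nat.sub_lt hp.pos one_pos
  exact (hp.coprime_iff_not_dvd).mpr fun h ↦
    Nat.not_dvd_of_pos_of_lt (Nat.sub_pos_of_lt hp.one_lt) hlt (h.trans hdvd)

variable {F F' : Type u} [Field F] [Field F'] [Algebra F F'] {p : ℕ}
  {F₀ : Type*} [Field F₀] [Algebra F₀ F] [Algebra F₀ F'] [IsScalarTower F₀ F F']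

theorem exists_isRigidGalois_of_ne_mul_pow [IsCyclotomicExtension {p} F F'] (hp : p.Prime)
    {ζ z : F'} (hζ : IsPrimitiveRoot ζ p) (hz : ∀ γ h : F', IsSeparable F₀ γ → z ≠ γ * h ^ p)
    (hconj : ∀ (τ : Gal(F'/F)) (j : ℕ), j.Coprime p → τ ζ = ζ ^ j → ∃ u, τ z = z ^ j * u ^ p) :
    ∃ (L : Type u) (_ : Field L) (_ : Algebra F L) (_ : Algebra F₀ L) (_ : IsScalarTower F₀ F L),
      IsRigidGalois F₀ F L p := by
  have : NeZero p := ⟨hp.ne_zero⟩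
  have := IsCyclotomicExtension.isGalois {p} F F'
  have := IsCyclotomicExtension.finiteDimensional {p} F F'
  have hz0 : z ≠ 0 := by
    simpa using hz 0 0 (map_zero (algebraMap F₀ F') ▸ isSeparable_algebraMap 0)
  have hirr : Irreducible (X ^ p - C z) := X_pow_sub_C_irreducible_of_prime hp fun h hh ↦
    hz 1 h (map_one (algebraMap F₀ F') ▸ isSeparable_algebraMap 1) (by rw [hh, one_mul])
  have : Fact (Irreducible (X ^ p - C z)) := ⟨hirr⟩
  let L := AdjoinRoot (X ^ p - C z)
  have hroots : (primitiveRoots p F').Nonempty := ⟨ζ, (mem_primitiveRoots hp.pos).mpr hζ⟩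
  have : IsSplittingField F' L (X ^ p - C z) := isSplittingField_AdjoinRoot_X_pow_sub_C hroots hirr
  have : FiniteDimensional F L := finiteDimensional_adjoinRoot_X_pow_sub_C hp.pos z
  have : FiniteDimensional F' L := .right F F' L
  have : IsGalois F' L := isGalois_of_isSplittingField_X_pow_sub_C hroots hirr L
  have hL : Module.finrank F' L = p := finrank_of_isSplittingField_X_pow_sub_C hroots hirr L
  have hact (τ : Gal(F'/F)) : ∃ (j : ℕ) (u : F'), τ ζ = ζ ^ j ∧ τ z = z ^ j * u ^ p := by
    have hj := hζ.autToPow_spec F τ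
    obtain ⟨u, hu⟩ := hconj τ _ (ZMod.val_coe_unit_coprime _) hj.symm
    exact ⟨_, u, hj.symm, hu⟩
  have : IsGalois F L := isGalois_of_forall_exists_lift fun τ ↦ by
    obtain ⟨j, u, -, hτz⟩ := hact τ
    exact exists_lift_adjoinRoot_X_pow_sub_C hp.pos hτz
  obtain ⟨E, hE⟩ := exists_isRigidGalois_intermediateField (F₀ := F₀)
    (hL ▸ coprime_finrank_of_isCyclotomicExtension hp F F' hζ)
    (fun σ τ' hσ ↦ by
      obtain ⟨j, u, hτζ, hτz⟩ := hact (τ'.restrictNormal F')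
      exact commute_of_apply_eq_pow_mul_pow hp.pos hζ hz0 hτζ hτz hσ
        fun x ↦ (τ'.restrictNormal_commutes F' x).symm)
    fun e he ↦ mem_range_algebraMap_of_isSeparable_of_pow_eq hp hL hζ
      (root_X_pow_sub_C_pow_eq p z) hz he
  rw [hL] at hE
  exact ⟨E, E.toField, E.algebra', E.algebra', inferInstance, hE⟩

end CyclotomicKummer

section MixedCharacteristic

theorem exists_isDiscreteValuationRing_isPrimitiveRoot (T : Type u) [CommRing T] [IsDomain T]
    [IsDiscreteValuationRing T] (n : ℕ) [NeZero (n : T)] :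
    ∃ (T' : Type u) (_ : CommRing T') (_ : IsDomain T') (_ : IsDiscreteValuationRing T')
      (f : T →+* T') (ζ : T'), Function.Injective f ∧ IsLocalHom f ∧ IsPrimitiveRoot ζ n := by
  have : NeZero n := .of_neZero_natCast T
  let K := FractionRing T
  have : NeZero (n : K) := NeZero.nat_of_injective (IsFractionRing.injective T K)
  let N := CyclotomicField n K
  have : IsGalois K N := IsCyclotomicExtension.isGalois {n} K N
  have : FiniteDimensional K N := IsCyclotomicExtension.finiteDimensional {n} K N
  let A := integralClosure T N
  have hded : IsDedekindDomain A := integralClosure.isDedekindDomain T K N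
  have hTA : Function.Injective (algebraMap T A) := FaithfulSMul.algebraMap_injective T A
  obtain ⟨M, hM⟩ := Ideal.exists_maximal A
  have hcomap : M.comap (algebraMap T A) = maximalIdeal T :=
    eq_maximalIdeal (Ideal.isMaximal_comap_of_isIntegral_of_isMaximal M)
  have hM0 : M ≠ ⊥ := by
    rintro rfl
    exact IsDiscreteValuationRing.not_a_field T
      (hcomap ▸ Ideal.comap_bot_of_injective _ hTA)
  let T' := Localization.AtPrime M
  have hAT : Function.Injective (algebraMap A T') :=
    IsLocalization.injective T' M.primeCompl_le_nonZeroDivisors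
  have : IsDomain T' := IsLocalization.isDomain_localization M.primeCompl_le_nonZeroDivisors
  have hlocal : IsLocalHom ((algebraMap A T').comp (algebraMap T A)) := by
    refine ⟨fun a ha ↦ by_contra fun hna ↦ ?_⟩
    have haM : algebraMap T A a ∈ M := by
      rwa [← Ideal.mem_comap, hcomap, mem_maximalIdeal]
    exact (IsLocalization.AtPrime.to_map_mem_maximal_iff T' M _).mpr haM ha
  have hζ := IsCyclotomicExtension.zeta_spec n K N
  let ζ : A := ⟨_, IsIntegral.of_pow (NeZero.pos n) (hζ.pow_eq_one ▸ isIntegral_one)⟩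
  have hζA : IsPrimitiveRoot ζ n := IsPrimitiveRoot.coe_submonoidClass_iff.mp hζ
  exact ⟨T', inferInstance, inferInstance,
    IsLocalization.AtPrime.isDiscreteValuationRing_of_dedekind_domain A hM0 T', _,
    algebraMap A T' ζ, hAT.comp hTA, hlocal, hζA.map_of_injective hAT⟩

variable {R S : Type*} [CommRing R] [CommRing S] [IsDomain S] {f : R →+* S}

/-- The embedding `Frac(R⟦X⟧) → Frac(S⟦X⟧)` given by an injection `R → S` on coefficients. -/
noncomputable def fractionRingPowerSeriesMap (hf : Function.Injective f) :
    FractionRing R⟦X⟧ →+* FractionRing S⟦X⟧ :=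
  IsFractionRing.map (PowerSeries.map_injective f hf)

theorem fractionRingPowerSeriesMap_algebraMap (hf : Function.Injective f) (g : R⟦X⟧) :
    fractionRingPowerSeriesMap hf (algebraMap _ _ g) = algebraMap _ _ (g.map f) := by
  rw [fractionRingPowerSeriesMap, IsFractionRing.map, IsLocalization.map_eq]

theorem isSeparable_of_isAlgebraic_of_algebraMap_eq [IsDomain R] [CharZero S] {F₀ F₀' : Type*}
    [Field F₀] [Algebra R[X] F₀] [IsFractionRing R[X] F₀] [Algebra F₀ (FractionRing R⟦X⟧)]
    [IsScalarTower R[X] F₀ (FractionRing R⟦X⟧)] [Field F₀'] [Algebra S[X] F₀']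
    [IsFractionRing S[X] F₀'] [Algebra F₀' (FractionRing S⟦X⟧)]
    [IsScalarTower S[X] F₀' (FractionRing S⟦X⟧)] [Algebra F₀ (FractionRing S⟦X⟧)]
    (hf : Function.Injective f) (h : ∀ x, algebraMap F₀ (FractionRing S⟦X⟧) x =
      fractionRingPowerSeriesMap hf (algebraMap F₀ _ x))
    {γ : FractionRing S⟦X⟧} (hγ : IsAlgebraic F₀ γ) : IsSeparable F₀' γ := by
  have : CharZero F₀' := charZero_of_injective_algebraMap (IsFractionRing.injective S[X] F₀')
  have hcomm : (algebraMap S[X] (FractionRing S⟦X⟧)).comp (mapRingHom f) =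
      (algebraMap F₀ _).comp (algebraMap R[X] F₀) := by
    refine RingHom.ext fun q ↦ ?_
    change algebraMap S⟦X⟧ _ (q.map f : S[X]) = algebraMap F₀ _ (algebraMap R[X] F₀ q)
    rw [h, ← IsScalarTower.algebraMap_apply R[X] F₀, Polynomial.polynomial_map_coe]
    exact (fractionRingPowerSeriesMap_algebraMap hf _).symm
  let : Algebra R[X] (FractionRing S⟦X⟧) := ((algebraMap F₀ _).comp (algebraMap R[X] F₀)).toAlgebra
  have : IsScalarTower R[X] F₀ (FractionRing S⟦X⟧) := .of_algebraMap_eq' rfl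
  have hγR : IsAlgebraic R[X] γ := (IsFractionRing.isAlgebraic_iff R[X] F₀ _).mpr hγ
  have hγS : IsAlgebraic S[X] γ := hγR.ringHom_of_comp_eq (mapRingHom f) (RingHom.id _)
    (Polynomial.map_injective f hf) hcomm
  exact (minpoly.irreducible
    ((IsFractionRing.isAlgebraic_iff S[X] F₀' _).mp hγS).isIntegral).separable

end MixedCharacteristic

section RigidExtensions

theorem isCyclotomicExtension_adjoin_singleton {F Ω : Type*} [Field F] [Field Ω] [Algebra F Ω]
    {n : ℕ} [NeZero n] {ζ : Ω} (hζ : IsPrimitiveRoot ζ n) : IsCyclotomicExtension {n} F F⟮ζ⟯ := by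
  have hint : IsIntegral F ζ := .of_pow (NeZero.pos n) (hζ.pow_eq_one ▸ isIntegral_one)
  change IsCyclotomicExtension {n} F F⟮ζ⟯.toSubalgebra
  rw [IntermediateField.adjoin_simple_toSubalgebra_of_isAlgebraic hint.isAlgebraic]
  exact hζ.adjoin_isCyclotomicExtension F

theorem exists_isRigidGalois_of_kummerElement_ne {F₀ : Type*} {F Ω : Type u} [Field F₀] [Field F]
    [Field Ω] [Algebra F₀ F] [Algebra F Ω] [Algebra F₀ Ω] [IsScalarTower F₀ F Ω] {p : ℕ}
    [Fact p.Prime] {ε : ℤ} {ζ : Ω} (hζ : IsPrimitiveRoot ζ p) {φ : F}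
    (hne : ∀ γ h : Ω, IsSeparable F₀ γ → kummerElement p ε ζ (algebraMap F Ω φ) ≠ γ * h ^ p) :
    ∃ (L : Type u) (_ : Field L) (_ : Algebra F L) (_ : Algebra F₀ L) (_ : IsScalarTower F₀ F L),
      IsRigidGalois F₀ F L p := by
  have : NeZero p := ⟨(Fact.out : p.Prime).ne_zero⟩
  let F' := F⟮ζ⟯
  have : IsCyclotomicExtension {p} F F' := isCyclotomicExtension_adjoin_singleton hζ
  have : IsScalarTower F₀ F' Ω := .of_algebraMap_eq fun _ ↦ rfl
  let ζ' : F' := IntermediateField.AdjoinSimple.gen F ζ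
  have hζ' : IsPrimitiveRoot ζ' p := IsPrimitiveRoot.coe_submonoidClass_iff.mp hζ
  let z : F' := kummerElement p ε ζ' (algebraMap F F' φ)
  have hzΩ : algebraMap F' Ω z = kummerElement p ε ζ (algebraMap F Ω φ) := map_kummerElement ..
  have hz (γ h : F') (hγ : IsSeparable F₀ γ) : z ≠ γ * h ^ p := fun heq ↦
    hne γ h ((isSeparable_map_iff (IsScalarTower.toAlgHom F₀ F' Ω) F'.val.injective).mpr hγ)
      (by rw [← hzΩ, heq]; rfl)
  have hz0 : z ≠ 0 := by
    simpa using hz 0 0 (map_zero (algebraMap F₀ F') ▸ isSeparable_algebraMap 0)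
  refine exists_isRigidGalois_of_ne_mul_pow Fact.out hζ' hz fun τ j hj hτ ↦ ?_
  obtain ⟨u, hu⟩ := exists_kummerElement_pow_eq hζ'.pow_eq_one hz0 hj
  refine ⟨u, ?_⟩
  rw [← hu, ← hτ]
  exact (map_kummerElement ε (τ : F' →+* F') ζ' _).trans (congrArg _ (τ.commutes φ))

theorem derivative_map {R S : Type*} [CommRing R] [CommRing S] (f : R →+* S) (g : R⟦X⟧) :
    (PowerSeries.derivative R g).map f = PowerSeries.derivative S (g.map f) := by
  ext n
  simp [PowerSeries.coeff_derivative]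

theorem derivative_lacunarySeries_map {R S : Type*} [CommRing R] [CommRing S] (p : ℕ)
    (f : R →+* S) :
    (PowerSeries.derivative R (lacunarySeries p R)).map f =
      PowerSeries.derivative S (lacunarySeries p S) := by
  rw [derivative_map, map_lacunarySeries]

variable {T : Type u} [CommRing T] [IsDomain T] {p : ℕ}
  {F₀ : Type*} [Field F₀] [Algebra T[X] F₀] [IsFractionRing T[X] F₀]
  [Algebra F₀ (FractionRing T⟦X⟧)] [IsScalarTower T[X] F₀ (FractionRing T⟦X⟧)]

theorem exists_isRigidGalois_of_injective_of_isPrimitiveRoot {T' : Type u} [CommRing T']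
    [IsDomain T'] [IsDiscreteValuationRing T'] [CharZero T'] [Fact p.Prime]
    [CharP (ResidueField T') p] {f : T →+* T'} (hf : Function.Injective f) {ζ : T'}
    (hζ : IsPrimitiveRoot ζ p) :
    ∃ (L : Type u) (_ : Field L) (_ : Algebra (FractionRing T⟦X⟧) L) (_ : Algebra F₀ L)
      (_ : IsScalarTower F₀ (FractionRing T⟦X⟧) L), IsRigidGalois F₀ (FractionRing T⟦X⟧) L p := by
  let F := FractionRing T⟦X⟧
  let Ω := FractionRing T'⟦X⟧
  let : Algebra F Ω := (fractionRingPowerSeriesMap hf).toAlgebra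
  let : Algebra F₀ Ω := ((algebraMap F Ω).comp (algebraMap F₀ F)).toAlgebra
  have : IsScalarTower F₀ F Ω := .of_algebraMap_eq' rfl
  let : Algebra (FractionRing T'[X]) Ω := FractionRing.liftAlgebra T'[X] Ω
  obtain ⟨ε, hε⟩ := exists_algebraMap_kummerElement_ne (F₀ := FractionRing T'[X]) hζ
    (f := lacunarySeries p T') fun c ↦ by
      rw [derivative_lacunarySeries_map, map_lacunarySeries]
      exact transcendental_derivative_div_lacunarySeries (Fact.out : p.Prime).pos c
  have hζΩ : IsPrimitiveRoot (algebraMap T'⟦X⟧ Ω (PowerSeries.C ζ)) p :=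
    (hζ.map_of_injective PowerSeries.C_injective).map_of_injective (IsFractionRing.injective _ Ω)
  have hφ : algebraMap F Ω (algebraMap T⟦X⟧ F (lacunarySeries p T)) =
      algebraMap T'⟦X⟧ Ω (lacunarySeries p T') := by
    rw [← map_lacunarySeries p f]
    exact fractionRingPowerSeriesMap_algebraMap hf _
  refine exists_isRigidGalois_of_kummerElement_ne (ε := ε) hζΩ
    (φ := algebraMap T⟦X⟧ F (lacunarySeries p T)) fun γ h hγ ↦ ?_
  rw [hφ, ← map_kummerElement]
  exact hε γ h (isSeparable_of_isAlgebraic_of_algebraMap_eq (F₀ := F₀) hf (fun _ ↦ rfl)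
    hγ.isIntegral.isAlgebraic)

variable [IsDiscreteValuationRing T] [CharP (ResidueField T) p] [Fact p.Prime]

theorem exists_isRigidGalois_of_charZero [CharZero T] :
    ∃ (L : Type u) (_ : Field L) (_ : Algebra (FractionRing T⟦X⟧) L) (_ : Algebra F₀ L)
      (_ : IsScalarTower F₀ (FractionRing T⟦X⟧) L), IsRigidGalois F₀ (FractionRing T⟦X⟧) L p := by
  have : NeZero (p : T) := ⟨Nat.cast_ne_zero.mpr (Fact.out : p.Prime).ne_zero⟩
  obtain ⟨T', _, _, _, f, ζ, hf, _, hζ⟩ := exists_isDiscreteValuationRing_isPrimitiveRoot T p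
  have : CharZero T' := charZero_of_injective_ringHom hf
  have : CharP (ResidueField T') p :=
    charP_of_injective_ringHom (ResidueField.map f).injective p
  exact exists_isRigidGalois_of_injective_of_isPrimitiveRoot hf hζ

theorem exists_isRigidGalois_of_charP [CharP T p] :
    ∃ (L : Type u) (_ : Field L) (_ : Algebra (FractionRing T⟦X⟧) L) (_ : Algebra F₀ L)
      (_ : IsScalarTower F₀ (FractionRing T⟦X⟧) L), IsRigidGalois F₀ (FractionRing T⟦X⟧) L p := by
  obtain ⟨ϖ, hϖ⟩ := IsDiscreteValuationRing.exists_irreducible T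
  have hϖ0 : algebraMap T (FractionRing T⟦X⟧) ϖ ≠ 0 :=
    (FaithfulSMul.algebraMap_injective _ _).ne_iff' (map_zero _) |>.mpr hϖ.ne_zero
  have := charP_fractionRing_powerSeries p T
  have : CharP F₀ p := (algebraMap F₀ (FractionRing T⟦X⟧)).charP (algebraMap F₀ _).injective p
  have htr := transcendental_derivative_div_lacunarySeries (p := p) (k := ResidueField T)
    (Fact.out : p.Prime).pos 0
  refine exists_isRigidGalois_of_ne_add_sub_pow_char (F₀ := F₀)
    (α := algebraMap _ _ (lacunarySeries p T) / algebraMap T _ ϖ) fun b h hb heq ↦ ?_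
  refine algebraMap_ne_mul_add_sub_pow_char hϖ hb (f := lacunarySeries p T) (h := h) ?_ ?_
  · rw [derivative_lacunarySeries_map]
    simpa using htr
  · rw [← heq, mul_div_cancel₀ _ hϖ0]

theorem exists_isRigidGalois :
    ∃ (L : Type u) (_ : Field L) (_ : Algebra (FractionRing T⟦X⟧) L) (_ : Algebra F₀ L)
      (_ : IsScalarTower F₀ (FractionRing T⟦X⟧) L), IsRigidGalois F₀ (FractionRing T⟦X⟧) L p := by
  rcases CharP.exists' T with _ | ⟨q, hq, _⟩
  · exact exists_isRigidGalois_of_charZero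
  · have hpq : p ∣ q := (CharP.cast_eq_zero_iff (ResidueField T) p q).mp (by
      rw [← map_natCast (residue T), CharP.cast_eq_zero T q, map_zero])
    obtain rfl := (Nat.prime_dvd_prime_iff_eq Fact.out Fact.out).mp hpq
    exact exists_isRigidGalois_of_charP

end RigidExtensions

section TensorProduct

variable {F₀ F L E : Type*} [Field F₀] [Field F] [Field L] [Field E] [Algebra F₀ F] [Algebra F L]
  [Algebra F₀ L] [Algebra F₀ E] {n : ℕ}

theorem IsRigidGalois.mem_bot_of_algHom (h : IsRigidGalois F₀ F L n) [Algebra.IsAlgebraic F₀ E]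
    (i : E →ₐ[F₀] L) (e : E) : i e ∈ (⊥ : IntermediateField F L) := by
  have := h.isGalois
  obtain ⟨m, s, hs⟩ := IsPurelyInseparable.pow_mem (separableClosure F₀ E) (ringExpChar F₀) e
  have hsep : IsSeparable F₀ (i e ^ ringExpChar F₀ ^ m) := by
    rw [← map_pow, ← hs]
    exact (isSeparable_map_iff i i.injective).mpr (mem_separableClosure_iff.mp s.2)
  have : ExpChar F (ringExpChar F₀) := expChar_of_injective_algebraMap (algebraMap F₀ F).injective _
  rw [← perfectClosure.eq_bot_of_isSeparable F L,
    mem_perfectClosure_iff_pow_mem (ringExpChar F₀)]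
  exact ⟨m, h.mem_range_of_isSeparable _ hsep⟩

theorem IsRigidGalois.isEmpty_tensorProduct_algEquiv [IsScalarTower F₀ F L]
    (h : IsRigidGalois F₀ F L n) (hn : n ≠ 1) [Algebra.IsAlgebraic F₀ E] :
    IsEmpty (E ⊗[F₀] F ≃ₐ[F] L) := by
  refine ⟨fun φ ↦ hn ?_⟩
  let i : E →ₐ[F₀] L := (φ.toAlgHom.restrictScalars F₀).comp Algebra.TensorProduct.includeLeft
  have hφ (e : E) (c : F) : φ (e ⊗ₜ c) = algebraMap F L c * i e := by
    rw [← φ.commutes, Algebra.TensorProduct.right_algebraMap_apply]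
    exact (congrArg φ (by simp)).trans (map_mul φ _ _)
  have hbot : (⊥ : IntermediateField F L) = ⊤ := by
    refine eq_top_iff.mpr fun y _ ↦ ?_
    obtain ⟨z, rfl⟩ := φ.surjective y
    induction z with
    | zero => rw [map_zero]; exact zero_mem _
    | tmul e c =>
      rw [hφ]
      exact mul_mem (algebraMap_mem _ c) (h.mem_bot_of_algHom i e)
    | add a b ha hb => rw [map_add]; exact add_mem (ha trivial) (hb trivial)
  rw [← h.finrank_eq, ← IntermediateField.finrank_top', ← hbot, IntermediateField.finrank_bot]

end TensorProduct

section RationalFunctions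

attribute [local instance] Polynomial.algebra

theorem isFractionRing_polynomial_ratFunc (R K : Type*) [CommRing R] [Field K] [Algebra R K]
    [IsFractionRing R K] : IsFractionRing R[X] (RatFunc K) := by
  have := Polynomial.isLocalization (nonZeroDivisors R) K
  have hinj : Function.Injective (algebraMap R[X] K[X]) :=
    Polynomial.map_injective _ (IsFractionRing.injective R K)
  have hcomap : (nonZeroDivisors K[X]).comap (algebraMap R[X] K[X]) = nonZeroDivisors R[X] :=
    le_antisymm (comap_nonZeroDivisors_le_of_injective hinj)
      (nonZeroDivisors_le_comap_nonZeroDivisors_of_injective _ hinj)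
  rw [IsFractionRing, ← hcomap]
  exact IsLocalization.localization_localization_isLocalization_of_has_all_units
    ((nonZeroDivisors R).map (C : R →+* R[X])) _ _ fun _ hx ↦ hx.mem_nonZeroDivisors

end RationalFunctions

end PointToGlobal

universe u v

attribute [local instance] Polynomial.algebra in
theorem point_to_global_counterexample_char_p_general
    (p : ℕ) (hp : p.Prime)
    (T : Type u) [CommRing T] [IsDomain T] [IsDiscreteValuationRing T]
    [CharP (IsLocalRing.ResidueField T) p]
    (ψ : RatFunc (FractionRing T) →+* FractionRing (PowerSeries T))
    (hψ : ∀ q : Polynomial T,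
      ψ (algebraMap (Polynomial (FractionRing T)) (RatFunc (FractionRing T))
          (q.map (algebraMap T (FractionRing T)))) =
        algebraMap (PowerSeries T) (FractionRing (PowerSeries T))
          (Polynomial.coeToPowerSeries.ringHom q)) :
    letI : Algebra (RatFunc (FractionRing T)) (FractionRing (PowerSeries T)) :=
      ψ.toAlgebra
    ∃ (E_P : Type u) (_ : Field E_P) (_ : Algebra (FractionRing (PowerSeries T)) E_P),
      IsGalois (FractionRing (PowerSeries T)) E_P ∧
      Module.finrank (FractionRing (PowerSeries T)) E_P = p ∧
      ∀ (E : Type v) [Field E] [Algebra (RatFunc (FractionRing T)) E]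
        [Algebra.IsAlgebraic (RatFunc (FractionRing T)) E],
        IsEmpty ((E ⊗[RatFunc (FractionRing T)] FractionRing (PowerSeries T))
          ≃ₐ[FractionRing (PowerSeries T)] E_P) := by
  let : Algebra (RatFunc (FractionRing T)) (FractionRing (PowerSeries T)) := ψ.toAlgebra
  have : Fact p.Prime := ⟨hp⟩
  have : IsScalarTower (Polynomial T) (RatFunc (FractionRing T)) (FractionRing (PowerSeries T)) :=
    .of_algebraMap_eq fun q ↦ (hψ q).symm
  have := PointToGlobal.isFractionRing_polynomial_ratFunc T (FractionRing T)
  obtain ⟨L, _, _, _, _, hL⟩ :=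
    PointToGlobal.exists_isRigidGalois (p := p) (T := T) (F₀ := RatFunc (FractionRing T))
  exact ⟨L, _, _, hL.isGalois, hL.finrank_eq, fun E ↦
    hL.isEmpty_tensorProduct_algEquiv hp.ne_one⟩

/-- Failure of descent in residue characteristic `p`: if `T` is a complete discrete
valuation ring with residue field of characteristic `p > 0` and fraction field `K`, then
there is a degree `p` Galois field extension of `Frac(T⟦x⟧)` which is not induced by any
degree `p` field extension of the rational function field `K(x)`, where `K(x)` embeds in
`Frac(T⟦x⟧)` via `T[x] ⊆ T⟦x⟧`. -/
theorem point_to_global_counterexample_char_p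
    (p : ℕ) (hp : p.Prime)
    (T : Type) [CommRing T] [IsDomain T] [IsDiscreteValuationRing T]
    [IsAdicComplete (IsLocalRing.maximalIdeal T) T]
    [CharP (IsLocalRing.ResidueField T) p]
    (ψ : RatFunc (FractionRing T) →+* FractionRing (PowerSeries T))
    (hψ : ∀ q : Polynomial T,
      ψ (algebraMap (Polynomial (FractionRing T)) (RatFunc (FractionRing T))
          (q.map (algebraMap T (FractionRing T)))) =
        algebraMap (PowerSeries T) (FractionRing (PowerSeries T))
          (Polynomial.coeToPowerSeries.ringHom q)) :
    letI : Algebra (RatFunc (FractionRing T)) (FractionRing (PowerSeries T)) :=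
      ψ.toAlgebra
    ∃ (E_P : Type) (_ : Field E_P) (_ : Algebra (FractionRing (PowerSeries T)) E_P),
      IsGalois (FractionRing (PowerSeries T)) E_P ∧
      Module.finrank (FractionRing (PowerSeries T)) E_P = p ∧
      ¬ ∃ (E : Type) (_ : Field E) (_ : Algebra (RatFunc (FractionRing T)) E),
          Module.finrank (RatFunc (FractionRing T)) E = p ∧
          Nonempty ((E ⊗[RatFunc (FractionRing T)] FractionRing (PowerSeries T))
            ≃ₐ[FractionRing (PowerSeries T)] E_P) := by
  obtain ⟨L, _, _, hgal, hrank, hL⟩ := point_to_global_counterexample_char_p_general p hp T ψ hψ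
  let : Algebra (RatFunc (FractionRing T)) (FractionRing (PowerSeries T)) := ψ.toAlgebra
  refine ⟨L, _, _, hgal, hrank, fun ⟨E, _, _, hE, ⟨φ⟩⟩ ↦ ?_⟩
  have := Module.finite_of_finrank_pos (hE ▸ hp.pos)
  exact (hL E).false φ
end
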